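/- Let M be a non-quasianalytic regular weight sequence of moderate growth and let d ≥ 1. Then the ring of germs at 0 ∈ ℝ^d of complex-valued E^{M}-functions has property (D): for every function f defined on an open neighborhood of 0 in ℝ^d and every integer j ≥ 1, if f^j and f^{j+1} are of class E^{M} on some open neighborhood of 0, then f is of class E^{M} on some open neighborhood of 0. -/

import Mathlib

open Filter Set Asymptotics MeasureTheory

noncomputable section

/-- `M` is a weight sequence: `M 0 = 1`, positive, `M 1 ≥ 1`, log-convex and
`M k ^ (1/k) → ∞`. -/
def IsWeightSeq (M : ℕ → ℝ) : Prop :=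
  M 0 = 1 ∧ (∀ k, 0 < M k) ∧ 1 ≤ M 1 ∧
    (∀ k : ℕ, 1 ≤ k → M k ^ 2 ≤ M (k - 1) * M (k + 1)) ∧
    Tendsto (fun k : ℕ => M k ^ (1 / (k : ℝ))) atTop atTop

/-- The sequence `m k = M k / k!`. -/
def mseq (M : ℕ → ℝ) : ℕ → ℝ := fun k => M k / (Nat.factorial k : ℝ)

/-- Log-convexity of a sequence. -/
def LogConvexSeq (m : ℕ → ℝ) : Prop := ∀ k : ℕ, 1 ≤ k → m k ^ 2 ≤ m (k - 1) * m (k + 1)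

/-- `m k ^ (1/k) → ∞`. -/
def RootTendsToInfty (m : ℕ → ℝ) : Prop :=
  Tendsto (fun k : ℕ => m k ^ (1 / (k : ℝ))) atTop atTop

/-- Moderate growth of a sequence. -/
def ModerateGrowth (M : ℕ → ℝ) : Prop :=
  ∃ C : ℝ, 0 < C ∧ ∀ j k : ℕ, M (j + k) ≤ C ^ (j + k) * M j * M k

/-- Derivation closedness of a sequence. -/
def DerivClosed (M : ℕ → ℝ) : Prop :=
  ∃ C : ℝ, 0 < C ∧ ∀ k : ℕ, M (k + 1) ≤ C ^ (k + 1) * M k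

/-- Non-quasianalyticity: `∑_{k≥1} M (k-1) / M k = ∑_{k≥1} 1/μ_k < ∞`. -/
def NonQuasianalytic (M : ℕ → ℝ) : Prop := Summable fun k : ℕ => M k / M (k + 1)

/-- Quasianalyticity: `∑_{k≥1} 1/μ_k = ∞`. -/
def Quasianalytic (M : ℕ → ℝ) : Prop := ¬ NonQuasianalytic M

/-- The associated function `h_m (t) = inf_k m k * t ^ k`. -/
def hFun (m : ℕ → ℝ) (t : ℝ) : ℝ := ⨅ k : ℕ, m k * t ^ k

/-- `Γ̄_m (t) = min {k | h_m t = m k * t ^ k}`. -/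
def GammaBar (m : ℕ → ℝ) (t : ℝ) : ℕ := sInf {k : ℕ | hFun m t = m k * t ^ k}

/-- `Γ̲_m (t) = min {k | m (k+1) / m k ≥ 1 / t}`. -/
def GammaLow (m : ℕ → ℝ) (t : ℝ) : ℕ := sInf {k : ℕ | 1 / t ≤ m (k + 1) / m k}

/-- The set whose supremum is `mg (M, N)`. -/
def mgSet (M N : ℕ → ℝ) : Set ℝ :=
  {x | ∃ j k : ℕ, 1 ≤ j + k ∧ x = (M (j + k) / (N j * N k)) ^ (1 / (j + k : ℝ))}

/-- `mg (M, N) = sup_{j+k ≥ 1} (M (j+k) / (N j * N k)) ^ (1/(j+k))`. -/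
def mg (M N : ℕ → ℝ) : ℝ := sSup (mgSet M N)

/-- `mg (M, N) < ∞`. -/
def MgFinite (M N : ℕ → ℝ) : Prop := BddAbove (mgSet M N)

/-- A weight sequence is regular: `m k ^ (1/k) → ∞`, derivation closed, and
`Γ̄_m (C t) ≤ Γ̲_m t` for some `C ≥ 1`. -/
def RegularWS (M : ℕ → ℝ) : Prop :=
  RootTendsToInfty (mseq M) ∧ DerivClosed M ∧
    ∃ C : ℝ, 1 ≤ C ∧ ∀ t : ℝ, 0 < t → GammaBar (mseq M) (C * t) ≤ GammaLow (mseq M) t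

/-- `f` is of class `E^{M}` (Roumieu) on the open set `U`. -/
def RoumieuOn {E : Type*} [NormedAddCommGroup E] [NormedSpace ℝ E]
    (M : ℕ → ℝ) (f : E → ℂ) (U : Set E) : Prop :=
  ContDiffOn ℝ (⊤ : ℕ∞) f U ∧
    ∀ V : Set E, IsOpen V → IsCompact (closure V) → closure V ⊆ U →
      ∃ C σ : ℝ, 0 < C ∧ 0 < σ ∧
        ∀ x ∈ V, ∀ k : ℕ, ‖iteratedFDerivWithin ℝ k f U x‖ ≤ C * σ ^ k * M k

/-- `f` is of class `E^{(M)}` (Beurling) on the open set `U`. -/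
def BeurlingOn {E : Type*} [NormedAddCommGroup E] [NormedSpace ℝ E]
    (M : ℕ → ℝ) (f : E → ℂ) (U : Set E) : Prop :=
  ContDiffOn ℝ (⊤ : ℕ∞) f U ∧
    ∀ V : Set E, IsOpen V → IsCompact (closure V) → closure V ⊆ U →
      ∀ σ : ℝ, 0 < σ → ∃ C : ℝ, 0 < C ∧
        ∀ x ∈ V, ∀ k : ℕ, ‖iteratedFDerivWithin ℝ k f U x‖ ≤ C * σ ^ k * M k

/-- A weight matrix: a nonempty, pointwise totally ordered family of weight sequences. -/
def IsWeightMatrix (W : Set (ℕ → ℝ)) : Prop :=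
  W.Nonempty ∧ (∀ M ∈ W, IsWeightSeq M) ∧
    ∀ M ∈ W, ∀ N ∈ W, (∀ k, M k ≤ N k) ∨ (∀ k, N k ≤ M k)

/-- R-regularity of a weight matrix. -/
def RRegular (W : Set (ℕ → ℝ)) : Prop :=
  (∀ M ∈ W, RootTendsToInfty (mseq M)) ∧
    (∀ M ∈ W, ∃ N ∈ W, ∃ C : ℝ, 1 ≤ C ∧ ∀ j : ℕ, M (j + 1) ≤ C ^ (j + 1) * N j) ∧
    (∀ M ∈ W, ∃ N ∈ W, ∃ C : ℝ, 1 ≤ C ∧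
      ∀ t : ℝ, 0 < t → GammaBar (mseq N) (C * t) ≤ GammaLow (mseq M) t)

/-- B-regularity of a weight matrix. -/
def BRegular (W : Set (ℕ → ℝ)) : Prop :=
  (∀ M ∈ W, RootTendsToInfty (mseq M)) ∧
    (∀ M ∈ W, ∃ N ∈ W, ∃ C : ℝ, 1 ≤ C ∧ ∀ j : ℕ, N (j + 1) ≤ C ^ j * M j) ∧
    (∀ M ∈ W, ∃ N ∈ W, ∃ C : ℝ, 1 ≤ C ∧
      ∀ t : ℝ, 0 < t → GammaBar (mseq M) (C * t) ≤ GammaLow (mseq N) t)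

/-- R-moderate growth of a weight matrix. -/
def RModerateGrowth (W : Set (ℕ → ℝ)) : Prop := ∀ M ∈ W, ∃ N ∈ W, MgFinite M N

/-- B-moderate growth of a weight matrix. -/
def BModerateGrowth (W : Set (ℕ → ℝ)) : Prop := ∀ M ∈ W, ∃ N ∈ W, MgFinite N M

/-- `f` is of class `E^{W}` (Roumieu, weight matrix) on the open set `U`. -/
def MatrixRoumieuOn {E : Type*} [NormedAddCommGroup E] [NormedSpace ℝ E]
    (W : Set (ℕ → ℝ)) (f : E → ℂ) (U : Set E) : Prop :=
  ContDiffOn ℝ (⊤ : ℕ∞) f U ∧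
    ∀ V : Set E, IsOpen V → IsCompact (closure V) → closure V ⊆ U →
      ∃ M ∈ W, ∃ C σ : ℝ, 0 < C ∧ 0 < σ ∧
        ∀ x ∈ V, ∀ k : ℕ, ‖iteratedFDerivWithin ℝ k f U x‖ ≤ C * σ ^ k * M k

/-- `f` is of class `E^{(W)}` (Beurling, weight matrix) on the open set `U`. -/
def MatrixBeurlingOn {E : Type*} [NormedAddCommGroup E] [NormedSpace ℝ E]
    (W : Set (ℕ → ℝ)) (f : E → ℂ) (U : Set E) : Prop :=
  ContDiffOn ℝ (⊤ : ℕ∞) f U ∧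
    ∀ V : Set E, IsOpen V → IsCompact (closure V) → closure V ⊆ U →
      ∀ M ∈ W, ∀ σ : ℝ, 0 < σ → ∃ C : ℝ, 0 < C ∧
        ∀ x ∈ V, ∀ k : ℕ, ‖iteratedFDerivWithin ℝ k f U x‖ ≤ C * σ ^ k * M k

/-- `ω` is a weight function. -/
def IsWeightFunction (ω : ℝ → ℝ) : Prop :=
  ContinuousOn ω (Ici 0) ∧ MonotoneOn ω (Ici 0) ∧ (∀ t ∈ Ici (0 : ℝ), 0 ≤ ω t) ∧
    ((fun t => ω (2 * t)) =O[atTop] ω) ∧ (ω =o[atTop] fun t : ℝ => t) ∧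
    ((fun t => Real.log t) =o[atTop] ω) ∧ ConvexOn ℝ (Ici 0) fun t => ω (Real.exp t)

/-- The Young conjugate `φ*_ω (s) = sup_{t ≥ 0} (s t - ω (e^t))`. -/
def phiStar (ω : ℝ → ℝ) (s : ℝ) : ℝ := sSup ((fun t => s * t - ω (Real.exp t)) '' Ici 0)

/-- Non-quasianalyticity of a weight function. -/
def NonQuasianalyticW (ω : ℝ → ℝ) : Prop := IntegrableOn (fun t => ω t / t ^ 2) (Ici 1)

/-- `f` is of class `E^{ω}` (Roumieu) on the open set `U`. -/
def OmegaRoumieuOn {E : Type*} [NormedAddCommGroup E] [NormedSpace ℝ E]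
    (ω : ℝ → ℝ) (f : E → ℂ) (U : Set E) : Prop :=
  ContDiffOn ℝ (⊤ : ℕ∞) f U ∧
    ∀ V : Set E, IsOpen V → IsCompact (closure V) → closure V ⊆ U →
      ∃ C ρ : ℝ, 0 < C ∧ 0 < ρ ∧
        ∀ x ∈ V, ∀ k : ℕ,
          ‖iteratedFDerivWithin ℝ k f U x‖ ≤ C * Real.exp (phiStar ω (ρ * k) / ρ)

/-- `f` is of class `E^{(ω)}` (Beurling) on the open set `U`. -/
def OmegaBeurlingOn {E : Type*} [NormedAddCommGroup E] [NormedSpace ℝ E]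
    (ω : ℝ → ℝ) (f : E → ℂ) (U : Set E) : Prop :=
  ContDiffOn ℝ (⊤ : ℕ∞) f U ∧
    ∀ V : Set E, IsOpen V → IsCompact (closure V) → closure V ⊆ U →
      ∀ ρ : ℝ, 0 < ρ → ∃ C : ℝ, 0 < C ∧
        ∀ x ∈ V, ∀ k : ℕ,
          ‖iteratedFDerivWithin ℝ k f U x‖ ≤ C * Real.exp (phiStar ω (ρ * k) / ρ)

/-- The open ellipse `Ω_ε` with vertices `± cosh ε` and co-vertices `± i sinh ε`. -/
def OmegaE (ε : ℝ) : Set ℂ :=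
  {z : ℂ | (z.re / Real.cosh ε) ^ 2 + (z.im / Real.sinh ε) ^ 2 < 1}

/-- The sequence space `Λ^{M}`. -/
def Lambda (M : ℕ → ℝ) : Set (ℕ → ℂ) :=
  {c | ∃ ρ : ℝ, 0 < ρ ∧ ∃ C : ℝ, ∀ k, ‖c k‖ ≤ C * ρ ^ k * M k}

/-- `L(M)`: all non-quasianalytic weight sequences `N ≥ M` with `n = N/k!` log-convex. -/
def LM (M : ℕ → ℝ) : Set (ℕ → ℝ) :=
  {N | IsWeightSeq N ∧ NonQuasianalytic N ∧ (∀ k, M k ≤ N k) ∧ LogConvexSeq (mseq N)}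

/-- A quasianalytic weight sequence `M` is intersectable if `Λ^{M} = ⋂_{N ∈ L(M)} Λ^{N}`. -/
def Intersectable (M : ℕ → ℝ) : Prop := Lambda M = ⋂ N ∈ LM M, Lambda N



lemma hd_fact_aux (Q N : ℕ) (h : N ≤ Q) :
    (Q : ℝ) ^ (Q - N) * (N.factorial : ℝ) ≤ Real.exp 1 ^ (Q - N) * (Q.factorial : ℝ) := by
  induction Q, h using Nat.le_induction with
  | base => simp
  | succ Q hQ ih =>
    have key : ((Q : ℝ) + 1) ^ (Q - N) ≤ Real.exp 1 * (Q : ℝ) ^ (Q - N) := by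
      rcases Nat.eq_zero_or_pos Q with h0 | hpos
      · subst h0
        simp
      · have hQ' : (0 : ℝ) < Q := by exact_mod_cast hpos
        have h1 : ((Q : ℝ) + 1) = Q * (1 + 1 / Q) := by field_simp
        rw [h1, mul_pow, mul_comm]
        gcongr
        calc (1 + 1 / (Q : ℝ)) ^ (Q - N) ≤ (Real.exp (1 / Q)) ^ (Q - N) := by
              gcongr
              have := Real.add_one_le_exp (1 / (Q : ℝ))
              linarith
          _ = Real.exp ((Q - N : ℕ) * (1 / Q)) := by rw [← Real.exp_nat_mul]
          _ ≤ Real.exp 1 := by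
              apply Real.exp_le_exp.mpr
              rw [mul_one_div, div_le_one hQ']
              exact_mod_cast Nat.sub_le _ _
    rw [Nat.succ_sub hQ, pow_succ, pow_succ, Nat.factorial_succ]
    push_cast
    calc ((Q : ℝ) + 1) ^ (Q - N) * (Q + 1) * N.factorial
        ≤ Real.exp 1 * (Q : ℝ) ^ (Q - N) * (Q + 1) * N.factorial := by gcongr
      _ = Real.exp 1 * (Q + 1) * ((Q : ℝ) ^ (Q - N) * N.factorial) := by ring
      _ ≤ Real.exp 1 * (Q + 1) * (Real.exp 1 ^ (Q - N) * (Q.factorial : ℝ)) := by gcongr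
      _ = _ := by ring

lemma hd_root_ge {m : ℕ → ℝ} (hpos : ∀ k, 0 < m k) (h : RootTendsToInfty m) (B : ℝ) (hB : 0 < B) :
    ∀ᶠ k in atTop, B ^ k ≤ m k := by
  filter_upwards [h.eventually_ge_atTop B, eventually_ge_atTop 1] with k hk h1
  have hk0 : (k : ℝ) ≠ 0 := by
    have : k ≠ 0 := by omega
    exact_mod_cast this
  calc B ^ k ≤ (m k ^ (1 / (k : ℝ))) ^ k := by gcongr
    _ = m k := by
      rw [← Real.rpow_natCast, ← Real.rpow_mul (hpos k).le, one_div_mul_cancel hk0, Real.rpow_one]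

lemma hd_gammaBar {m : ℕ → ℝ} (hpos : ∀ k, 0 < m k) (h : RootTendsToInfty m) (x : ℝ) (hx : 0 < x)
    (i : ℕ) : m (GammaBar m x) * x ^ (GammaBar m x) ≤ m i * x ^ i := by
  have hbdd : BddBelow (range fun k : ℕ => m k * x ^ k) := by
    refine ⟨0, ?_⟩
    rintro _ ⟨k, rfl⟩
    have := hpos k
    positivity
  have htend : Tendsto (fun k : ℕ => m k * x ^ k) (cofinite) atTop := by
    rw [Nat.cofinite_eq_atTop]
    have h2 : Tendsto (fun k : ℕ => (2 : ℝ) ^ k) atTop atTop :=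
      tendsto_pow_atTop_atTop_of_one_lt (by norm_num)
    refine tendsto_atTop_mono' _ ?_ h2
    filter_upwards [hd_root_ge hpos h (2 / x) (by positivity)] with k hk
    calc (2 : ℝ) ^ k = (2 / x) ^ k * x ^ k := by rw [← mul_pow]; field_simp
      _ ≤ _ := by gcongr
  obtain ⟨k0, hk0⟩ := htend.exists_forall_le
  have hne : ({k : ℕ | hFun m x = m k * x ^ k}).Nonempty := by
    refine ⟨k0, le_antisymm (ciInf_le hbdd k0) (le_ciInf hk0)⟩
  have := Nat.sInf_mem hne
  have h3 : hFun m x = m (GammaBar m x) * x ^ (GammaBar m x) := this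
  rw [← h3]
  exact ciInf_le hbdd i

structure HdSeq (m Λ : ℕ → ℝ) (C A : ℝ) : Prop where
  mpos : ∀ k, 0 < m k
  Lpos : ∀ k, 0 < Λ k
  C1 : 1 ≤ C
  A1 : 1 ≤ A
  mle : ∀ n, 1 ≤ n → ∀ k, k ≤ n + 1 → m k ≤ (C * Λ n) ^ k
  Lmono : ∀ n, ∀ k, 1 ≤ k → k ≤ n → Λ k ≤ C * Λ n
  Lsucc : ∀ n, 1 ≤ n → Λ (n + 1) ≤ C * Λ n
  Lpow : ∀ n, 1 ≤ n → ∀ k, Λ n ^ k ≤ A ^ (n + k) * m k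
  Ltend : Tendsto Λ atTop atTop

theorem hd_seq_facts (M : ℕ → ℝ) (hM : IsWeightSeq M) (hreg : RegularWS M)
    (hmg : ModerateGrowth M) : ∃ (Λ : ℕ → ℝ) (C A : ℝ), HdSeq (mseq M) Λ C A := by
  obtain ⟨hM0, hMpos, hM1, hlc, -⟩ := hM
  obtain ⟨hroot, -, Cr, hCr1, hCr⟩ := hreg
  obtain ⟨G, hG0, hG⟩ := hmg
  set m := mseq M with hm
  have hmM : ∀ k, M k = m k * k.factorial := by
    intro k
    have : (k.factorial : ℝ) ≠ 0 := by positivity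
    simp only [hm, mseq]; field_simp
  have mpos : ∀ k, 0 < m k := fun k => by
    have := hMpos k
    simp only [hm, mseq]; positivity
  have hm0 : m 0 = 1 := by simp [hm, mseq, hM0]
  set mu : ℕ → ℝ := fun i => M (i + 1) / M i with hmu
  have mupos : ∀ i, 0 < mu i := fun i => div_pos (hMpos _) (hMpos _)
  have mumono : Monotone mu := by
    apply monotone_nat_of_le_succ
    intro i
    have := hlc (i + 1) (by omega)
    simp only [Nat.add_sub_cancel] at this
    simp only [hmu]
    rw [div_le_div_iff₀ (hMpos _) (hMpos _)]
    nlinarith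
  have Mup : ∀ n N r, N + r ≤ n + 1 → M (N + r) ≤ M N * mu n ^ r := by
    intro n N r
    induction r with
    | zero => simp
    | succ r ih =>
      intro h
      have h1 : M (N + (r + 1)) = M (N + r) * mu (N + r) := by
        simp only [hmu]; field_simp [(hMpos (N + r)).ne']; rfl
      rw [h1, pow_succ, ← mul_assoc]
      have h2 := mumono (show N + r ≤ n by omega)
      have h3 := ih (by omega)
      have := mupos (N + r)
      have := mupos n
      have := hMpos N
      gcongr
  have Mlow : ∀ N r, M N * mu N ^ r ≤ M (N + r) := by
    intro N r
    induction r with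
    | zero => simp
    | succ r ih =>
      have h1 : M (N + (r + 1)) = M (N + r) * mu (N + r) := by
        simp only [hmu]; field_simp [(hMpos (N + r)).ne']; rfl
      rw [h1, pow_succ, ← mul_assoc]
      have h2 := mumono (show N ≤ N + r by omega)
      have := mupos N
      have := hMpos (N + r)
      gcongr
  set L : ℕ → ℝ := fun n => m (n + 1) / m n with hL
  have Lpos : ∀ n, 0 < L n := fun n => div_pos (mpos _) (mpos _)
  have Lmu : ∀ n, L n = mu n / (n + 1) := by
    intro n
    simp only [hL, hmu, hm, mseq, Nat.factorial_succ]
    have := (hMpos n).ne'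
    have : (n.factorial : ℝ) ≠ 0 := by positivity
    push_cast
    field_simp
  set E := Real.exp 1 with hE
  have hE1 : 1 ≤ E := Real.one_le_exp (by norm_num)
  -- (a)
  have La : ∀ k n, k ≤ n → L k ≤ (Cr * E) * L n := by
    intro k n hkn
    have ht : 0 < 1 / L k := by have := Lpos k; positivity
    have h1 := hCr (1 / L k) ht
    have h2 : GammaLow m (1 / L k) ≤ k := by
      apply Nat.sInf_le
      simp [hL]
    set x := Cr * (1 / L k) with hx
    have hx0 : 0 < x := by positivity
    set N := GammaBar m x with hN
    have hNk : N ≤ n + 1 := by omega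
    have hmin := hd_gammaBar mpos hroot x hx0 (n + 1)
    rw [← hN] at hmin
    obtain ⟨r, hr⟩ : ∃ r, n + 1 = N + r := ⟨n + 1 - N, by omega⟩
    have hr0 : r ≠ 0 := by omega
    have hfa := hd_fact_aux (n + 1) N hNk
    have hsub : n + 1 - N = r := by omega
    rw [hsub] at hfa
    have hMu := Mup n N r (by omega)
    rw [← hr, hmM, hmM] at hMu
    -- m (n+1) * (n+1)! ≤ m N * N! * mu n ^ r
    have h3 : m (n + 1) ≤ m N * (E * L n) ^ r := by
      have hf : (0 : ℝ) < (n + 1).factorial := by positivity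
      have hp : (0 : ℝ) < ((n + 1 : ℕ) : ℝ) ^ r := by positivity
      have hmuL : mu n = L n * ((n + 1 : ℕ) : ℝ) := by rw [Lmu]; push_cast; field_simp
      rw [hmuL, mul_pow] at hMu
      have : m (n + 1) * (n + 1).factorial ≤ (m N * (E * L n) ^ r) * (n + 1).factorial := by
        calc m (n + 1) * (n + 1).factorial
            ≤ m N * L n ^ r * (((n + 1 : ℕ) : ℝ) ^ r * N.factorial) := by linarith
          _ ≤ m N * L n ^ r * (E ^ r * (n + 1).factorial) := by
              have := mpos N; have := Lpos n; gcongr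
          _ = _ := by ring
      exact le_of_mul_le_mul_right this hf
    have h4 : 1 ≤ (E * L n * x) ^ r := by
      have : m N * x ^ N * 1 ≤ m N * x ^ N * (E * L n * x) ^ r := by
        calc m N * x ^ N * 1 ≤ m (n + 1) * x ^ (n + 1) := by linarith
          _ ≤ m N * (E * L n) ^ r * x ^ (n + 1) := by gcongr
          _ = _ := by rw [hr, pow_add]; ring
      refine le_of_mul_le_mul_left this ?_
      have := mpos N; positivity
    have h5 : 1 ≤ E * L n * x := by
      by_contra hlt
      push Not at hlt
      have := Lpos n
      have := pow_lt_one₀ (by positivity) hlt hr0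
      linarith
    have hLk := Lpos k
    have : L k * 1 ≤ L k * (E * L n * x) := by gcongr
    calc L k = L k * 1 := by ring
      _ ≤ _ := this
      _ = _ := by rw [hx]; field_simp
  obtain ⟨C1, hC1⟩ : ∃ C1, C1 = Cr * E := ⟨_, rfl⟩
  rw [← hC1] at La
  have hC11 : 1 ≤ C1 := hC1 ▸ one_le_mul_of_one_le_of_one_le hCr1 hE1
  -- moderate growth
  have hmg1 : ∀ k, mu k ^ k ≤ (G ^ 2) ^ k * M k := by
    intro k
    have h1 := Mlow k k
    have h2 := hG k k
    have h3 : M k * mu k ^ k ≤ M k * ((G ^ 2) ^ k * M k) := by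
      calc _ ≤ _ := h1
        _ ≤ _ := h2
        _ = _ := by rw [← pow_mul, two_mul]; ring
    exact le_of_mul_le_mul_left h3 (hMpos k)
  have Mle : ∀ k, M (k + 1) ≤ mu k ^ (k + 1) := by
    intro k
    have := Mup k 0 (k + 1) (by omega)
    simpa [hM0] using this
  have musucc : ∀ k, mu (k + 1) ≤ G ^ 2 * mu k := by
    intro k
    have h1 := hmg1 (k + 1)
    have h2 : mu (k + 1) ^ (k + 1) ≤ (G ^ 2 * mu k) ^ (k + 1) := by
      rw [mul_pow]
      refine h1.trans ?_
      have := Mle k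
      gcongr
    have := mupos k
    exact (pow_le_pow_iff_left₀ (mupos _).le (by positivity) (by omega)).mp h2
  have hG1 : 1 ≤ G ^ 2 := by
    have h1 := musucc 0
    have h2 := mumono (show 0 ≤ 1 by omega)
    simp only [zero_add] at h1
    have := mupos 0
    by_contra hc
    push Not at hc
    nlinarith
  obtain ⟨B, hB⟩ : ∃ B, B = G ^ 2 := ⟨_, rfl⟩
  rw [← hB] at hG1 hmg1 musucc
  have Lsucc : ∀ n, L (n + 1) ≤ B * L n := by
    intro n
    rw [Lmu, Lmu]
    have := musucc n
    have := mupos n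
    have := mupos (n + 1)
    calc mu (n + 1) / (((n + 1 : ℕ) : ℝ) + 1) ≤ mu (n + 1) / (n + 1) := by
          gcongr; push_cast; linarith
      _ ≤ B * mu n / (n + 1) := by gcongr
      _ = _ := by ring
  have mle : ∀ n k, k ≤ n + 1 → m k ≤ (C1 * L n) ^ k := by
    intro n k
    induction k with
    | zero => simp [hm0]
    | succ k ih =>
      intro hk
      have h1 : m (k + 1) = m k * L k := by
        simp only [hL]; field_simp [(mpos k).ne']
      rw [h1, pow_succ]
      have := ih (by omega)
      have := La k n (by omega)
      have := mpos k
      have := Lpos k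
      have := Lpos n
      gcongr
  -- Lpow
  have Ldiag : ∀ n, L n ^ (n + 1) ≤ B ^ (n + 1) * m (n + 1) := by
    intro n
    have h1 := hmg1 (n + 1)
    have h2 : mu n ^ (n + 1) ≤ B ^ (n + 1) * M (n + 1) := by
      refine le_trans ?_ h1
      have := mupos n
      have := mumono (show n ≤ n + 1 by omega)
      gcongr
    rw [hmM] at h2
    rw [Lmu, div_pow]
    have hf : ((n + 1).factorial : ℝ) ≤ ((n : ℝ) + 1) ^ (n + 1) := by
      exact_mod_cast Nat.factorial_le_pow (n + 1)
    rw [div_le_iff₀ (by positivity)]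
    refine h2.trans ?_
    rw [← mul_assoc]
    have := mpos (n + 1)
    gcongr
  obtain ⟨A, hA⟩ : ∃ A, A = B * C1 := ⟨_, rfl⟩
  have hA1 : 1 ≤ A := hA ▸ one_le_mul_of_one_le_of_one_le hG1 hC11
  have hBA : B ≤ A := by nlinarith
  have hCA : C1 ≤ A := by nlinarith
  have Lpow : ∀ n k, L n ^ k ≤ A ^ (n + 1 + k) * m k := by
    intro n k
    have hLn := Lpos n
    rcases le_or_gt (n + 1) k with hk | hk
    · obtain ⟨k', rfl⟩ : ∃ k', k = k' + 1 := ⟨k - 1, by omega⟩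
      have hLk := Lpos k'
      have hmk := mpos (k' + 1)
      calc L n ^ (k' + 1) ≤ (C1 * L k') ^ (k' + 1) := by
            have := La n k' (by omega); gcongr
        _ = C1 ^ (k' + 1) * L k' ^ (k' + 1) := by rw [mul_pow]
        _ ≤ C1 ^ (k' + 1) * (B ^ (k' + 1) * m (k' + 1)) := by
            have := Ldiag k'; gcongr
        _ = A ^ (k' + 1) * m (k' + 1) := by rw [hA, mul_pow]; ring
        _ ≤ _ := by
            gcongr ?_ * _
            exact pow_le_pow_right₀ hA1 (by omega)
    · have hup : ∀ r, k + r ≤ n + 1 → m (k + r) ≤ m k * (C1 * L n) ^ r := by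
        intro r
        induction r with
        | zero => simp
        | succ r ih =>
          intro hr
          have h1 : m (k + (r + 1)) = m (k + r) * L (k + r) := by
            simp only [hL]; field_simp [(mpos (k + r)).ne']; rfl
          rw [h1, pow_succ, ← mul_assoc]
          have := ih (by omega)
          have := La (k + r) n (by omega)
          have := mpos (k + r)
          have := mpos k
          have := Lpos (k + r)
          gcongr
      obtain ⟨r, hr⟩ : ∃ r, n + 1 = k + r := ⟨n + 1 - k, by omega⟩
      have h1 := hup r (by omega)
      have h2 := Ldiag n
      rw [hr] at h2
      have hmk := mpos k
      have h3 : L n ^ r * L n ^ k ≤ L n ^ r * (B ^ (k + r) * C1 ^ r * m k) := by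
        calc L n ^ r * L n ^ k = L n ^ (k + r) := by rw [pow_add]; ring
          _ ≤ B ^ (k + r) * (m k * (C1 * L n) ^ r) := by
              refine h2.trans ?_
              gcongr
          _ = _ := by rw [mul_pow]; ring
      have h4 := le_of_mul_le_mul_left h3 (by positivity)
      refine h4.trans ?_
      gcongr
      calc B ^ (k + r) * C1 ^ r ≤ B ^ (k + r) * C1 ^ (k + r) := by
            gcongr ?_ * ?_
            exact pow_le_pow_right₀ hC11 (by omega)
        _ = A ^ (k + r) := by rw [hA, mul_pow]
        _ ≤ A ^ (n + 1 + k) := by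
            exact pow_le_pow_right₀ hA1 (by omega)
  have Ltend : Tendsto L atTop atTop := by
    rw [tendsto_atTop]
    intro b
    have hb' : 0 < (|b| + 1) * C1 := by positivity
    have h1 := (tendsto_add_atTop_nat 1).eventually (hd_root_ge mpos hroot _ hb')
    filter_upwards [h1] with n hn
    have h2 := mle n (n + 1) le_rfl
    have h3 := hn.trans h2
    have := Lpos n
    have h4 := (pow_le_pow_iff_left₀ hb'.le (by positivity) (by omega)).mp h3
    have h5 : |b| + 1 ≤ L n := by
      rw [mul_comm] at h4
      exact le_of_mul_le_mul_left h4 (by linarith)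
    have := le_abs_self b
    linarith
  refine ⟨fun n => L (n - 1), C1 * B, A, ?_⟩
  have hC1B : C1 ≤ C1 * B := by nlinarith
  have hBC : B ≤ C1 * B := by nlinarith
  constructor
  · exact mpos
  · exact fun k => Lpos _
  · linarith
  · exact hA1
  · intro n hn k hk
    obtain ⟨n, rfl⟩ : ∃ n', n = n' + 1 := ⟨n - 1, by omega⟩
    simp only [Nat.add_sub_cancel]
    refine (mle (n + 1) k (by omega)).trans ?_
    have h1 := Lsucc n
    have := Lpos n
    have := Lpos (n + 1)
    refine pow_le_pow_left₀ (by positivity) ?_ k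
    rw [mul_assoc]
    gcongr
  · intro n k hk hkn
    refine (La (k - 1) (n - 1) (by omega)).trans ?_
    have := Lpos (n - 1)
    gcongr
  · intro n hn
    obtain ⟨n, rfl⟩ : ∃ n', n = n' + 1 := ⟨n - 1, by omega⟩
    simp only [Nat.add_sub_cancel]
    refine (Lsucc n).trans ?_
    have := Lpos n
    gcongr
  · intro n hn k
    obtain ⟨n, rfl⟩ : ∃ n', n = n' + 1 := ⟨n - 1, by omega⟩
    exact Lpow n k
  · exact Ltend.comp (tendsto_sub_atTop_nat 1)

/-- boundary integral over the square `[-2,2]^2` -/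
def hdB (f : ℂ → ℂ) : ℂ :=
  (((∫ x : ℝ in (-2)..2, f ((x : ℂ) + ((-2 : ℝ) : ℂ) * Complex.I)) -
    ∫ x : ℝ in (-2)..2, f ((x : ℂ) + ((2 : ℝ) : ℂ) * Complex.I)) +
    Complex.I • ∫ y : ℝ in (-2)..2, f (((2 : ℝ) : ℂ) + (y : ℂ) * Complex.I)) -
    Complex.I • ∫ y : ℝ in (-2)..2, f (((-2 : ℝ) : ℂ) + (y : ℂ) * Complex.I)

lemma hd_side_im (x : ℝ) (s : ℝ) (hs : |s| = 2) : 2 ≤ ‖(x : ℂ) + (s : ℂ) * Complex.I‖ := by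
  have := Complex.abs_im_le_norm ((x : ℂ) + (s : ℂ) * Complex.I)
  simpa [hs] using this

lemma hd_side_re (x : ℝ) (s : ℝ) (hs : |s| = 2) : 2 ≤ ‖(s : ℂ) + (x : ℂ) * Complex.I‖ := by
  have := Complex.abs_re_le_norm ((s : ℂ) + (x : ℂ) * Complex.I)
  simpa [hs] using this

lemma hd_side_cont {f : ℂ → ℂ} (hf : ContinuousOn f {ζ | 2 ≤ ‖ζ‖}) (s : ℝ) (hs : |s| = 2) :
    Continuous (fun x : ℝ => f ((x : ℂ) + (s : ℂ) * Complex.I)) ∧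
    Continuous (fun x : ℝ => f ((s : ℂ) + (x : ℂ) * Complex.I)) := by
  constructor
  · exact hf.comp_continuous (by fun_prop) (fun x => hd_side_im x s hs)
  · exact hf.comp_continuous (by fun_prop) (fun x => hd_side_re x s hs)

lemma hdB_sub {f g : ℂ → ℂ} (hf : ContinuousOn f {ζ | 2 ≤ ‖ζ‖})
    (hg : ContinuousOn g {ζ | 2 ≤ ‖ζ‖}) : hdB (fun z => f z - g z) = hdB f - hdB g := by
  have h2 : |(2 : ℝ)| = 2 := by norm_num
  have h2' : |(-2 : ℝ)| = 2 := by norm_num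
  unfold hdB
  rw [intervalIntegral.integral_sub ((hd_side_cont hf _ h2').1.intervalIntegrable _ _)
      ((hd_side_cont hg _ h2').1.intervalIntegrable _ _),
    intervalIntegral.integral_sub ((hd_side_cont hf _ h2').2.intervalIntegrable _ _)
      ((hd_side_cont hg _ h2').2.intervalIntegrable _ _),
    intervalIntegral.integral_sub ((hd_side_cont hf _ h2).1.intervalIntegrable _ _)
      ((hd_side_cont hg _ h2).1.intervalIntegrable _ _),
    intervalIntegral.integral_sub ((hd_side_cont hf _ h2).2.intervalIntegrable _ _)
      ((hd_side_cont hg _ h2).2.intervalIntegrable _ _)]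
  simp only [smul_eq_mul]
  ring

lemma hdB_mul_const (f : ℂ → ℂ) (c : ℂ) : hdB (fun z => f z * c) = hdB f * c := by
  unfold hdB
  simp only [intervalIntegral.integral_mul_const, smul_eq_mul]
  ring

lemma hdB_norm_le {f : ℂ → ℂ} (K : ℝ) (h : ∀ ζ : ℂ, 2 ≤ ‖ζ‖ → ‖ζ‖ ≤ 4 → ‖f ζ‖ ≤ K) :
    ‖hdB f‖ ≤ 16 * K := by
  have h2 : |(2 : ℝ)| = 2 := by norm_num
  have h2' : |(-2 : ℝ)| = 2 := by norm_num
  have up : ∀ x : ℝ, x ∈ uIoc (-2 : ℝ) 2 → ∀ s : ℝ, |s| = 2 → ‖(x : ℂ) + (s : ℂ) * Complex.I‖ ≤ 4 ∧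
      ‖(s : ℂ) + (x : ℂ) * Complex.I‖ ≤ 4 := by
    intro x hx s hs
    rw [uIoc_of_le (by norm_num)] at hx
    have hx' : |x| ≤ 2 := abs_le.mpr ⟨hx.1.le, hx.2⟩
    constructor
    · refine (norm_add_le _ _).trans ?_
      simp only [Complex.norm_real, norm_mul, Complex.norm_I, Real.norm_eq_abs]
      linarith
    · refine (norm_add_le _ _).trans ?_
      simp only [Complex.norm_real, norm_mul, Complex.norm_I, Real.norm_eq_abs]
      linarith
  have e : |(2 : ℝ) - -2| = 4 := by norm_num
  have i1 : ‖∫ x : ℝ in (-2)..2, f ((x : ℂ) + ((-2 : ℝ) : ℂ) * Complex.I)‖ ≤ K * |(2 : ℝ) - -2| :=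
    intervalIntegral.norm_integral_le_of_norm_le_const
      (fun x hx => h _ (hd_side_im x _ h2') (up x hx _ h2').1)
  have i2 : ‖∫ x : ℝ in (-2)..2, f ((x : ℂ) + ((2 : ℝ) : ℂ) * Complex.I)‖ ≤ K * |(2 : ℝ) - -2| :=
    intervalIntegral.norm_integral_le_of_norm_le_const
      (fun x hx => h _ (hd_side_im x _ h2) (up x hx _ h2).1)
  have i3 : ‖∫ x : ℝ in (-2)..2, f (((2 : ℝ) : ℂ) + (x : ℂ) * Complex.I)‖ ≤ K * |(2 : ℝ) - -2| :=
    intervalIntegral.norm_integral_le_of_norm_le_const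
      (fun x hx => h _ (hd_side_re x _ h2) (up x hx _ h2).2)
  have i4 : ‖∫ x : ℝ in (-2)..2, f (((-2 : ℝ) : ℂ) + (x : ℂ) * Complex.I)‖ ≤ K * |(2 : ℝ) - -2| :=
    intervalIntegral.norm_integral_le_of_norm_le_const
      (fun x hx => h _ (hd_side_re x _ h2') (up x hx _ h2').2)
  rw [e] at i1 i2 i3 i4
  unfold hdB
  refine (norm_sub_le _ _).trans ?_
  have := norm_add_le ((∫ x : ℝ in (-2)..2, f ((x : ℂ) + ((-2 : ℝ) : ℂ) * Complex.I)) -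
    ∫ x : ℝ in (-2)..2, f ((x : ℂ) + ((2 : ℝ) : ℂ) * Complex.I))
    (Complex.I • ∫ y : ℝ in (-2)..2, f (((2 : ℝ) : ℂ) + (y : ℂ) * Complex.I))
  have := norm_sub_le (∫ x : ℝ in (-2)..2, f ((x : ℂ) + ((-2 : ℝ) : ℂ) * Complex.I))
    (∫ x : ℝ in (-2)..2, f ((x : ℂ) + ((2 : ℝ) : ℂ) * Complex.I))
  rw [norm_smul, Complex.norm_I, one_mul] at *
  linarith

lemma hd_cauchy_side (c : ℝ → ℂ) (φ : ℝ → ℂ) (hc : Continuous c) (hφ : Continuous φ)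
    (h2 : ∀ x, 2 ≤ ‖c x‖) (z : ℂ) (hz : ‖z‖ < 3 / 2) :
    DifferentiableAt ℂ (fun z => ∫ x : ℝ in (-2)..2, φ x / (c x - z)) z := by
  have hlow : ∀ w ∈ Metric.ball (0 : ℂ) (3 / 2), ∀ x, 1 / 2 ≤ ‖c x - w‖ := by
    intro w hw x
    have := norm_sub_norm_le (c x) w
    have := h2 x
    rw [mem_ball_zero_iff] at hw
    linarith
  have hne : ∀ w ∈ Metric.ball (0 : ℂ) (3 / 2), ∀ x, c x - w ≠ 0 := by
    intro w hw x h0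
    have := hlow w hw x
    rw [h0] at this
    norm_num at this
  have hzb : z ∈ Metric.ball (0 : ℂ) (3 / 2) := by simpa using hz
  have hnb : Metric.ball (0 : ℂ) (3 / 2) ∈ nhds z := Metric.isOpen_ball.mem_nhds hzb
  have hcont : ∀ w ∈ Metric.ball (0 : ℂ) (3 / 2), Continuous (fun x => φ x / (c x - w)) :=
    fun w hw => hφ.div (by fun_prop) (hne w hw)
  have hcont' : Continuous (fun x => φ x / (c x - z) ^ 2) :=
    hφ.div (by fun_prop) (fun x => pow_ne_zero _ (hne z hzb x))
  refine (intervalIntegral.hasDerivAt_integral_of_dominated_loc_of_deriv_le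
    (F' := fun z x => φ x / (c x - z) ^ 2) (bound := fun x => 4 * ‖φ x‖) hnb ?_ ?_ ?_ ?_ ?_ ?_).2.differentiableAt
  · filter_upwards [hnb] with w hw
    exact (hcont w hw).aestronglyMeasurable
  · exact (hcont z hzb).intervalIntegrable _ _
  · exact hcont'.aestronglyMeasurable
  · refine Eventually.of_forall fun x _ w hw => ?_
    rw [norm_div, norm_pow, div_le_iff₀ (by have := hlow w hw x; positivity)]
    have h := hlow w hw x
    have : 1 / 4 ≤ ‖c x - w‖ ^ 2 := by nlinarith
    have := norm_nonneg (φ x)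
    nlinarith
  · exact (hφ.norm.const_mul 4 |>.intervalIntegrable _ _)
  · refine Eventually.of_forall fun x _ w hw => ?_
    have h1 : HasDerivAt (fun w : ℂ => c x - w) (-1) w := by
      simpa using (hasDerivAt_id w).const_sub (c x)
    have := (hasDerivAt_const w (φ x)).div h1 (hne w hw x)
    refine this.congr_deriv ?_
    simp

lemma hdB_diff {u : ℂ → ℂ} (hu : ContinuousOn u {ζ | 2 ≤ ‖ζ‖}) :
    DifferentiableOn ℂ (fun z => hdB (fun ζ => u ζ / (ζ - z))) (Metric.ball 0 (3 / 2)) := by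
  intro z hz
  apply DifferentiableAt.differentiableWithinAt
  rw [mem_ball_zero_iff] at hz
  have h2 : |(2 : ℝ)| = 2 := by norm_num
  have h2' : |(-2 : ℝ)| = 2 := by norm_num
  unfold hdB
  have a1 := hd_cauchy_side _ _ (by fun_prop) (hd_side_cont hu _ h2').1
    (fun x => hd_side_im x _ h2') z hz
  have a2 := hd_cauchy_side _ _ (by fun_prop) (hd_side_cont hu _ h2).1
    (fun x => hd_side_im x _ h2) z hz
  have a3 := hd_cauchy_side _ _ (by fun_prop) (hd_side_cont hu _ h2).2
    (fun x => hd_side_re x _ h2) z hz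
  have a4 := hd_cauchy_side _ _ (by fun_prop) (hd_side_cont hu _ h2').2
    (fun x => hd_side_re x _ h2') z hz
  exact ((a1.sub a2).add (a3.const_smul Complex.I)).sub (a4.const_smul Complex.I)

lemma hd_im_side (c : ℝ → ℂ) (a : ℂ) (hc : Continuous c) (hne : ∀ x, c x ≠ 0) (b : ℝ)
    (h : ∀ x ∈ Icc (-2 : ℝ) 2, b ≤ (a / c x).im) :
    4 * b ≤ (a * ∫ x : ℝ in (-2)..2, 1 / c x).im := by
  have hcont : Continuous (fun x => a / c x) := continuous_const.div hc hne
  have e1 : a * ∫ x : ℝ in (-2)..2, 1 / c x = ∫ x : ℝ in (-2)..2, a / c x := by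
    rw [← intervalIntegral.integral_const_mul]
    simp [div_eq_mul_inv]
  have e2 : (∫ x : ℝ in (-2)..2, a / c x).im = ∫ x : ℝ in (-2)..2, (a / c x).im := by
    have := Complex.imCLM.intervalIntegral_comp_comm (hcont.intervalIntegrable (-2) 2)
      (μ := volume)
    simpa using this.symm
  rw [e1, e2]
  calc 4 * b = ∫ x : ℝ in (-2)..2, b := by
        rw [intervalIntegral.integral_const]; norm_num
    _ ≤ _ := by
        apply intervalIntegral.integral_mono_on (by norm_num)
        · simp
        · exact (Complex.continuous_im.comp hcont).intervalIntegrable _ _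
        · exact h

lemma hdB_w (z : ℂ) (hz : ‖z‖ < 3 / 2) : 1 / 25 ≤ ‖hdB (fun ζ => 1 / (ζ - z))‖ := by
  have hre : |z.re| < 3 / 2 := (Complex.abs_re_le_norm z).trans_lt hz
  have him : |z.im| < 3 / 2 := (Complex.abs_im_le_norm z).trans_lt hz
  rw [abs_lt] at hre him
  have key : ∀ v : ℂ, v ≠ 0 → 0 < Complex.normSq v := fun v hv => Complex.normSq_pos.mpr hv
  have nb : ∀ s x : ℝ, |s| = 2 → (x : ℂ) + (s : ℂ) * Complex.I - z ≠ 0 := by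
    intro s x hs h0
    have := hd_side_im x s hs
    rw [sub_eq_zero.mp h0] at this
    linarith
  have nb' : ∀ s x : ℝ, |s| = 2 → (s : ℂ) + (x : ℂ) * Complex.I - z ≠ 0 := by
    intro s x hs h0
    have := hd_side_re x s hs
    rw [sub_eq_zero.mp h0] at this
    linarith
  have h2 : |(2 : ℝ)| = 2 := by norm_num
  have h2' : |(-2 : ℝ)| = 2 := by norm_num
  have i1 := hd_im_side (fun x => (x : ℂ) + ((-2 : ℝ) : ℂ) * Complex.I - z) 1 (by fun_prop)
    (fun x => nb _ x h2') (1 / 100) (by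
      intro x hx
      rw [Complex.div_im]
      have hp := key _ (nb _ x h2')
      simp only [Complex.one_re, Complex.one_im]
      rw [zero_mul, zero_div, zero_sub, one_mul, ← neg_div, le_div_iff₀ hp, Complex.normSq_apply]
      simp
      nlinarith [hx.1, hx.2])
  have i2 := hd_im_side (fun x => (x : ℂ) + ((2 : ℝ) : ℂ) * Complex.I - z) (-1) (by fun_prop)
    (fun x => nb _ x h2) 0 (by
      intro x hx
      rw [Complex.div_im]
      have hp := key _ (nb _ x h2)
      simp
      rw [div_nonpos_iff]
      right
      refine ⟨by linarith, by simpa using hp.le⟩)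
  have i3 := hd_im_side (fun x => ((2 : ℝ) : ℂ) + (x : ℂ) * Complex.I - z) Complex.I (by fun_prop)
    (fun x => nb' _ x h2) 0 (by
      intro x hx
      rw [Complex.div_im]
      have hp := key _ (nb' _ x h2)
      simp
      rw [le_div_iff₀ (by simpa using hp)]
      nlinarith [hx.1, hx.2])
  have i4 := hd_im_side (fun x => ((-2 : ℝ) : ℂ) + (x : ℂ) * Complex.I - z) (-Complex.I)
    (by fun_prop) (fun x => nb' _ x h2') 0 (by
      intro x hx
      rw [Complex.div_im]
      have hp := key _ (nb' _ x h2')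
      simp
      exact div_nonneg (by linarith) (by simpa using hp.le))
  refine le_trans ?_ (Complex.abs_im_le_norm _)
  refine le_trans ?_ (le_abs_self _)
  unfold hdB
  simp only [smul_eq_mul, Complex.sub_im, Complex.add_im]
  rw [one_mul] at i1
  rw [neg_one_mul, Complex.neg_im] at i2
  rw [neg_mul, Complex.neg_im] at i4
  linarith

lemma hd_roots (p : Polynomial ℂ) : ∃ (N : ℕ) (a : Fin N → ℂ),
    N ≤ p.natDegree ∧ (∀ ζ, p.eval ζ = p.leadingCoeff * ∏ i, (ζ - a i)) ∧
    (∀ ζ, p.eval ζ ≠ 0 → p.derivative.eval ζ / p.eval ζ = ∑ i, 1 / (ζ - a i)) := by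
  have hs := IsAlgClosed.splits p
  refine ⟨p.roots.toList.length, fun i => p.roots.toList.get i, ?_, ?_, ?_⟩
  · rw [Multiset.length_toList]; exact p.card_roots'
  · intro ζ
    rw [hs.eval_eq_prod_roots]
    congr 1
    conv_lhs => rw [← Multiset.coe_toList p.roots]
    rw [Multiset.map_coe, Multiset.prod_coe, Fin.prod_univ_def]
    have := List.map_map (f := p.roots.toList.get) (g := fun a => ζ - a)
      (l := List.finRange p.roots.toList.length)
    rw [List.map_get_finRange] at this
    rw [this]; rfl
  · intro ζ hζ
    rw [hs.eval_derivative_div_eval_of_ne_zero hζ]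
    conv_lhs => rw [← Multiset.coe_toList p.roots]
    rw [Multiset.map_coe, Multiset.sum_coe, Fin.sum_univ_def]
    have := List.map_map (f := p.roots.toList.get) (g := fun a => 1 / (ζ - a))
      (l := List.finRange p.roots.toList.length)
    rw [List.map_get_finRange] at this
    rw [this]; rfl

/-- the one-dimensional singular kernel -/
def hdphi (x : ℝ) : ℝ := (√|x|)⁻¹

lemma hdphi_nonneg (x : ℝ) : 0 ≤ hdphi x := by unfold hdphi; positivity

lemma hdphi_int (a b : ℝ) : IntervalIntegrable hdphi volume a b := by
  refine intervalIntegrable_of_even (fun x => by simp [hdphi]) ?_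
  intro x hx
  have h := intervalIntegral.intervalIntegrable_rpow' (a := 0) (b := x) (r := -(1 / 2))
    (by norm_num)
  refine h.congr ?_
  intro y hy
  rw [uIoc_of_le hx.le] at hy
  simp only [hdphi]
  rw [abs_of_pos hy.1, Real.rpow_neg hy.1.le, Real.sqrt_eq_rpow]

lemma hdphi_bound : ∃ c : ℝ, 0 < c ∧ ∀ α : ℝ,
    IntervalIntegrable (fun x => hdphi (x - α)) volume (-2) 2 ∧
    ∫ x in (-2)..2, hdphi (x - α) ≤ c := by
  set ψ : ℝ → ℝ := (Ioc (-1 : ℝ) 1).indicator hdphi with hψ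
  have hψi : Integrable ψ := by
    rw [hψ, integrable_indicator_iff measurableSet_Ioc]
    exact (intervalIntegrable_iff_integrableOn_Ioc_of_le (by norm_num)).mp (hdphi_int (-1) 1)
  have hψ0 : ∀ x, 0 ≤ ψ x := fun x => Set.indicator_nonneg (fun y _ => hdphi_nonneg y) x
  refine ⟨(∫ x, ψ x) + 5, by have : 0 ≤ ∫ x, ψ x := integral_nonneg (fun x => hψ0 x); linarith, ?_⟩
  intro α
  have hI : IntervalIntegrable (fun x => hdphi (x - α)) volume (-2) 2 := by
    have := (hdphi_int (-2 - α) (2 - α)).comp_sub_right α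
    simpa using this
  refine ⟨hI, ?_⟩
  have hψα : Integrable (fun x => ψ (x - α)) := hψi.comp_sub_right α
  have hpt : ∀ x, hdphi x ≤ ψ x + 1 := by
    intro x
    by_cases hx : x ∈ Ioc (-1 : ℝ) 1
    · rw [hψ, Set.indicator_of_mem hx]; linarith
    · rw [hψ, Set.indicator_of_notMem hx, zero_add]
      unfold hdphi
      apply inv_le_one_of_one_le₀
      rw [Real.one_le_sqrt]
      by_contra hlt
      push Not at hlt
      rw [abs_lt] at hlt
      exact hx ⟨hlt.1, hlt.2.le⟩
  calc ∫ x in (-2)..2, hdphi (x - α) ≤ ∫ x in (-2)..2, (ψ (x - α) + 1) := by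
        apply intervalIntegral.integral_mono_on (by norm_num) hI
        · exact (hψα.intervalIntegrable).add (by simp)
        · intro x _; exact hpt _
    _ = (∫ x in (-2)..2, ψ (x - α)) + 4 := by
        rw [intervalIntegral.integral_add hψα.intervalIntegrable (by simp)]
        rw [intervalIntegral.integral_const]; norm_num
    _ ≤ (∫ x, ψ (x - α)) + 4 := by
        gcongr
        rw [intervalIntegral.integral_of_le (by norm_num)]
        exact setIntegral_le_integral hψα (Eventually.of_forall fun x => hψ0 _)
    _ = (∫ x, ψ x) + 4 := by rw [integral_sub_right_eq_self (fun x => ψ x) α]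
    _ ≤ _ := by linarith

lemma hdphi_ker (ζ a : ℂ) (h1 : ζ.re ≠ a.re) (h2 : ζ.im ≠ a.im) :
    ‖1 / (ζ - a)‖ ≤ hdphi (ζ.re - a.re) * hdphi (ζ.im - a.im) := by
  unfold hdphi
  rw [norm_div, norm_one, one_div, ← mul_inv]
  have hx : 0 < |ζ.re - a.re| := abs_pos.mpr (sub_ne_zero.mpr h1)
  have hy : 0 < |ζ.im - a.im| := abs_pos.mpr (sub_ne_zero.mpr h2)
  apply inv_anti₀ (by positivity)
  rw [← Real.sqrt_mul hx.le]
  apply Real.sqrt_le_iff.mpr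
  refine ⟨norm_nonneg _, ?_⟩
  rw [← Complex.normSq_eq_norm_sq, Complex.normSq_apply]
  simp only [Complex.sub_re, Complex.sub_im]
  nlinarith [sq_abs (ζ.re - a.re), sq_abs (ζ.im - a.im),
    sq_nonneg (|ζ.re - a.re| - |ζ.im - a.im|)]

lemma hd_area : ∃ c : ℝ, 0 < c ∧ ∀ (n : ℕ) (p : Polynomial ℂ), p ≠ 0 → p.natDegree ≤ n →
    ∀ (Φ : ℂ → ℂ) (K : ℝ), 0 ≤ K →
    (∀ ζ, ‖ζ‖ ≤ 4 → p.eval ζ ≠ 0 → ‖Φ ζ‖ ≤ K * ‖p.derivative.eval ζ / p.eval ζ‖) →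
    ‖∫ x : ℝ in (-2)..2, ∫ y : ℝ in (-2)..2, Φ (x + y * Complex.I)‖ ≤ K * n * c := by
  obtain ⟨c, hc, hphi⟩ := hdphi_bound
  refine ⟨c * c, by positivity, ?_⟩
  intro n p hp hdeg Φ K hK hΦ
  obtain ⟨N, a, hN, hev, hder⟩ := hd_roots p
  have hne : ∀ ζ : ℂ, (∀ i, ζ.re ≠ (a i).re) → p.eval ζ ≠ 0 := by
    intro ζ h0
    rw [hev]
    apply mul_ne_zero (by simpa using hp)
    rw [Finset.prod_ne_zero_iff]
    intro i _ h
    exact h0 i (by rw [sub_eq_zero.mp h])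
  have hae1 : ∀ᵐ x : ℝ, ∀ i, x ≠ (a i).re := by
    rw [ae_all_iff]
    intro i
    exact Measure.ae_ne volume _
  have hae2 : ∀ᵐ x : ℝ, ∀ i, x ≠ (a i).im := by
    rw [ae_all_iff]
    intro i
    exact Measure.ae_ne volume _
  have hin : ∀ x : ℝ, x ∈ Ioc (-2 : ℝ) 2 → (∀ i, x ≠ (a i).re) →
      ‖∫ y : ℝ in (-2)..2, Φ (x + y * Complex.I)‖ ≤ ∑ i, K * c * hdphi (x - (a i).re) := by
    intro x hx hxa
    have h1 : ‖∫ y : ℝ in (-2)..2, Φ (x + y * Complex.I)‖ ≤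
        ∫ y : ℝ in (-2)..2, ∑ i, K * hdphi (x - (a i).re) * hdphi (y - (a i).im) := by
      apply intervalIntegral.norm_integral_le_of_norm_le (by norm_num)
      · filter_upwards [hae2] with y hya hy
        have hn4 : ‖(x : ℂ) + y * Complex.I‖ ≤ 4 := by
          refine (norm_add_le _ _).trans ?_
          simp only [Complex.norm_real, norm_mul, Complex.norm_I, Real.norm_eq_abs]
          have : |x| ≤ 2 := abs_le.mpr ⟨hx.1.le, hx.2⟩
          have : |y| ≤ 2 := abs_le.mpr ⟨hy.1.le, hy.2⟩
          linarith
        have hpn := hne ((x : ℂ) + y * Complex.I) (by simpa using hxa)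
        refine (hΦ _ hn4 hpn).trans ?_
        rw [hder _ hpn]
        calc K * ‖∑ i, 1 / ((x : ℂ) + y * Complex.I - a i)‖
            ≤ K * ∑ i, ‖1 / ((x : ℂ) + y * Complex.I - a i)‖ := by
              gcongr; exact norm_sum_le _ _
          _ ≤ K * ∑ i, hdphi (x - (a i).re) * hdphi (y - (a i).im) := by
              gcongr with i _
              have := hdphi_ker ((x : ℂ) + y * Complex.I) (a i) (by simpa using hxa i)
                (by simpa using hya i)
              simpa using this
          _ = _ := by rw [Finset.mul_sum]; simp only [mul_assoc]
      · have : IntervalIntegrable (∑ i, fun y => K * hdphi (x - (a i).re) * hdphi (y - (a i).im))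
            volume (-2) 2 :=
          IntervalIntegrable.sum _ (fun i _ => (hphi _).1.const_mul _)
        convert this using 1
        ext y; simp
    refine h1.trans ?_
    rw [intervalIntegral.integral_finsetSum (fun i _ => (hphi _).1.const_mul _)]
    gcongr with i _
    rw [intervalIntegral.integral_const_mul]
    have h3 := (hphi (a i).im).2
    have := hdphi_nonneg (x - (a i).re)
    calc K * hdphi (x - (a i).re) * ∫ (x : ℝ) in -2..2, hdphi (x - (a i).im)
        ≤ K * hdphi (x - (a i).re) * c := by gcongr
      _ = _ := by ring
  have h1 : ‖∫ x : ℝ in (-2)..2, ∫ y : ℝ in (-2)..2, Φ (x + y * Complex.I)‖ ≤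
      ∫ x : ℝ in (-2)..2, ∑ i, K * c * hdphi (x - (a i).re) := by
    apply intervalIntegral.norm_integral_le_of_norm_le (by norm_num)
    · filter_upwards [hae1] with x hx hx2
      exact hin x hx2 hx
    · have : IntervalIntegrable (∑ i, fun x => K * c * hdphi (x - (a i).re)) volume (-2) 2 :=
        IntervalIntegrable.sum _ (fun i _ => (hphi _).1.const_mul _)
      convert this using 1
      ext y; simp
  refine h1.trans ?_
  rw [intervalIntegral.integral_finsetSum (fun i _ => (hphi _).1.const_mul _)]
  calc ∑ i, ∫ x in (-2)..2, K * c * hdphi (x - (a i).re) ≤ ∑ i : Fin N, K * c * c := by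
        gcongr with i _
        rw [intervalIntegral.integral_const_mul]
        have := (hphi (a i).re).2
        gcongr
    _ = N * (K * c * c) := by simp
    _ ≤ n * (K * c * c) := by
        have : (N : ℝ) ≤ n := by exact_mod_cast hN.trans hdeg
        gcongr
    _ = _ := by ring

lemma hd_real_ineq (a b τ : ℝ) (ha : 0 ≤ a) (hb : 0 ≤ b) (hτ : 0 < τ) (j : ℕ) (hj : 1 ≤ j)
    (h : b ^ j ≤ a ^ (j + 1) + τ ^ (j * (j + 1))) :
    b * τ ^ (2 * j) ≤ 2 * τ ^ (j + 1) * (a ^ 2 + τ ^ (2 * j)) ∧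
    b * a * τ ^ (2 * j) ≤ 2 * τ * (a ^ 2 + τ ^ (2 * j)) ^ 2 := by
  obtain ⟨s, hs, has, hD⟩ : ∃ s, τ ≤ s ∧ a ≤ s ^ j ∧ s ^ (2 * j) ≤ a ^ 2 + τ ^ (2 * j) := by
    rcases le_or_gt a (τ ^ j) with h1 | h1
    · exact ⟨τ, le_rfl, h1, by nlinarith⟩
    · have hr : (a ^ ((j : ℝ)⁻¹)) ^ j = a := Real.rpow_inv_natCast_pow ha (by omega)
      refine ⟨a ^ ((j : ℝ)⁻¹), ?_, hr.ge, ?_⟩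
      · refine (pow_le_pow_iff_left₀ hτ.le (by positivity) (show j ≠ 0 by omega)).mp ?_
        rw [hr]; exact h1.le
      · rw [mul_comm 2 j, pow_mul, hr]
        have : 0 < τ ^ (j * 2) := by positivity
        linarith
  obtain ⟨i, rfl⟩ : ∃ i, j = i + 1 := ⟨j - 1, by omega⟩
  have hs0 : 0 < s := hτ.trans_le hs
  have hb2 : b ≤ 2 * s ^ (i + 1 + 1) := by
    have h1 : b ^ (i + 1) ≤ (2 * s ^ (i + 1 + 1)) ^ (i + 1) := by
      calc b ^ (i + 1) ≤ (s ^ (i + 1)) ^ (i + 1 + 1) + s ^ ((i + 1) * (i + 1 + 1)) := by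
            refine h.trans ?_
            gcongr
        _ = 2 * s ^ ((i + 1) * (i + 1 + 1)) := by rw [← pow_mul]; ring
        _ ≤ 2 ^ (i + 1) * s ^ ((i + 1) * (i + 1 + 1)) := by
            gcongr
            exact le_self_pow₀ (by norm_num) (by omega)
        _ = _ := by rw [mul_pow, ← pow_mul, mul_comm (i + 1 + 1)]
    exact (pow_le_pow_iff_left₀ hb (by positivity) (by omega)).mp h1
  constructor
  · calc b * τ ^ (2 * (i + 1)) ≤ 2 * s ^ (i + 1 + 1) * τ ^ (2 * (i + 1)) := by gcongr
      _ = 2 * τ ^ (i + 1 + 1) * (s ^ (i + 2) * τ ^ i) := by ring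
      _ ≤ 2 * τ ^ (i + 1 + 1) * (s ^ (i + 2) * s ^ i) := by gcongr
      _ = 2 * τ ^ (i + 1 + 1) * s ^ (2 * (i + 1)) := by ring
      _ ≤ _ := by gcongr
  · calc b * a * τ ^ (2 * (i + 1))
        ≤ 2 * s ^ (i + 1 + 1) * s ^ (i + 1) * τ ^ (2 * (i + 1)) := by gcongr
      _ = 2 * τ * (s ^ (2 * i + 3) * τ ^ (2 * i + 1)) := by ring
      _ ≤ 2 * τ * (s ^ (2 * i + 3) * s ^ (2 * i + 1)) := by gcongr
      _ = 2 * τ * (s ^ (2 * (i + 1))) ^ 2 := by ring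
      _ ≤ _ := by gcongr

/-- the non-holomorphic quotient -/
def hdu (p q : Polynomial ℂ) (T : ℝ) (ζ : ℂ) : ℂ :=
  q.eval ζ * (starRingEnd ℂ) (p.eval ζ) / (p.eval ζ * (starRingEnd ℂ) (p.eval ζ) + (T : ℂ))

lemma hdu_den (p : Polynomial ℂ) (T : ℝ) (ζ : ℂ) :
    p.eval ζ * (starRingEnd ℂ) (p.eval ζ) + (T : ℂ) = ((‖p.eval ζ‖ ^ 2 + T : ℝ) : ℂ) := by
  rw [Complex.mul_conj, Complex.normSq_eq_norm_sq]; push_cast; rfl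

lemma hdu_den_ne (p : Polynomial ℂ) {T : ℝ} (hT : 0 < T) (ζ : ℂ) :
    p.eval ζ * (starRingEnd ℂ) (p.eval ζ) + (T : ℂ) ≠ 0 := by
  rw [hdu_den]
  have : 0 < ‖p.eval ζ‖ ^ 2 + T := by positivity
  exact_mod_cast this.ne'

lemma hdu_cont (p q : Polynomial ℂ) {T : ℝ} (hT : 0 < T) : Continuous (hdu p q T) := by
  unfold hdu
  refine Continuous.div ?_ ?_ (hdu_den_ne p hT)
  · exact q.continuous.mul (Complex.continuous_conj.comp p.continuous)
  · exact (p.continuous.mul (Complex.continuous_conj.comp p.continuous)).add continuous_const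

lemma hdu_deriv (p q k : Polynomial ℂ) {T : ℝ} (hT : 0 < T) (ζ : ℂ) :
    DifferentiableAt ℝ (fun ζ => hdu p q T ζ * k.eval ζ) ζ ∧
    Complex.I • fderiv ℝ (fun ζ => hdu p q T ζ * k.eval ζ) ζ 1 -
      fderiv ℝ (fun ζ => hdu p q T ζ * k.eval ζ) ζ Complex.I =
      2 * Complex.I * (q.eval ζ * k.eval ζ) * (starRingEnd ℂ) (p.derivative.eval ζ) * T /
        (p.eval ζ * (starRingEnd ℂ) (p.eval ζ) + (T : ℂ)) ^ 2 := by
  have hE := hdu_den_ne p hT ζ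
  have dq := ((q * k).hasDerivAt ζ).complexToReal_fderiv
  have dp := (p.hasDerivAt ζ).complexToReal_fderiv
  have dN : HasFDerivAt (fun ζ => (starRingEnd ℂ) (p.eval ζ))
      ((Complex.conjCLE : ℂ →L[ℝ] ℂ).comp (p.derivative.eval ζ • (1 : ℂ →L[ℝ] ℂ))) ζ :=
    (Complex.conjCLE : ℂ →L[ℝ] ℂ).hasFDerivAt.comp ζ dp
  have dE := (dp.fun_mul dN).add_const (T : ℂ)
  have dI := (hasDerivAt_inv hE).complexToReal_fderiv.comp ζ dE
  have dg := (dq.fun_mul dN).fun_mul dI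
  have heq : (fun ζ => hdu p q T ζ * k.eval ζ) = fun ζ => (q * k).eval ζ *
      (starRingEnd ℂ) (p.eval ζ) *
      ((fun z => z⁻¹) ∘ fun ζ => p.eval ζ * (starRingEnd ℂ) (p.eval ζ) + (T : ℂ)) ζ := by
    ext w
    simp only [hdu, Polynomial.eval_mul, Function.comp]
    ring
  rw [heq]
  refine ⟨dg.differentiableAt, ?_⟩
  rw [dg.fderiv]
  simp only [Polynomial.eval_mul, Function.comp, ContinuousLinearMap.add_apply,
    ContinuousLinearMap.smul_apply, ContinuousLinearMap.comp_apply, ContinuousLinearMap.one_apply,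
    smul_eq_mul, ContinuousLinearEquiv.coe_coe, Complex.conjCLE_apply, map_mul, Complex.conj_I,
    mul_one, map_one]
  field_simp
  ring

lemma hdB_congr {f g : ℂ → ℂ} (h : ∀ ζ, 2 ≤ ‖ζ‖ → f ζ = g ζ) : hdB f = hdB g := by
  have h2 : |(2 : ℝ)| = 2 := by norm_num
  have h2' : |(-2 : ℝ)| = 2 := by norm_num
  unfold hdB
  simp only [h _ (hd_side_im _ _ h2), h _ (hd_side_im _ _ h2'), h _ (hd_side_re _ _ h2),
    h _ (hd_side_re _ _ h2')]

lemma hd_maxmod {f : ℂ → ℂ} {R K : ℝ} (hR : 0 < R) (hf : Differentiable ℂ f)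
    (h : ∀ ζ, ‖ζ‖ = R → ‖f ζ‖ ≤ K) (z : ℂ) (hz : ‖z‖ ≤ R) : ‖f z‖ ≤ K := by
  refine Complex.norm_le_of_forall_mem_frontier_norm_le (U := Metric.ball 0 R)
    Metric.isBounded_ball hf.diffContOnCl ?_ ?_
  · intro ζ hζ
    rw [frontier_ball _ hR.ne'] at hζ
    exact h ζ (by simpa using hζ)
  · rw [closure_ball _ hR.ne']; simpa using hz

lemma hd_quot (p : Polynomial ℂ) (z : ℂ) (hz : ‖z‖ ≤ 1) {B : ℝ} (hB : 0 ≤ B)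
    (h : ∀ ζ, ‖ζ‖ ≤ 4 → ‖p.eval ζ‖ ≤ B) : ∃ k : Polynomial ℂ,
    (∀ ζ, p.eval ζ - p.eval z = (ζ - z) * k.eval ζ) ∧ ∀ ζ, ‖ζ‖ ≤ 4 → ‖k.eval ζ‖ ≤ B := by
  obtain ⟨k, hk⟩ := Polynomial.X_sub_C_dvd_sub_C_eval (p := p) (a := z)
  have hk' : ∀ ζ, p.eval ζ - p.eval z = (ζ - z) * k.eval ζ := by
    intro ζ
    have := congrArg (Polynomial.eval ζ) hk
    simpa using this
  refine ⟨k, hk', ?_⟩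
  refine hd_maxmod (by norm_num) k.differentiable ?_
  intro ζ hζ
  have h1 := hk' ζ
  have h2 : ‖(ζ - z) * k.eval ζ‖ ≤ B + B := by
    rw [← h1]
    exact (norm_sub_le _ _).trans (add_le_add (h _ hζ.le) (h _ (by linarith)))
  rw [norm_mul] at h2
  have h3 : 3 ≤ ‖ζ - z‖ := by
    have := norm_sub_norm_le ζ z
    linarith
  have := norm_nonneg (k.eval ζ)
  nlinarith

theorem hd_dbar (j : ℕ) (hj : 1 ≤ j) : ∃ K : ℝ, 0 < K ∧ ∀ (B : ℝ), 1 ≤ B → ∀ (n : ℕ)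
    (p q : Polynomial ℂ), p ≠ 0 → p.natDegree ≤ n →
    (∀ ζ, ‖ζ‖ ≤ 4 → ‖p.eval ζ‖ ≤ B) → (∀ ζ, ‖ζ‖ ≤ 4 → ‖q.eval ζ‖ ≤ B) →
    ∀ τ : ℝ, 0 < τ → τ ≤ 1 →
    (∀ ζ, ‖ζ‖ ≤ 4 → ‖p.eval ζ ^ (j + 1) - q.eval ζ ^ j‖ ≤ τ ^ (j * (j + 1))) →
    ∃ F : ℂ → ℂ, DifferentiableOn ℂ F (Metric.ball 0 (3 / 2)) ∧
      ∀ z, ‖z‖ ≤ 1 → ‖F z * p.eval z - q.eval z‖ ≤ K * B * (n + 1) * τ := by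
  obtain ⟨c, hc, harea⟩ := hd_area
  refine ⟨25 * (32 + 4 * c), by positivity, ?_⟩
  intro B hB n p q hp hdeg hpB hqB τ hτ hτ1 hW
  set T : ℝ := τ ^ (2 * j) with hTdef
  have hT : 0 < T := by positivity
  set u := hdu p q T with hu
  have ucont : Continuous u := hdu_cont p q hT
  -- pointwise inequalities
  have hin : ∀ ζ, ‖ζ‖ ≤ 4 → ‖q.eval ζ‖ * T ≤ 2 * τ ^ (j + 1) * (‖p.eval ζ‖ ^ 2 + T) ∧
      ‖q.eval ζ‖ * ‖p.eval ζ‖ * T ≤ 2 * τ * (‖p.eval ζ‖ ^ 2 + T) ^ 2 := by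
    intro ζ hζ
    apply hd_real_ineq _ _ _ (norm_nonneg _) (norm_nonneg _) hτ j hj
    have h1 := hW ζ hζ
    have h2 : q.eval ζ ^ j = p.eval ζ ^ (j + 1) - (p.eval ζ ^ (j + 1) - q.eval ζ ^ j) := by ring
    rw [← norm_pow, h2]
    refine (norm_sub_le _ _).trans ?_
    rw [norm_pow]
    linarith
  have hden : ∀ ζ, ‖p.eval ζ * (starRingEnd ℂ) (p.eval ζ) + (T : ℂ)‖ = ‖p.eval ζ‖ ^ 2 + T := by
    intro ζ
    rw [hdu_den, Complex.norm_real, Real.norm_of_nonneg (by positivity)]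
  have hup : ∀ ζ, ‖ζ‖ ≤ 4 → ‖u ζ * p.eval ζ - q.eval ζ‖ ≤ 2 * τ := by
    intro ζ hζ
    have e : u ζ * p.eval ζ - q.eval ζ = - (q.eval ζ * T /
        (p.eval ζ * (starRingEnd ℂ) (p.eval ζ) + (T : ℂ))) := by
      have := hdu_den_ne p hT ζ
      simp only [hu, hdu]
      rw [div_mul_eq_mul_div, div_sub' this, ← neg_div]
      congr 1
      ring
    rw [e, norm_neg, norm_div, hden, norm_mul, Complex.norm_real, Real.norm_of_nonneg hT.le,
      div_le_iff₀ (by positivity)]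
    refine (hin ζ hζ).1.trans ?_
    gcongr
    exact pow_le_of_le_one hτ.le hτ1 (by omega)
  set A : ℂ → ℂ := fun z => hdB (fun ζ => u ζ / (ζ - z)) with hA
  set w : ℂ → ℂ := fun z => hdB (fun ζ => 1 / (ζ - z)) with hw
  have hwn : ∀ z, ‖z‖ < 3 / 2 → 1 / 25 ≤ ‖w z‖ := fun z hz => hdB_w z hz
  have hwne : ∀ z, ‖z‖ < 3 / 2 → w z ≠ 0 := by
    intro z hz h0
    have := hwn z hz
    rw [h0] at this
    norm_num at this
  refine ⟨fun z => A z / w z, ?_, ?_⟩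
  · apply DifferentiableOn.fun_div
    · exact hdB_diff ucont.continuousOn
    · exact hdB_diff (u := fun _ => 1) continuousOn_const
    · intro z hz
      exact hwne z (by simpa using hz)
  intro z hz
  have hz' : ‖z‖ < 3 / 2 := by linarith
  obtain ⟨kp, hkp, hkpB⟩ := hd_quot p z hz (by linarith) hpB
  obtain ⟨kq, hkq, hkqB⟩ := hd_quot q z hz (by linarith) hqB
  have hsub : ∀ ζ : ℂ, 2 ≤ ‖ζ‖ → 1 ≤ ‖ζ - z‖ := by
    intro ζ hζ
    have := norm_sub_norm_le ζ z
    linarith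
  have hsubne : ∀ ζ : ℂ, 2 ≤ ‖ζ‖ → ζ - z ≠ 0 := by
    intro ζ hζ h0
    have := hsub ζ hζ
    rw [h0] at this
    norm_num at this
  have cinv : ContinuousOn (fun ζ : ℂ => ζ - z) {ζ | 2 ≤ ‖ζ‖} := by fun_prop
  have main : A z * p.eval z - w z * q.eval z =
      hdB (fun ζ => (u ζ * p.eval ζ - q.eval ζ) / (ζ - z)) -
        (hdB (fun ζ => u ζ * kp.eval ζ) - hdB (fun ζ => kq.eval ζ)) := by
    rw [hA, hw]
    simp only
    rw [← hdB_mul_const, ← hdB_mul_const]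
    rw [← hdB_sub, ← hdB_sub, ← hdB_sub]
    · apply hdB_congr
      intro ζ hζ
      have h0 := hsubne ζ hζ
      have e1 : p.eval z = p.eval ζ - (ζ - z) * kp.eval ζ := by rw [← hkp]; ring
      have e2 : q.eval z = q.eval ζ - (ζ - z) * kq.eval ζ := by rw [← hkq]; ring
      rw [e1, e2]
      field_simp
      ring
    · refine ContinuousOn.div ?_ cinv hsubne
      exact ((ucont.mul p.continuous).sub q.continuous).continuousOn
    · exact ((ucont.mul kp.continuous).sub kq.continuous).continuousOn
    · exact (ucont.mul kp.continuous).continuousOn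
    · exact kq.continuous.continuousOn
    · exact (ucont.continuousOn.div cinv hsubne).mul continuousOn_const
    · exact (continuousOn_const.div cinv hsubne).mul continuousOn_const
  have hkq0 : hdB (fun ζ => kq.eval ζ) = 0 := by
    have := Complex.integral_boundary_rect_eq_zero_of_differentiableOn (fun ζ => kq.eval ζ)
      (⟨-2, -2⟩ : ℂ) ⟨2, 2⟩ kq.differentiable.differentiableOn
    exact this
  have hkpI : ‖hdB (fun ζ => u ζ * kp.eval ζ)‖ ≤ 4 * B * τ * n * c := by
    have hfor : ∀ ζ, Complex.I • fderiv ℝ (fun ζ => u ζ * kp.eval ζ) ζ 1 -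
      fderiv ℝ (fun ζ => u ζ * kp.eval ζ) ζ Complex.I = 2 * Complex.I * (q.eval ζ * kp.eval ζ) *
        (starRingEnd ℂ) (p.derivative.eval ζ) * T /
        (p.eval ζ * (starRingEnd ℂ) (p.eval ζ) + (T : ℂ)) ^ 2 :=
      fun ζ => (hdu_deriv p q kp hT ζ).2
    have := Complex.integral_boundary_rect_of_differentiableOn_real (fun ζ => u ζ * kp.eval ζ)
      (⟨-2, -2⟩ : ℂ) ⟨2, 2⟩ (fun ζ _ => (hdu_deriv p q kp hT ζ).1.differentiableWithinAt) (by
        apply ContinuousOn.integrableOn_compact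
        · exact (isCompact_uIcc).reProdIm isCompact_uIcc
        · apply Continuous.continuousOn
          rw [funext hfor]
          refine Continuous.div ?_ ?_ (fun ζ => pow_ne_zero _ (hdu_den_ne p hT ζ))
          · exact (((continuous_const.mul (q.continuous.mul kp.continuous)).mul
              (Complex.continuous_conj.comp p.derivative.continuous)).mul continuous_const)
          · exact ((p.continuous.mul (Complex.continuous_conj.comp p.continuous)).add
              continuous_const).pow 2)
    have e : hdB (fun ζ => u ζ * kp.eval ζ) = ∫ x : ℝ in (-2)..2, ∫ y : ℝ in (-2)..2,
        (fun ζ => Complex.I • fderiv ℝ (fun ζ => u ζ * kp.eval ζ) ζ 1 -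
          fderiv ℝ (fun ζ => u ζ * kp.eval ζ) ζ Complex.I) (x + y * Complex.I) := this
    rw [e]
    refine harea n p hp hdeg (fun ζ => Complex.I • fderiv ℝ (fun ζ => u ζ * kp.eval ζ) ζ 1 -
          fderiv ℝ (fun ζ => u ζ * kp.eval ζ) ζ Complex.I) (4 * B * τ) (by positivity) ?_
    intro ζ hζ hpne
    simp only [hfor]
    have h1 := (hin ζ hζ).2
    have ha : 0 < ‖p.eval ζ‖ := norm_pos_iff.mpr hpne
    rw [norm_div, norm_pow, hden]
    simp only [norm_mul, Complex.norm_I, Complex.norm_real, Real.norm_of_nonneg hT.le,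
      RCLike.norm_conj, Complex.norm_ofNat, norm_div, mul_one]
    rw [div_le_iff₀ (by positivity), ← mul_div_assoc, div_mul_eq_mul_div, le_div_iff₀ ha]
    have hk := hkpB ζ hζ
    calc 2 * (‖q.eval ζ‖ * ‖kp.eval ζ‖) * ‖p.derivative.eval ζ‖ * T * ‖p.eval ζ‖
        = 2 * ‖kp.eval ζ‖ * ‖p.derivative.eval ζ‖ * (‖q.eval ζ‖ * ‖p.eval ζ‖ * T) := by ring
      _ ≤ 2 * B * ‖p.derivative.eval ζ‖ * (2 * τ * (‖p.eval ζ‖ ^ 2 + T) ^ 2) := by gcongr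
      _ = _ := by ring
  have hb1 : ‖hdB (fun ζ => (u ζ * p.eval ζ - q.eval ζ) / (ζ - z))‖ ≤ 16 * (2 * τ) := by
    apply hdB_norm_le
    intro ζ h2 h4
    rw [norm_div, div_le_iff₀ (by linarith [hsub ζ h2])]
    have := hup ζ h4
    have := hsub ζ h2
    nlinarith
  rw [hkq0, sub_zero] at main
  have hfin : ‖A z * p.eval z - w z * q.eval z‖ ≤ 32 * τ + 4 * B * τ * n * c := by
    rw [main]
    refine (norm_sub_le _ _).trans ?_
    linarith
  have e : A z / w z * p.eval z - q.eval z = (A z * p.eval z - w z * q.eval z) / w z := by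
    have := hwne z hz'
    field_simp
  simp only
  rw [e, norm_div, div_le_iff₀ (by linarith [hwn z hz'])]
  refine hfin.trans ?_
  have h1 : 32 * τ + 4 * B * τ * n * c ≤ (32 + 4 * c) * B * (n + 1) * τ := by
    have hn : (0 : ℝ) ≤ n := Nat.cast_nonneg n
    have : 32 * τ * 1 ≤ 32 * τ * (B * (n + 1)) := by
      gcongr
      nlinarith
    have : 0 ≤ 4 * B * τ * c := by positivity
    nlinarith
  have h2 := hwn z hz'
  have h3 : 0 ≤ (32 + 4 * c) * B * (n + 1) * τ := by positivity
  nlinarith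

lemma hd_div (P : Polynomial ℂ) (N : ℕ) (hN : P.natDegree ≤ N) (V : ℂ → ℂ)
    (hV : DifferentiableOn ℂ V (Metric.ball 0 (3 / 2))) {δ : ℝ} (hδ : 0 ≤ δ)
    (h : ∀ z, ‖z‖ = 1 → ‖P.eval z * V z‖ ≤ δ) (z0 z : ℂ) (hz0 : ‖z0‖ ≤ 1) (hz : ‖z‖ ≤ 1 / 2) :
    ‖V z‖ * ‖P.eval z0‖ ≤ 4 ^ N * δ := by
  obtain ⟨n, a, hn, hev, -⟩ := hd_roots P
  set g : Fin n → ℂ → ℂ := fun i ζ => if ‖a i‖ < 1 then 1 - (starRingEnd ℂ) (a i) * ζ else ζ - a i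
    with hg
  have g1 : ∀ i ζ, ‖ζ‖ = 1 → ‖g i ζ‖ = ‖ζ - a i‖ := by
    intro i ζ hζ
    simp only [hg]
    split_ifs with h1
    · have e : (starRingEnd ℂ) (ζ - a i) * ζ = 1 - (starRingEnd ℂ) (a i) * ζ := by
        rw [map_sub, sub_mul, mul_comm, Complex.mul_conj, Complex.normSq_eq_norm_sq, hζ]
        simp
      rw [← e, norm_mul, hζ, mul_one, RCLike.norm_conj]
    · rfl
  have g2 : ∀ i, ‖z0 - a i‖ ≤ 4 * ‖g i z‖ := by
    intro i
    have h3 : ‖z0 - a i‖ ≤ ‖z0‖ + ‖a i‖ := norm_sub_le _ _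
    simp only [hg]
    split_ifs with h1
    · have h2 : ‖(1 : ℂ)‖ - ‖(starRingEnd ℂ) (a i) * z‖ ≤ ‖1 - (starRingEnd ℂ) (a i) * z‖ :=
        norm_sub_norm_le _ _
      rw [norm_mul, RCLike.norm_conj, norm_one] at h2
      have : ‖a i‖ * ‖z‖ ≤ 1 * (1 / 2) := by gcongr
      linarith
    · have h2 : ‖a i‖ - ‖z‖ ≤ ‖z - a i‖ := by
        rw [norm_sub_rev]; exact norm_sub_norm_le _ _
      linarith
  set G : ℂ → ℂ := fun ζ => P.leadingCoeff * ∏ i, g i ζ with hG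
  have hGd : Differentiable ℂ G := by
    apply Differentiable.const_mul
    apply Differentiable.fun_finsetProd
    intro i _
    simp only [hg]
    split_ifs
    · fun_prop
    · fun_prop
  have hGV : ‖G z * V z‖ ≤ δ := by
    refine Complex.norm_le_of_forall_mem_frontier_norm_le (f := fun z => G z * V z)
      (U := Metric.ball 0 1) Metric.isBounded_ball ?_ ?_ ?_
    · apply DifferentiableOn.diffContOnCl
      rw [closure_ball _ one_ne_zero]
      apply (hGd.differentiableOn).mul (hV.mono _)
      intro x hx
      simp only [Metric.mem_closedBall, dist_zero_right, Metric.mem_ball] at hx ⊢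
      linarith
    · intro ζ hζ
      rw [frontier_ball _ one_ne_zero] at hζ
      have hζ1 : ‖ζ‖ = 1 := by simpa using hζ
      have : ‖G ζ‖ = ‖P.eval ζ‖ := by
        rw [hev, hG]
        simp only [norm_mul, norm_prod]
        congr 1
        exact Finset.prod_congr rfl fun i _ => g1 i ζ hζ1
      rw [norm_mul, this, ← norm_mul]
      exact h ζ hζ1
    · rw [closure_ball _ one_ne_zero]; simp; linarith
  have hP : ‖P.eval z0‖ ≤ 4 ^ n * ‖G z‖ := by
    rw [hev, hG]
    simp only [norm_mul, norm_prod]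
    calc ‖P.leadingCoeff‖ * ∏ i, ‖z0 - a i‖ ≤ ‖P.leadingCoeff‖ * ∏ i, (4 * ‖g i z‖) := by
          gcongr with i _
          exact g2 i
      _ = _ := by
          rw [Finset.prod_mul_distrib]
          simp
          ring
  calc ‖V z‖ * ‖P.eval z0‖ ≤ ‖V z‖ * (4 ^ n * ‖G z‖) := by gcongr
    _ = 4 ^ n * ‖G z * V z‖ := by rw [norm_mul (G z)]; ring
    _ ≤ 4 ^ N * δ := by
      gcongr
      · norm_num
      · omega

lemma hd_poly_bd (p : Polynomial ℂ) {C0 β : ℝ} (hC : 0 ≤ C0) (hβ : 0 < β)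
    (h : ∀ k, ‖p.coeff k‖ ≤ C0 * β ^ k) (z : ℂ) (hz : ‖z‖ ≤ 1 / (2 * β)) :
    ‖p.eval z‖ ≤ 2 * C0 := by
  rw [Polynomial.eval_eq_sum_range]
  have h1 : ∀ k, ‖p.coeff k * z ^ k‖ ≤ C0 * (1 / 2) ^ k := by
    intro k
    rw [norm_mul, norm_pow]
    calc ‖p.coeff k‖ * ‖z‖ ^ k ≤ (C0 * β ^ k) * (1 / (2 * β)) ^ k := by
          gcongr
          exact h k
      _ = C0 * (β * (1 / (2 * β))) ^ k := by rw [mul_pow]; ring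
      _ = _ := by
          congr 2
          field_simp
  refine (norm_sum_le _ _).trans ((Finset.sum_le_sum fun k _ => h1 k).trans ?_)
  rw [← Finset.mul_sum, mul_comm]
  gcongr
  refine (Summable.sum_le_tsum _ (fun _ _ => by positivity) summable_geometric_two).trans ?_
  rw [tsum_geometric_two]

lemma hd_pow_sub (X Y : ℂ) (B : ℝ) (j : ℕ) (hX : ‖X‖ ≤ B) (hY : ‖Y‖ ≤ B) :
    ‖X ^ j - Y ^ j‖ ≤ j * B ^ (j - 1) * ‖X - Y‖ := by
  rw [← Commute.geom_sum₂_mul (Commute.all X Y) j, norm_mul]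
  gcongr
  refine (norm_sum_le _ _).trans ?_
  have hB : 0 ≤ B := (norm_nonneg _).trans hX
  calc ∑ i ∈ Finset.range j, ‖X ^ i * Y ^ (j - 1 - i)‖
      ≤ ∑ i ∈ Finset.range j, B ^ (j - 1) := by
        apply Finset.sum_le_sum
        intro i hi
        rw [norm_mul, norm_pow, norm_pow]
        have : B ^ (j - 1) = B ^ i * B ^ (j - 1 - i) := by
          rw [← pow_add]; congr 1; rw [Finset.mem_range] at hi; omega
        rw [this]
        gcongr
    _ = _ := by simp

set_option maxHeartbeats 1000000 in
theorem hd_local (j : ℕ) (hj : 1 ≤ j) (C0 κ : ℝ) (hC0 : 1 ≤ C0) (hκ : 0 < κ) (hκ1 : κ < 1) :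
    ∃ β K : ℝ, 0 < β ∧ β ≤ κ ∧ β ≤ 1 / 8 ∧ 1 ≤ K ∧ ∀ (n : ℕ) (p q : Polynomial ℂ),
      p.natDegree ≤ n → (∀ k, ‖p.coeff k‖ ≤ C0 * β ^ k) → (∀ k, ‖q.coeff k‖ ≤ C0 * β ^ k) →
      Polynomial.X ^ (n + 1) ∣ p ^ (j + 1) - q ^ j →
      ∃ F : ℂ → ℂ, DifferentiableOn ℂ F (Metric.ball 0 (3 / 2)) ∧ ∀ z, ‖z‖ ≤ 1 / 2 →
        ‖F z‖ ≤ K ∧ ‖F z ^ j - p.eval z‖ ≤ K * κ ^ n ∧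
          ‖F z * p.eval z - q.eval z‖ ≤ K * κ ^ n := by
  obtain ⟨K0, hK0, hdb⟩ := hd_dbar j hj
  obtain ⟨B, hB⟩ : ∃ B, B = 2 * C0 := ⟨_, rfl⟩
  have hB1 : 1 ≤ B := by linarith
  obtain ⟨K1, hK1⟩ : ∃ K1, K1 = B ^ (j + 1) + B ^ j := ⟨_, rfl⟩
  have hK11 : 1 ≤ K1 := by
    have h1 : 1 ≤ B ^ (j + 1) := one_le_pow₀ hB1
    have h2 : 1 ≤ B ^ j := one_le_pow₀ hB1
    linarith
  obtain ⟨γ, hγ⟩ : ∃ γ, γ = κ ^ (j + 1) / (2 * 4 ^ j * K1) := ⟨_, rfl⟩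
  have hγ0 : 0 < γ := by rw [hγ]; positivity
  have h4j : (1 : ℝ) ≤ 4 ^ j := one_le_pow₀ (by norm_num)
  have hγm : 2 * 4 ^ j * K1 * γ = κ ^ (j + 1) := by rw [hγ]; field_simp
  have hκj : κ ^ (j + 1) ≤ κ := pow_le_of_le_one hκ.le hκ1.le (by omega)
  have hγK : K1 * γ ≤ 1 / 2 := by
    have : 1 * (K1 * γ) ≤ 4 ^ j * (K1 * γ) := by gcongr
    nlinarith
  have hγ4 : 4 ^ j * (2 * γ) ≤ κ ^ (j + 1) := by
    have : 4 ^ j * (2 * γ) * 1 ≤ 4 ^ j * (2 * γ) * K1 := by gcongr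
    linarith
  have hγκ : 2 * γ ≤ κ := by
    have : 1 * (2 * γ) ≤ 4 ^ j * (2 * γ) := by gcongr
    linarith
  have hγ1 : γ ≤ 1 := by linarith
  obtain ⟨J, hJ⟩ : ∃ J, J = j * (j + 1) := ⟨_, rfl⟩
  have hJ1 : 1 ≤ J := by rw [hJ]; nlinarith
  have hJj : j ≤ J := by rw [hJ]; nlinarith
  obtain ⟨β, hβ⟩ : ∃ β, β = γ ^ J / 8 := ⟨_, rfl⟩
  have hβ0 : 0 < β := by rw [hβ]; positivity
  have hγJ : γ ^ J ≤ γ := pow_le_of_le_one hγ0.le hγ1 (by omega)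
  have hβ8 : β ≤ 1 / 8 := by rw [hβ]; linarith
  have hβκ : β ≤ κ := by rw [hβ]; linarith
  obtain ⟨B2, hB2⟩ : ∃ B2, B2 = B + K0 * B * K1 := ⟨_, rfl⟩
  have hKB : 0 < K0 * B * K1 := by positivity
  have hB20 : 0 < B2 := by rw [hB2]; positivity
  obtain ⟨K4, hK4⟩ : ∃ K4, K4 = j * B2 ^ (j - 1) * (K0 * B * K1) + K1 := ⟨_, rfl⟩
  have hK40 : 0 < K4 := by rw [hK4]; positivity
  refine ⟨β, 2 + B + K4 + K0 * B * K1, hβ0, hβκ, hβ8, by linarith, ?_⟩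
  intro n p q hdeg hp hq hdvd
  have hκn : 0 < κ ^ n := by positivity
  have hR4 : 4 ≤ 1 / (2 * β) := by
    rw [le_div_iff₀ (by positivity)]; linarith
  have hpB : ∀ z : ℂ, ‖z‖ ≤ 1 / (2 * β) → ‖p.eval z‖ ≤ B := fun z hz => by
    rw [hB]; exact hd_poly_bd p (by linarith) hβ0 hp z hz
  have hqB : ∀ z : ℂ, ‖z‖ ≤ 1 / (2 * β) → ‖q.eval z‖ ≤ B := fun z hz => by
    rw [hB]; exact hd_poly_bd q (by linarith) hβ0 hq z hz
  obtain ⟨τ, hτ⟩ : ∃ τ, τ = K1 * γ ^ (n + 1) := ⟨_, rfl⟩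
  have hτ0 : 0 < τ := by rw [hτ]; positivity
  have hτγ : τ ≤ γ ^ n := by
    rw [hτ, pow_succ]
    have : 0 < γ ^ n := by positivity
    nlinarith
  have hτ1 : τ ≤ 1 := hτγ.trans (pow_le_one₀ hγ0.le hγ1)
  have hτκ : τ ≤ κ ^ n := hτγ.trans (pow_le_pow_left₀ hγ0.le (by linarith) n)
  have hW : ∀ ζ : ℂ, ‖ζ‖ ≤ 4 → ‖p.eval ζ ^ (j + 1) - q.eval ζ ^ j‖ ≤ τ ^ (j * (j + 1)) := by
    obtain ⟨w, hw⟩ := hdvd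
    have hwe : ∀ ζ, p.eval ζ ^ (j + 1) - q.eval ζ ^ j = ζ ^ (n + 1) * w.eval ζ := by
      intro ζ
      simpa using congrArg (Polynomial.eval ζ) hw
    have hwb : ∀ ζ : ℂ, ‖ζ‖ ≤ 1 / (2 * β) → ‖w.eval ζ‖ ≤ K1 * (2 * β) ^ (n + 1) := by
      refine hd_maxmod (by positivity) w.differentiable ?_
      intro ζ hζ
      have h1 : ‖ζ ^ (n + 1) * w.eval ζ‖ ≤ K1 := by
        rw [← hwe, hK1]
        refine (norm_sub_le _ _).trans ?_
        rw [norm_pow, norm_pow]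
        gcongr
        · exact hpB ζ hζ.le
        · exact hqB ζ hζ.le
      rw [norm_mul, norm_pow, hζ, one_div, inv_pow, inv_mul_le_iff₀ (by positivity)] at h1
      linarith
    intro ζ hζ
    rw [hwe, norm_mul, norm_pow, ← hJ]
    calc ‖ζ‖ ^ (n + 1) * ‖w.eval ζ‖ ≤ 4 ^ (n + 1) * (K1 * (2 * β) ^ (n + 1)) := by
          gcongr
          exact hwb ζ (by linarith)
      _ = K1 * (γ ^ (n + 1)) ^ J := by
          rw [mul_left_comm, ← mul_pow, ← pow_mul, mul_comm (n + 1), pow_mul]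
          congr 2
          rw [hβ]; ring
      _ ≤ K1 ^ J * (γ ^ (n + 1)) ^ J := by
          gcongr
          exact le_self_pow₀ hK11 (by omega)
      _ = τ ^ J := by rw [hτ, mul_pow]
  by_cases hcase : ∀ z, ‖z‖ ≤ 1 → ‖p.eval z‖ ≤ κ ^ n
  · refine ⟨fun _ => 0, differentiableOn_const _, ?_⟩
    intro z hz
    have hpz := hcase z (by linarith)
    refine ⟨by simp; linarith, ?_, ?_⟩
    · simp only [zero_pow (show j ≠ 0 by omega), zero_sub, norm_neg]
      nlinarith
    · simp only [zero_mul, zero_sub, norm_neg]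
      have h1 : ‖q.eval z‖ ^ j ≤ (2 * κ ^ n) ^ j := by
        have h2 := hW z (by linarith)
        have h3 : q.eval z ^ j = p.eval z ^ (j + 1) - (p.eval z ^ (j + 1) - q.eval z ^ j) := by ring
        rw [← norm_pow, h3]
        refine (norm_sub_le _ _).trans ?_
        have h4 : ‖p.eval z ^ (j + 1)‖ ≤ (κ ^ n) ^ j := by
          rw [norm_pow]
          calc ‖p.eval z‖ ^ (j + 1) ≤ (κ ^ n) ^ (j + 1) := by gcongr
            _ ≤ (κ ^ n) ^ j := pow_le_pow_of_le_one hκn.le (pow_le_one₀ hκ.le hκ1.le) (by omega)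
        have h5 : τ ^ (j * (j + 1)) ≤ (κ ^ n) ^ j := by
          rw [← hJ]
          calc τ ^ J ≤ τ ^ j := pow_le_pow_of_le_one hτ0.le hτ1 hJj
            _ ≤ _ := by gcongr
        have h6 : (2 : ℝ) ≤ 2 ^ j := le_self_pow₀ (by norm_num) (by omega)
        rw [mul_pow]
        have : 0 < (κ ^ n) ^ j := by positivity
        nlinarith
      have h7 := (pow_le_pow_iff_left₀ (norm_nonneg _) (by positivity) (by omega)).mp h1
      nlinarith
  · push Not at hcase
    obtain ⟨z0, hz0, hpz0⟩ := hcase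
    have hp0 : p ≠ 0 := by
      rintro rfl
      simp at hpz0
      linarith
    obtain ⟨F, hFd, hF⟩ := hdb B hB1 n p q hp0 hdeg (fun ζ hζ => hpB ζ (hζ.trans hR4))
      (fun ζ hζ => hqB ζ (hζ.trans hR4)) τ hτ0 hτ1 hW
    have hn2 : ((n : ℝ) + 1) ≤ 2 ^ n := by
      have := Nat.lt_two_pow_self (n := n)
      exact_mod_cast this
    have hFp : ∀ z, ‖z‖ ≤ 1 → ‖F z * p.eval z - q.eval z‖ ≤ K0 * B * K1 * (2 * γ) ^ n := by
      intro z hz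
      refine (hF z hz).trans ?_
      calc K0 * B * (n + 1) * τ ≤ K0 * B * 2 ^ n * (K1 * γ ^ n) := by
            gcongr
            rw [hτ]
            gcongr K1 * ?_
            exact pow_le_pow_of_le_one hγ0.le hγ1 (by omega)
        _ = _ := by rw [mul_pow]; ring
    have h2γ1 : (2 * γ) ^ n ≤ 1 := pow_le_one₀ (by positivity) (by linarith)
    have hτ2 : τ ≤ K1 * (2 * γ) ^ n := by
      rw [hτ]
      gcongr
      calc γ ^ (n + 1) ≤ γ ^ n := pow_le_pow_of_le_one hγ0.le hγ1 (by omega)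
        _ ≤ _ := by gcongr; linarith
    have hd2 : ∀ z, ‖z‖ ≤ 1 → ‖(p ^ j).eval z * (F z ^ j - p.eval z)‖ ≤ K4 * (2 * γ) ^ n := by
      intro z hz
      have e : (p ^ j).eval z * (F z ^ j - p.eval z) = ((F z * p.eval z) ^ j - q.eval z ^ j) -
          (p.eval z ^ (j + 1) - q.eval z ^ j) := by
        rw [Polynomial.eval_pow]; ring
      rw [e]
      refine (norm_sub_le _ _).trans ?_
      have h1 := hFp z hz
      have hqz := hqB z (by linarith)
      have h2 : ‖F z * p.eval z‖ ≤ B2 := by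
        have h3 : F z * p.eval z = (F z * p.eval z - q.eval z) + q.eval z := by ring
        rw [h3]
        refine (norm_add_le _ _).trans ?_
        rw [hB2]
        nlinarith
      have h3 := hd_pow_sub _ _ B2 j h2 (show ‖q.eval z‖ ≤ B2 by linarith)
      have h4 := hW z (by linarith)
      have h5 : τ ^ (j * (j + 1)) ≤ τ := pow_le_of_le_one hτ0.le hτ1 (by rw [← hJ]; omega)
      have h6 : (j : ℝ) * B2 ^ (j - 1) * ‖F z * p.eval z - q.eval z‖ ≤
        j * B2 ^ (j - 1) * (K0 * B * K1 * (2 * γ) ^ n) := by gcongr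
      rw [hK4]
      linarith
    have hV : ∀ z, ‖z‖ ≤ 1 / 2 → ‖F z ^ j - p.eval z‖ ≤ K4 * κ ^ n := by
      intro z hz
      have h1 := hd_div (p ^ j) (j * n) (by
        rw [Polynomial.natDegree_pow]; gcongr) (fun z => F z ^ j - p.eval z)
        ((hFd.pow j).sub p.differentiable.differentiableOn) (by positivity)
        (fun z hz => hd2 z hz.le) z0 z hz0 hz
      have h2 : (κ ^ n) ^ j ≤ ‖(p ^ j).eval z0‖ := by
        rw [Polynomial.eval_pow, norm_pow]; gcongr
      have h3 : ‖F z ^ j - p.eval z‖ * (κ ^ n) ^ j ≤ K4 * κ ^ n * (κ ^ n) ^ j := by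
        calc ‖F z ^ j - p.eval z‖ * (κ ^ n) ^ j
            ≤ ‖F z ^ j - p.eval z‖ * ‖(p ^ j).eval z0‖ := by gcongr
          _ ≤ 4 ^ (j * n) * (K4 * (2 * γ) ^ n) := h1
          _ = K4 * (4 ^ j * (2 * γ)) ^ n := by rw [mul_pow, pow_mul]; ring
          _ ≤ K4 * (κ ^ (j + 1)) ^ n := by gcongr
          _ = _ := by ring
      exact le_of_mul_le_mul_right h3 (by positivity)
    refine ⟨F, hFd, fun z hz => ⟨?_, ?_, ?_⟩⟩
    · have h1 := hV z hz
      have h2 : ‖F z‖ ^ j ≤ B + K4 := by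
        have h3 : F z ^ j = (F z ^ j - p.eval z) + p.eval z := by ring
        rw [← norm_pow, h3]
        refine (norm_add_le _ _).trans ?_
        have h4 := hpB z (by linarith)
        have h5 : κ ^ n ≤ 1 := pow_le_one₀ hκ.le hκ1.le
        nlinarith
      rcases le_or_gt ‖F z‖ 1 with h6 | h6
      · linarith
      · have : ‖F z‖ ≤ ‖F z‖ ^ j := le_self_pow₀ h6.le (by omega)
        linarith
    · refine (hV z hz).trans ?_
      gcongr
      linarith
    · refine (hFp z (by linarith)).trans ?_
      gcongr
      linarith

lemma hd_alg (j : ℕ) (hj : 1 ≤ j) (K : ℝ) (hK : 1 ≤ K) (a b p p' q q' : ℂ) (e s : ℝ)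
    (h1 : ‖a ^ j - p‖ ≤ e) (h2 : ‖a * p - q‖ ≤ e) (h3 : ‖b ^ j - p'‖ ≤ e) (h4 : ‖b * p' - q'‖ ≤ e)
    (h5 : ‖p - p'‖ ≤ e) (h6 : ‖q - q'‖ ≤ e) (hb : ‖b‖ ≤ K) (he : e ≤ K * s ^ (j + 1))
    (hs : 0 < s) (hs1 : s ≤ 1) : ‖a - b‖ ≤ ((3 + K) * K + 2 + 3 * K) * s := by
  have he0 : 0 ≤ e := (norm_nonneg _).trans h1
  have hsj : 0 < s ^ j := by positivity
  rcases le_or_gt (s ^ j) ‖p‖ with hp | hp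
  · have e1 : (a - b) * p = (a * p - q) + (q - q') - (b * p' - q') - b * (p - p') := by ring
    have h7 : ‖(a - b) * p‖ ≤ e + e + e + K * e := by
      rw [e1]
      refine (norm_sub_le _ _).trans (add_le_add ((norm_sub_le _ _).trans
        (add_le_add ((norm_add_le _ _).trans (add_le_add h2 h6)) h4)) ?_)
      rw [norm_mul]
      gcongr
    rw [norm_mul] at h7
    have h8 : ‖a - b‖ * s ^ j ≤ (3 + K) * K * s * s ^ j := by
      calc ‖a - b‖ * s ^ j ≤ ‖a - b‖ * ‖p‖ := by gcongr
        _ ≤ (3 + K) * e := by linarith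
        _ ≤ (3 + K) * (K * s ^ (j + 1)) := by gcongr
        _ = _ := by ring
    have h9 := le_of_mul_le_mul_right h8 hsj
    have : 0 ≤ (2 + 3 * K) * s := by positivity
    linarith
  · have hKs : K * s ^ (j + 1) ≤ K * s ^ j := by
      gcongr 1
      exact pow_le_pow_of_le_one hs.le hs1 (by omega)
    have key : ∀ (x : ℂ) (L : ℝ), 1 ≤ L → ‖x‖ ^ j ≤ L * s ^ j → ‖x‖ ≤ L * s := by
      intro x L hL hx
      refine (pow_le_pow_iff_left₀ (norm_nonneg _) (by positivity) (show j ≠ 0 by omega)).mp ?_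
      rw [mul_pow]
      refine hx.trans ?_
      gcongr
      exact le_self_pow₀ hL (by omega)
    have ha : ‖a‖ ≤ (1 + K) * s := by
      apply key _ _ (by linarith)
      rw [← norm_pow]
      have : a ^ j = (a ^ j - p) + p := by ring
      rw [this]
      refine (norm_add_le _ _).trans ?_
      linarith
    have hb : ‖b‖ ≤ (1 + 2 * K) * s := by
      apply key _ _ (by linarith)
      rw [← norm_pow]
      have : b ^ j = (b ^ j - p') - (p - p') + p := by ring
      rw [this]
      refine (norm_add_le _ _).trans ?_
      have := norm_sub_le (b ^ j - p') (p - p')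
      linarith
    have h10 := norm_sub_le a b
    have : 0 ≤ ((3 + K) * K) * s := by positivity
    linarith

lemma hd_dvd (W : Polynomial ℂ) (N : ℕ) (L r : ℝ) (hr : 0 < r)
    (h : ∀ x : ℝ, 0 < x → x ≤ r → ‖W.eval (x : ℂ)‖ ≤ L * x ^ N) : Polynomial.X ^ N ∣ W := by
  by_contra hcon
  have hW0 : W ≠ 0 := by rintro rfl; exact hcon (dvd_zero _)
  set d := W.natTrailingDegree with hd
  have hdN : d < N := by
    by_contra hle
    push Not at hle
    apply hcon
    rw [Polynomial.X_pow_dvd_iff]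
    intro i hi
    exact Polynomial.coeff_eq_zero_of_lt_natTrailingDegree (by omega)
  obtain ⟨V, hV⟩ : Polynomial.X ^ d ∣ W := by
    rw [Polynomial.X_pow_dvd_iff]
    intro i hi
    exact Polynomial.coeff_eq_zero_of_lt_natTrailingDegree hi
  have hV0 : V.eval 0 ≠ 0 := by
    have h1 : W.coeff d ≠ 0 := by
      have := Polynomial.trailingCoeff_nonzero_iff_nonzero.mpr hW0
      exact this
    rw [hV, Polynomial.coeff_X_pow_mul', if_pos le_rfl, Nat.sub_self] at h1
    rwa [← Polynomial.coeff_zero_eq_eval_zero]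
  apply hV0
  have t1 : Tendsto (fun x : ℝ => ‖V.eval (x : ℂ)‖) (nhdsWithin 0 (Ioi 0)) (nhds ‖V.eval 0‖) := by
    have : Continuous (fun x : ℝ => ‖V.eval (x : ℂ)‖) :=
      (V.continuous.comp Complex.continuous_ofReal).norm
    have h2 := this.tendsto 0
    simp only [Complex.ofReal_zero] at h2
    exact h2.mono_left nhdsWithin_le_nhds
  have t2 : Tendsto (fun x : ℝ => L * x ^ (N - d)) (nhdsWithin 0 (Ioi 0)) (nhds 0) := by
    have : Continuous (fun x : ℝ => L * x ^ (N - d)) := by fun_prop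
    have h2 := this.tendsto 0
    simp only [zero_pow (show N - d ≠ 0 by omega), mul_zero] at h2
    exact h2.mono_left nhdsWithin_le_nhds
  have : ‖V.eval 0‖ ≤ 0 := by
    refine le_of_tendsto_of_tendsto t1 t2 ?_
    filter_upwards [Ioc_mem_nhdsGT hr] with x hx
    have h3 := h x hx.1 hx.2
    have hx0 : 0 < x := hx.1
    rw [hV, Polynomial.eval_mul, norm_mul, Polynomial.eval_pow, Polynomial.eval_X, norm_pow,
      Complex.norm_real, Real.norm_of_nonneg hx.1.le] at h3
    have e : x ^ N = x ^ d * x ^ (N - d) := by rw [← pow_add]; congr 1; omega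
    rw [e] at h3
    have h4 : x ^ d * ‖V.eval (x : ℂ)‖ ≤ x ^ d * (L * x ^ (N - d)) := by linarith
    exact le_of_mul_le_mul_left h4 (by positivity)
  exact norm_le_zero_iff.mp this

/-- Taylor polynomial in the rescaled variable -/
def hdP (a : ℕ → ℂ) (n : ℕ) (ρ : ℝ) : Polynomial ℂ :=
  ∑ k ∈ Finset.range (n + 1), Polynomial.C (a k * (ρ : ℂ) ^ k) * Polynomial.X ^ k

lemma hdP_eval (a : ℕ → ℂ) (n : ℕ) (ρ : ℝ) (z : ℂ) :
    (hdP a n ρ).eval z = ∑ k ∈ Finset.range (n + 1), a k * (ρ * z) ^ k := by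
  unfold hdP
  rw [Polynomial.eval_finsetSum]
  apply Finset.sum_congr rfl
  intro k _
  simp [mul_pow, mul_assoc]

lemma hdP_coeff (a : ℕ → ℂ) (n : ℕ) (ρ : ℝ) (k : ℕ) :
    (hdP a n ρ).coeff k = if k < n + 1 then a k * (ρ : ℂ) ^ k else 0 := by
  unfold hdP
  rw [Polynomial.finsetSum_coeff]
  simp only [Polynomial.coeff_C_mul_X_pow]
  simp

lemma hdP_deg (a : ℕ → ℂ) (n : ℕ) (ρ : ℝ) : (hdP a n ρ).natDegree ≤ n := by
  rw [Polynomial.natDegree_le_iff_coeff_eq_zero]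
  intro k hk
  rw [hdP_coeff, if_neg (by omega)]

/-- the hypothesis on one function -/
structure HdTay (m : ℕ → ℝ) (C0 σ : ℝ) (g : ℝ → ℂ) (a : ℕ → ℂ) (r : ℝ) : Prop where
  co : ∀ k, ‖a k‖ ≤ C0 * σ ^ k * m k
  rem : ∀ n : ℕ, ∀ t : ℝ, 0 ≤ t → t ≤ r →
    ‖g t - ∑ k ∈ Finset.range (n + 1), a k * (t : ℂ) ^ k‖ ≤ C0 * σ ^ (n + 1) * m (n + 1) * t ^ (n + 1)

lemma HdTay.coeff_le {m Λ : ℕ → ℝ} {C A C0 σ r β : ℝ} {g : ℝ → ℂ} {a : ℕ → ℂ}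
    (hs : HdSeq m Λ C A) (ht : HdTay m C0 σ g a r) (hC0 : 1 ≤ C0) (hσ : 0 < σ)
    {ρ : ℝ} (hρ : 0 < ρ) {n : ℕ} (hn : 1 ≤ n) (hρβ : σ * (C * Λ n) * ρ ≤ β) (k : ℕ) (hk : k ≤ n + 1) :
    C0 * σ ^ k * m k * ρ ^ k ≤ C0 * β ^ k := by
  have hΛ := hs.Lpos n
  have hC : 0 < C := by linarith [hs.C1]
  calc C0 * σ ^ k * m k * ρ ^ k ≤ C0 * σ ^ k * (C * Λ n) ^ k * ρ ^ k := by
        gcongr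
        exact hs.mle n hn k hk
    _ = C0 * (σ * (C * Λ n) * ρ) ^ k := by rw [mul_pow, mul_pow]; ring
    _ ≤ _ := by gcongr

lemma hd_dvd2 {m Λ : ℕ → ℝ} {C A C0 σ r β : ℝ} {f : ℝ → ℂ} {a b : ℕ → ℂ} (j : ℕ)
    (hs : HdSeq m Λ C A) (hC0 : 1 ≤ C0) (hσ : 0 < σ) (hr : 0 < r) (hβ0 : 0 < β) (hβ8 : β ≤ 1 / 8)
    (ha : HdTay m C0 σ (fun t => f t ^ j) a r) (hb : HdTay m C0 σ (fun t => f t ^ (j + 1)) b r)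
    {ρ : ℝ} (hρ : 0 < ρ) {n : ℕ} (hn : 1 ≤ n) (hρβ : σ * (C * Λ n) * ρ ≤ β) :
    (∀ k, ‖(hdP a n ρ).coeff k‖ ≤ C0 * β ^ k) ∧ (∀ k, ‖(hdP b n ρ).coeff k‖ ≤ C0 * β ^ k) ∧
    Polynomial.X ^ (n + 1) ∣ hdP a n ρ ^ (j + 1) - hdP b n ρ ^ j := by
  have hco : ∀ (g : ℝ → ℂ) (a : ℕ → ℂ), HdTay m C0 σ g a r →
      ∀ k, ‖(hdP a n ρ).coeff k‖ ≤ C0 * β ^ k := by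
    intro g a ha k
    rw [hdP_coeff]
    split_ifs with hk
    · rw [norm_mul, norm_pow, Complex.norm_real, Real.norm_of_nonneg hρ.le]
      refine le_trans ?_ (ha.coeff_le hs hC0 hσ hρ hn hρβ k (by omega))
      gcongr
      exact ha.co k
    · simp; positivity
  refine ⟨hco _ a ha, hco _ b hb, ?_⟩
  have hrem : ∀ (g : ℝ → ℂ) (a : ℕ → ℂ), HdTay m C0 σ g a r → ∀ x : ℝ, 0 < x → x ≤ r / ρ → x ≤ 1 →
      ‖g (ρ * x) - (hdP a n ρ).eval (x : ℂ)‖ ≤ C0 * x ^ (n + 1) ∧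
      ‖(hdP a n ρ).eval (x : ℂ)‖ ≤ 3 * C0 ∧ ‖g (ρ * x)‖ ≤ 3 * C0 := by
    intro g a ha x hx hxr hx1
    have h1 := ha.rem n (ρ * x) (by positivity) (by rw [le_div_iff₀ hρ] at hxr; linarith)
    rw [hdP_eval]
    have h2 := ha.coeff_le hs hC0 hσ hρ hn hρβ (n + 1) le_rfl
    have hxn : x ^ (n + 1) ≤ 1 := pow_le_one₀ hx.le hx1
    have hβn : β ^ (n + 1) ≤ 1 := pow_le_one₀ hβ0.le (by linarith)
    have hx0 : 0 < x ^ (n + 1) := by positivity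
    have h3 : ‖g (ρ * x) - ∑ k ∈ Finset.range (n + 1), a k * ((ρ : ℂ) * (x : ℂ)) ^ k‖
        ≤ C0 * x ^ (n + 1) := by
      push_cast at h1
      refine h1.trans ?_
      rw [mul_pow ρ x, ← mul_assoc]
      gcongr
      refine h2.trans ?_
      nlinarith
    have h4 : ‖∑ k ∈ Finset.range (n + 1), a k * ((ρ : ℂ) * (x : ℂ)) ^ k‖ ≤ 2 * C0 := by
      rw [← hdP_eval]
      refine hd_poly_bd _ (by linarith) hβ0 (hco g a ha) _ ?_
      rw [Complex.norm_real, Real.norm_of_nonneg hx.le, le_div_iff₀ (by positivity)]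
      nlinarith
    refine ⟨h3, by linarith, ?_⟩
    have e : g (ρ * x) = (g (ρ * x) - ∑ k ∈ Finset.range (n + 1), a k * ((ρ : ℂ) * (x : ℂ)) ^ k) +
      ∑ k ∈ Finset.range (n + 1), a k * ((ρ : ℂ) * (x : ℂ)) ^ k := by ring
    rw [e]
    refine (norm_add_le _ _).trans ?_
    nlinarith
  refine hd_dvd _ (n + 1) (((j + 1 : ℕ) : ℝ) * (3 * C0) ^ (j + 1 - 1) * C0 +
    (j : ℝ) * (3 * C0) ^ (j - 1) * C0) (min (r / ρ) 1)
    (lt_min (by positivity) one_pos) ?_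
  intro x hx hxr
  obtain ⟨a1, a2, a3⟩ := hrem _ a ha x hx (hxr.trans (min_le_left _ _)) (hxr.trans (min_le_right _ _))
  obtain ⟨b1, b2, b3⟩ := hrem _ b hb x hx (hxr.trans (min_le_left _ _)) (hxr.trans (min_le_right _ _))
  rw [Polynomial.eval_sub, Polynomial.eval_pow, Polynomial.eval_pow]
  set p := (hdP a n ρ).eval (x : ℂ)
  set q := (hdP b n ρ).eval (x : ℂ)
  set y := f (ρ * x)
  have e : p ^ (j + 1) - q ^ j = ((y ^ (j + 1)) ^ j - q ^ j) - ((y ^ j) ^ (j + 1) - p ^ (j + 1)) := by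
    ring
  rw [e]
  have h1 := hd_pow_sub _ _ _ j b3 b2
  have h2 := hd_pow_sub _ _ _ (j + 1) a3 a2
  refine (norm_sub_le _ _).trans ((add_le_add h1 h2).trans ?_)
  calc _ ≤ (j : ℝ) * (3 * C0) ^ (j - 1) * (C0 * x ^ (n + 1)) +
        ((j + 1 : ℕ) : ℝ) * (3 * C0) ^ (j + 1 - 1) * (C0 * x ^ (n + 1)) := by gcongr
    _ = _ := by ring

theorem hd_G {m Λ : ℕ → ℝ} {C A : ℝ} (hs : HdSeq m Λ C A) (j : ℕ) (hj : 1 ≤ j) (C0 σ κ : ℝ)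
    (hC0 : 1 ≤ C0) (hσ : 0 < σ) (hκ : 0 < κ) (hκ1 : κ < 1) :
    ∃ c K : ℝ, 0 < c ∧ 1 ≤ K ∧ ∀ (r : ℝ) (f : ℝ → ℂ) (a b : ℕ → ℂ), 0 < r →
      HdTay m C0 σ (fun t => f t ^ j) a r → HdTay m C0 σ (fun t => f t ^ (j + 1)) b r →
      ∃ G : ℕ → ℂ → ℂ, ∀ n, 1 ≤ n →
        DifferentiableOn ℂ (G n) (Metric.ball 0 (2 * (c / Λ n))) ∧
        DifferentiableOn ℂ (G (n + 1)) (Metric.ball 0 (2 * (c / Λ n))) ∧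
        (∀ z, ‖z‖ ≤ c / Λ n → ‖G n z‖ ≤ K ∧ ‖G (n + 1) z - G n z‖ ≤ K * κ ^ n) ∧
        (∀ t : ℝ, 0 ≤ t → t ≤ r → t ≤ c / Λ n → ‖f t - G n t‖ ≤ K * κ ^ n) := by
  obtain ⟨κp, hκp⟩ : ∃ κp, κp = κ ^ (j + 1) := ⟨_, rfl⟩
  have hκp0 : 0 < κp := by rw [hκp]; positivity
  have hκp1 : κp < 1 := by rw [hκp]; exact pow_lt_one₀ hκ.le hκ1 (by omega)
  obtain ⟨β, K, hβ0, hβκ, hβ8, hK, hloc⟩ := hd_local j hj C0 κp hC0 hκp0 hκp1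
  have hC1 := hs.C1
  have hC : 0 < C := by linarith
  obtain ⟨K2, hK2⟩ : ∃ K2, K2 = K + C0 := ⟨_, rfl⟩
  refine ⟨β / (2 * C ^ 2 * σ), (3 + K2) * K2 + 2 + 3 * K2, by positivity, by nlinarith, ?_⟩
  intro r f a b hr ha hb
  obtain ⟨ρ, hρd⟩ : ∃ ρ : ℕ → ℝ, ∀ n, ρ n = β / (σ * (C * Λ n)) := ⟨_, fun _ => rfl⟩
  have hL := hs.Lpos
  have hρ : ∀ n, 0 < ρ n := fun n => by rw [hρd]; have := hL n; positivity
  have hρβ : ∀ n, σ * (C * Λ n) * ρ n = β := fun n => by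
    rw [hρd]; have := hL n; field_simp
  have hcρ : ∀ n, β / (2 * C ^ 2 * σ) / Λ n = ρ n / (2 * C) := by
    intro n; rw [hρd]; have := hL n; field_simp
  have hρ1 : ∀ n, ρ n / (2 * C) ≤ ρ n / 2 := by
    intro n
    have := hρ n
    gcongr
    linarith
  have hρ2 : ∀ n, 1 ≤ n → ρ n / (2 * C) ≤ ρ (n + 1) / 2 := by
    intro n hn
    have h1 := hs.Lsucc n hn
    have h2 : ρ n / C ≤ ρ (n + 1) := by
      rw [hρd, hρd, div_div]
      have := hL n
      have := hL (n + 1)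
      refine div_le_div_of_nonneg_left hβ0.le (by positivity) ?_
      calc σ * (C * Λ (n + 1)) ≤ σ * (C * (C * Λ n)) := by gcongr
        _ = σ * (C * Λ n) * C := by ring
    calc ρ n / (2 * C) = ρ n / C / 2 := by field_simp
      _ ≤ _ := by gcongr
  have hex : ∀ n, ∃ F : ℂ → ℂ, 1 ≤ n → (DifferentiableOn ℂ F (Metric.ball 0 (3 / 2)) ∧
      ∀ z, ‖z‖ ≤ 1 / 2 → ‖F z‖ ≤ K ∧ ‖F z ^ j - (hdP a n (ρ n)).eval z‖ ≤ K * κp ^ n ∧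
          ‖F z * (hdP a n (ρ n)).eval z - (hdP b n (ρ n)).eval z‖ ≤ K * κp ^ n) := by
    intro n
    by_cases hn : 1 ≤ n
    · obtain ⟨h1, h2, h3⟩ := hd_dvd2 j hs hC0 hσ hr hβ0 hβ8 ha hb (hρ n) hn (hρβ n).le
      obtain ⟨F, hF⟩ := hloc n _ _ (hdP_deg a n (ρ n)) h1 h2 h3
      exact ⟨F, fun _ => hF⟩
    · exact ⟨0, fun h => absurd h hn⟩
  choose F hF using hex
  obtain ⟨P, hP⟩ : ∃ P : (ℕ → ℂ) → ℕ → ℂ → ℂ, ∀ a n z, P a n z =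
    ∑ k ∈ Finset.range (n + 1), a k * z ^ k := ⟨_, fun _ _ _ => rfl⟩
  have hGP : ∀ n, 1 ≤ n → ∀ z : ℂ, ‖z‖ ≤ ρ n / 2 → ‖F n (z / ρ n)‖ ≤ K ∧
      ‖F n (z / ρ n) ^ j - P a n z‖ ≤ K * κp ^ n ∧
      ‖F n (z / ρ n) * P a n z - P b n z‖ ≤ K * κp ^ n := by
    intro n hn z hz
    have h0 := hρ n
    have h1 := (hF n hn).2 (z / ρ n) (by
      rw [norm_div, Complex.norm_real, Real.norm_of_nonneg h0.le, div_le_iff₀ h0]; linarith)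
    rw [hdP_eval, hdP_eval] at h1
    have h2 : (ρ n : ℂ) * (z / ρ n) = z := by
      have : (ρ n : ℂ) ≠ 0 := by exact_mod_cast h0.ne'
      field_simp
    rw [h2] at h1
    rw [hP, hP]
    exact h1
  have hdF : ∀ n, 1 ≤ n → DifferentiableOn ℂ (fun z => F n (z / ρ n)) (Metric.ball 0 (ρ n)) := by
    intro n hn
    have h0 := hρ n
    refine (hF n hn).1.comp (by fun_prop) ?_
    intro z hz
    simp only [Metric.mem_ball, dist_zero_right] at hz ⊢
    rw [norm_div, Complex.norm_real, Real.norm_of_nonneg h0.le, div_lt_iff₀ h0]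
    linarith
  have hκn : ∀ n, (κ ^ n) ^ (j + 1) = κp ^ n := fun n => by rw [hκp, ← pow_mul, ← pow_mul, mul_comm]
  have hβn : ∀ n, β ^ (n + 1) ≤ κp ^ n := fun n => by
    calc β ^ (n + 1) ≤ β ^ n := pow_le_pow_of_le_one hβ0.le (by linarith) (by omega)
      _ ≤ _ := by gcongr
  have hs1 : ∀ n, κ ^ n ≤ 1 := fun n => pow_le_one₀ hκ.le hκ1.le
  have hκpn : ∀ n, 0 < κp ^ n := fun n => by positivity
  have hnext : ∀ (g : ℝ → ℂ) (a : ℕ → ℂ), HdTay m C0 σ g a r → ∀ n, 1 ≤ n → ∀ x : ℝ, 0 ≤ x →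
      x ≤ ρ n → C0 * σ ^ (n + 1) * m (n + 1) * x ^ (n + 1) ≤ K2 * κp ^ n := by
    intro g a ha n hn x hx hxρ
    have h1 := ha.coeff_le hs hC0 hσ (hρ n) hn (hρβ n).le (n + 1) le_rfl
    have := hs.mpos (n + 1)
    calc C0 * σ ^ (n + 1) * m (n + 1) * x ^ (n + 1)
        ≤ C0 * σ ^ (n + 1) * m (n + 1) * ρ n ^ (n + 1) := by gcongr
      _ ≤ C0 * β ^ (n + 1) := h1
      _ ≤ C0 * κp ^ n := by gcongr; exact hβn n
      _ ≤ _ := by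
        rw [hK2]
        have := hκpn n
        nlinarith
  have hKK2 : ∀ n, K * κp ^ n ≤ K2 * κp ^ n := fun n => by
    have := hκpn n
    rw [hK2]
    nlinarith
  refine ⟨fun n z => F n (z / ρ n), ?_⟩
  intro n hn
  have h0 := hρ n
  rw [hcρ n]
  have hr1 := hρ1 n
  have hr2 := hρ2 n hn
  refine ⟨(hdF n hn).mono (Metric.ball_subset_ball (by linarith)),
    (hdF (n + 1) (by omega)).mono (Metric.ball_subset_ball (by linarith)), ?_, ?_⟩
  · intro z hz
    obtain ⟨g1, g2, g3⟩ := hGP n hn z (hz.trans hr1)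
    obtain ⟨k1, k2, k3⟩ := hGP (n + 1) (by omega) z (hz.trans hr2)
    refine ⟨by nlinarith, ?_⟩
    have hκs : κp ^ (n + 1) ≤ κp ^ n := pow_le_pow_of_le_one hκp0.le hκp1.le (by omega)
    have hKs : K * κp ^ (n + 1) ≤ K2 * κp ^ n := (by gcongr : K * κp ^ (n + 1) ≤ K * κp ^ n).trans (hKK2 n)
    have hdiff : ∀ (g : ℝ → ℂ) (a : ℕ → ℂ), HdTay m C0 σ g a r →
        ‖P a (n + 1) z - P a n z‖ ≤ K2 * κp ^ n := by
      intro g a ha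
      rw [hP, hP, Finset.sum_range_succ, add_sub_cancel_left, norm_mul, norm_pow]
      refine le_trans ?_ (hnext g a ha n hn ‖z‖ (norm_nonneg _) (by linarith))
      gcongr
      exact ha.co _
    exact hd_alg j hj K2 (by linarith) _ _ _ _ _ _ (K2 * κp ^ n) (κ ^ n) (k2.trans hKs) (k3.trans hKs)
      (g2.trans (hKK2 n)) (g3.trans (hKK2 n)) (hdiff _ a ha) (hdiff _ b hb) (by linarith)
      (by rw [hκn]) (by positivity) (hs1 n)
  · intro t ht htr htρ
    obtain ⟨g1, g2, g3⟩ := hGP n hn t (by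
      rw [Complex.norm_real, Real.norm_of_nonneg ht]; linarith)
    have hdiff : ∀ (g : ℝ → ℂ) (a : ℕ → ℂ), HdTay m C0 σ g a r →
        ‖g t - P a n t‖ ≤ K2 * κp ^ n := by
      intro g a ha
      rw [hP]
      exact (ha.rem n t ht htr).trans (hnext g a ha n hn t ht (by linarith))
    have h0 : 0 ≤ K2 * κp ^ n := by
      have := hκpn n
      rw [hK2]; positivity
    exact hd_alg j hj K2 (by linarith) (f t) _ (f t ^ j) _ (f t ^ (j + 1)) _ (K2 * κp ^ n) (κ ^ n)
      (by simpa using h0) (by rw [pow_succ, mul_comm, sub_self, norm_zero]; exact h0)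
      (g2.trans (hKK2 n)) (g3.trans (hKK2 n)) (hdiff _ a ha) (hdiff _ b hb) (by linarith)
      (by rw [hκn]) (by positivity) (hs1 n)

/-- `k`-th forward difference at `0` -/
def hdD (k : ℕ) (g : ℕ → ℂ) : ℂ :=
  ∑ l ∈ Finset.range (k + 1), ((-1 : ℂ) ^ (k - l) * (k.choose l : ℂ)) * g l

lemma hdD_fwd (k : ℕ) (g : ℕ → ℂ) : hdD k g = (fwdDiff 1)^[k] g 0 := by
  rw [fwdDiff_iter_eq_sum_shift]
  unfold hdD
  apply Finset.sum_congr rfl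
  intro l _
  simp

lemma hdD_succ (k : ℕ) (g : ℕ → ℂ) : hdD (k + 1) g = hdD k (fun l => g (l + 1)) - hdD k g := by
  rw [hdD_fwd, hdD_fwd, hdD_fwd, Function.iterate_succ_apply', fwdDiff]
  congr 1
  have := fwdDiff_iter_comp_add 1 g 1 k 0
  exact this.symm

lemma hdD_sub (k : ℕ) (g h : ℕ → ℂ) : hdD k (fun l => g l - h l) = hdD k g - hdD k h := by
  unfold hdD
  rw [← Finset.sum_sub_distrib]
  exact Finset.sum_congr rfl fun _ _ => by ring

lemma hdD_norm (k : ℕ) (g : ℕ → ℂ) (B : ℝ) (h : ∀ l ≤ k, ‖g l‖ ≤ B) : ‖hdD k g‖ ≤ 2 ^ k * B := by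
  unfold hdD
  refine (norm_sum_le _ _).trans ?_
  have : ((2 : ℝ) ^ k) = ∑ l ∈ Finset.range (k + 1), (k.choose l : ℝ) := by
    exact_mod_cast (Nat.sum_range_choose k).symm
  rw [this, Finset.sum_mul]
  apply Finset.sum_le_sum
  intro l hl
  rw [Finset.mem_range] at hl
  simp only [norm_mul, norm_pow, norm_neg, norm_one, one_pow, one_mul, Complex.norm_natCast]
  gcongr
  exact h l (by omega)

lemma hdD_inv (k : ℕ) (t : ℂ) : ∀ ζ : ℂ, (∀ l : ℕ, l ≤ k → ζ - l * t ≠ 0) →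
    hdD k (fun l => 1 / (ζ - l * t)) =
      (k.factorial : ℂ) * t ^ k / ∏ l ∈ Finset.range (k + 1), (ζ - l * t) := by
  induction k with
  | zero => intro ζ h; simp [hdD]
  | succ k ih =>
    intro ζ h
    rw [hdD_succ, ih ζ (fun l hl => h l (by omega))]
    have e : (fun l : ℕ => 1 / (ζ - ((l + 1 : ℕ) : ℂ) * t)) = fun l : ℕ => 1 / ((ζ - t) - l * t) := by
      funext l
      push_cast
      congr 1
      ring
    rw [e, ih (ζ - t) (by
      intro l hl
      have := h (l + 1) (by omega)
      push_cast at this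
      intro h0
      apply this
      rw [← h0]; ring)]
    have e2 : ∏ l ∈ Finset.range (k + 1), (ζ - t - l * t) =
        ∏ l ∈ Finset.range (k + 1), (ζ - ((l + 1 : ℕ) : ℂ) * t) := by
      apply Finset.prod_congr rfl
      intro l _
      push_cast
      ring
    rw [e2]
    set Q := ∏ l ∈ Finset.range (k + 1), (ζ - ((l + 1 : ℕ) : ℂ) * t) with hQ
    have hP1 : ∏ l ∈ Finset.range (k + 1 + 1), (ζ - (l : ℂ) * t) = Q * ζ := by
      rw [Finset.prod_range_succ', hQ]
      simp
    have hP2 : ∏ l ∈ Finset.range (k + 1 + 1), (ζ - (l : ℂ) * t) =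
        (∏ l ∈ Finset.range (k + 1), (ζ - (l : ℂ) * t)) * (ζ - ((k + 1 : ℕ) : ℂ) * t) := by
      rw [Finset.prod_range_succ]
    set R := ∏ l ∈ Finset.range (k + 1), (ζ - (l : ℂ) * t) with hR
    have hQ0 : Q ≠ 0 := by
      rw [hQ, Finset.prod_ne_zero_iff]
      intro l hl
      rw [Finset.mem_range] at hl
      exact h (l + 1) (by omega)
    have hR0 : R ≠ 0 := by
      rw [hR, Finset.prod_ne_zero_iff]
      intro l hl
      rw [Finset.mem_range] at hl
      exact h l (by omega)
    have hζ0 : ζ ≠ 0 := by simpa using h 0 (by omega)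
    have hRQ : Q * ζ = R * (ζ - ((k + 1 : ℕ) : ℂ) * t) := by rw [← hP1, hP2]
    rw [hP1, div_sub_div _ _ hQ0 hR0, div_eq_div_iff (by positivity) (by positivity)]
    rw [Nat.factorial_succ]
    push_cast at hRQ ⊢
    have : (k.factorial : ℂ) * t ^ k * R * (Q * ζ) - Q * (k.factorial * t ^ k) * (Q * ζ) =
      (k.factorial : ℂ) * t ^ k * Q * (R * ζ - Q * ζ) := by ring
    rw [sub_mul, this, hRQ]
    ring

lemma hdD_hol (k : ℕ) (t R B : ℝ) (ht : 0 < t) (hR : 0 < R) (hkt : k * t ≤ R / 2) (G : ℂ → ℂ)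
    (hG : DifferentiableOn ℂ G (Metric.ball 0 (2 * R))) (hB : ∀ z, ‖z‖ ≤ R → ‖G z‖ ≤ B) :
    ‖hdD k (fun l => G ((l * t : ℝ) : ℂ))‖ ≤ 2 * B * k.factorial * (2 * t / R) ^ k := by
  have hB0 : 0 ≤ B := (norm_nonneg _).trans (hB 0 (by simpa using hR.le))
  have hcl : Metric.closedBall (0 : ℂ) R ⊆ Metric.ball 0 (2 * R) :=
    Metric.closedBall_subset_ball (by linarith)
  have hlt : ∀ l : ℕ, l ≤ k → (l : ℝ) * t ≤ R / 2 := by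
    intro l hl
    refine le_trans ?_ hkt
    gcongr
  have hlow : ∀ ζ : ℂ, ‖ζ‖ = R → ∀ l : ℕ, l ≤ k → R / 2 ≤ ‖ζ - l * (t : ℂ)‖ := by
    intro ζ hζ l hl
    have h1 := norm_sub_norm_le ζ (l * (t : ℂ))
    rw [norm_mul, Complex.norm_natCast, Complex.norm_real, Real.norm_of_nonneg ht.le] at h1
    have := hlt l hl
    linarith
  have hne : ∀ ζ : ℂ, ‖ζ‖ = R → ∀ l : ℕ, l ≤ k → ζ - l * (t : ℂ) ≠ 0 := by
    intro ζ hζ l hl h0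
    have := hlow ζ hζ l hl
    rw [h0, norm_zero] at this
    linarith
  have hcau : ∀ l : ℕ, l ≤ k → G ((l * t : ℝ) : ℂ) =
      (2 * Real.pi * Complex.I : ℂ)⁻¹ • ∮ ζ in C(0, R), (ζ - ((l * t : ℝ) : ℂ))⁻¹ • G ζ := by
    intro l hl
    symm
    apply DiffContOnCl.two_pi_i_inv_smul_circleIntegral_sub_inv_smul
    · apply DifferentiableOn.diffContOnCl
      rw [closure_ball _ hR.ne']
      exact hG.mono hcl
    · simp only [Metric.mem_ball, dist_zero_right, Complex.norm_real]
      rw [Real.norm_of_nonneg (by positivity)]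
      linarith [hlt l hl]
  have hGc : ContinuousOn G (Metric.sphere 0 R) :=
    (hG.mono (Metric.sphere_subset_closedBall.trans hcl)).continuousOn
  have hcint : ∀ l ∈ Finset.range (k + 1), CircleIntegrable
      (fun ζ => ((-1 : ℂ) ^ (k - l) * (k.choose l : ℂ)) * ((ζ - ((l * t : ℝ) : ℂ))⁻¹ • G ζ)) 0 R := by
    intro l hl
    rw [Finset.mem_range] at hl
    apply ContinuousOn.circleIntegrable hR.le
    apply continuousOn_const.mul
    refine ContinuousOn.fun_smul ?_ hGc
    apply ContinuousOn.inv₀ (by fun_prop)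
    intro ζ hζ
    have := hne ζ (by simpa using hζ) l (by omega)
    push_cast
    exact this
  have hsum : hdD k (fun l => G ((l * t : ℝ) : ℂ)) = (2 * Real.pi * Complex.I : ℂ)⁻¹ •
      ∮ ζ in C(0, R), (hdD k (fun l => 1 / (ζ - l * (t : ℂ)))) * G ζ := by
    have e1 : ∀ ζ, (hdD k (fun l => 1 / (ζ - l * (t : ℂ)))) * G ζ =
      ∑ l ∈ Finset.range (k + 1),
        ((-1 : ℂ) ^ (k - l) * (k.choose l : ℂ)) * ((ζ - ((l * t : ℝ) : ℂ))⁻¹ • G ζ) := by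
      intro ζ
      unfold hdD
      rw [Finset.sum_mul]
      apply Finset.sum_congr rfl
      intro l _
      push_cast
      simp only [smul_eq_mul, one_div]
      ring
    simp only [e1]
    rw [circleIntegral.integral_fun_sum hcint, Finset.smul_sum]
    unfold hdD
    apply Finset.sum_congr rfl
    intro l hl
    rw [Finset.mem_range] at hl
    beta_reduce
    rw [hcau l (by omega), circleIntegral.integral_const_mul]
    simp only [smul_eq_mul]
    ring
  rw [hsum]
  refine (circleIntegral.norm_two_pi_i_inv_smul_integral_le_of_norm_le_const hR.le
    (C := k.factorial * t ^ k / (R / 2) ^ (k + 1) * B) ?_).trans ?_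
  · intro ζ hζ
    have hζ' : ‖ζ‖ = R := by simpa using hζ
    rw [hdD_inv k t ζ (hne ζ hζ'), norm_mul]
    have h2 : (R / 2) ^ (k + 1) ≤ ‖∏ l ∈ Finset.range (k + 1), (ζ - (l : ℂ) * t)‖ := by
      rw [norm_prod]
      have := Finset.prod_le_prod (s := Finset.range (k + 1)) (f := fun _ => R / 2)
        (g := fun l : ℕ => ‖ζ - (l : ℂ) * t‖) (fun _ _ => by positivity) (fun l hl => by
          rw [Finset.mem_range] at hl
          exact hlow ζ hζ' l (by omega))
      rw [Finset.prod_const, Finset.card_range] at this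
      exact this
    gcongr
    · rw [norm_div, norm_mul, norm_pow, Complex.norm_natCast, Complex.norm_real,
        Real.norm_of_nonneg ht.le]
      gcongr
    · exact hB ζ hζ'.le
  · apply le_of_eq
    rw [div_pow, div_pow, mul_pow, pow_succ, pow_succ]
    field_simp

theorem hd_fd {m Λ : ℕ → ℝ} {C A : ℝ} (hs : HdSeq m Λ C A) (j : ℕ) (hj : 1 ≤ j) (C0 σ : ℝ)
    (hC0 : 1 ≤ C0) (hσ : 0 < σ) :
    ∃ D S : ℝ, 0 < D ∧ 0 < S ∧ ∀ (r : ℝ), 0 < r → ∀ k : ℕ, ∃ T : ℝ, 0 < T ∧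
      ∀ (f : ℝ → ℂ) (a b : ℕ → ℂ),
      HdTay m C0 σ (fun t => f t ^ j) a r → HdTay m C0 σ (fun t => f t ^ (j + 1)) b r →
      ∀ t : ℝ, 0 < t → t < T →
        ‖hdD k (fun l => f (l * t))‖ ≤ D * S ^ k * (k.factorial * m k) * t ^ k := by
  have hA1 := hs.A1
  have hA0 : 0 < A := by linarith
  obtain ⟨κ, hκd⟩ : ∃ κ, κ = 1 / (2 * A) := ⟨_, rfl⟩
  have hκ : 0 < κ := by rw [hκd]; positivity
  have hκA : κ * A = 1 / 2 := by rw [hκd]; field_simp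
  have hκ1 : κ < 1 := by nlinarith
  obtain ⟨c, K, hc, hK, hG⟩ := hd_G hs j hj C0 σ κ hC0 hσ hκ hκ1
  have hL := hs.Lpos
  obtain ⟨S, hS⟩ : ∃ S, S = 4 * A * Real.exp 1 / c := ⟨_, rfl⟩
  have hS0 : 0 < S := by rw [hS]; positivity
  have he1 : 1 ≤ Real.exp 1 := by have := Real.add_one_le_exp 1; linarith
  refine ⟨K * (2 * A + 2 + A), S, by positivity, hS0, ?_⟩
  intro r hr k
  have hR1 : 0 < c / Λ 1 := by have := hL 1; positivity
  refine ⟨min r (c / Λ 1 / 2) / (k + 1), by positivity, ?_⟩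
  intro f a b ha hb t ht htT
  obtain ⟨G, hG⟩ := hG r f a b hr ha hb
  have hk1 : (0 : ℝ) < k + 1 := by positivity
  have hkt : (k : ℝ) * t ≤ min r (c / Λ 1 / 2) := by
    rw [lt_div_iff₀ hk1] at htT
    nlinarith
  have hktr : (k : ℝ) * t ≤ r := hkt.trans (min_le_left _ _)
  have hkt1 : (k : ℝ) * t ≤ c / Λ 1 / 2 := hkt.trans (min_le_right _ _)
  have hm := hs.mpos k
  have hfac : (0 : ℝ) < k.factorial := by exact_mod_cast k.factorial_pos
  rcases Nat.eq_zero_or_pos k with hk0 | hk0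
  · subst hk0
    obtain ⟨-, -, g3, g4⟩ := hG 1 le_rfl
    have h1 := (g3 0 (by simpa using hR1.le)).1
    have h2 := g4 0 le_rfl hr.le hR1.le
    have h3 := hs.Lpow 1 le_rfl 0
    simp only [pow_zero, add_zero, pow_one, Complex.ofReal_zero] at h1 h2 h3
    have h4 : ‖f 0‖ ≤ 2 * K := by
      have : f 0 = (f 0 - G 1 0) + G 1 0 := by ring
      rw [this]
      refine (norm_add_le _ _).trans ?_
      nlinarith
    simp only [hdD, zero_add, Finset.range_one, Finset.sum_singleton, Nat.choose_self, pow_zero,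
      Nat.cast_one, mul_one, Nat.cast_zero, zero_mul, one_mul, Nat.factorial_zero, Nat.sub_self]
    have : 0 < m 0 := hm
    have : 0 < K * (2 + A) * m 0 := by positivity
    nlinarith
  have hkpos : (0 : ℝ) < k := by exact_mod_cast hk0
  have hex : ∃ n, 1 ≤ n ∧ c / Λ n / 2 < k * t := by
    have h1 := hs.Ltend.eventually_gt_atTop (c / (2 * (k * t)))
    obtain ⟨n, hn, hn1⟩ := (h1.and (eventually_ge_atTop 1)).exists
    refine ⟨n, hn1, ?_⟩
    have := hL n
    rw [div_lt_iff₀ (by positivity)] at hn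
    rw [div_div, div_lt_iff₀ (by positivity)]
    linarith
  classical
  obtain ⟨n0, ⟨hn01, hn0⟩, hmin⟩ : ∃ n0, (1 ≤ n0 ∧ c / Λ n0 / 2 < k * t) ∧
      ∀ i, i < n0 → ¬ (1 ≤ i ∧ c / Λ i / 2 < k * t) :=
    ⟨Nat.find hex, Nat.find_spec hex, fun i hi => Nat.find_min hex hi⟩
  obtain ⟨N, rfl⟩ : ∃ N, n0 = N + 1 := ⟨n0 - 1, by omega⟩
  have hN1 : 1 ≤ N := by
    by_contra h
    have : N = 0 := by omega
    subst this
    linarith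
  have hle : ∀ i, 1 ≤ i → i ≤ N → (k : ℝ) * t ≤ c / Λ i / 2 := by
    intro i hi hiN
    by_contra h
    push Not at h
    exact hmin i (by omega) ⟨hi, h⟩
  -- holomorphic pieces
  have hpiece : ∀ i, 1 ≤ i → i ≤ N → ∀ (H : ℂ → ℂ) (B : ℝ),
      DifferentiableOn ℂ H (Metric.ball 0 (2 * (c / Λ i))) → (∀ z, ‖z‖ ≤ c / Λ i → ‖H z‖ ≤ B) →
      ‖hdD k (fun l => H ((l * t : ℝ) : ℂ))‖ ≤ 2 * B * A ^ i * (S ^ k * (k.factorial * m k) * t ^ k) := by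
    intro i hi hiN H B hH hB
    have hLi := hL i
    have hB0 : 0 ≤ B := (norm_nonneg _).trans (hB 0 (by simp; positivity))
    refine (hdD_hol k t (c / Λ i) B ht (by positivity) (hle i hi hiN) H hH hB).trans ?_
    have e : 2 * t / (c / Λ i) = (2 * t / c) * Λ i := by field_simp
    rw [e, mul_pow]
    calc 2 * B * k.factorial * ((2 * t / c) ^ k * Λ i ^ k)
        ≤ 2 * B * k.factorial * ((2 * t / c) ^ k * (A ^ (i + k) * m k)) := by
          gcongr
          exact hs.Lpow i hi k
      _ = 2 * B * A ^ i * ((2 * A / c) ^ k * (k.factorial * m k) * t ^ k) := by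
          rw [pow_add, div_pow, mul_pow, div_pow, mul_pow]; ring
      _ ≤ _ := by
          have h5 : 2 * A / c ≤ S := by
            rw [hS]
            exact div_le_div_of_nonneg_right (by nlinarith) hc.le
          gcongr
  set Y : ℝ := S ^ k * (k.factorial * m k) * t ^ k with hY
  have hY0 : 0 < Y := by positivity
  have hG1 : ‖hdD k (fun l => G 1 ((l * t : ℝ) : ℂ))‖ ≤ 2 * K * A * Y := by
    have := hpiece 1 le_rfl hN1 (G 1) K (hG 1 le_rfl).1 (fun z hz => ((hG 1 le_rfl).2.2.1 z hz).1)
    simpa using this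
  have hGi : ∀ i, 1 ≤ i → i ≤ N → ‖hdD k (fun l => G (i + 1) ((l * t : ℝ) : ℂ)) -
      hdD k (fun l => G i ((l * t : ℝ) : ℂ))‖ ≤ 2 * K * (1 / 2) ^ i * Y := by
    intro i hi hiN
    rw [← hdD_sub]
    obtain ⟨g1, g2, g3, -⟩ := hG i hi
    have := hpiece i hi hiN (fun z => G (i + 1) z - G i z) (K * κ ^ i) (g2.sub g1)
      (fun z hz => (g3 z hz).2)
    refine this.trans (le_of_eq ?_)
    rw [← hκA, mul_pow]
    ring
  have hsumG : ∀ n, 1 ≤ n → n ≤ N → ‖hdD k (fun l => G n ((l * t : ℝ) : ℂ))‖ ≤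
      2 * K * A * Y + 2 * K * Y * (1 - (1 / 2) ^ (n - 1)) := by
    intro n hn
    induction n, hn using Nat.le_induction with
    | base => intro _; simpa using hG1
    | succ n hn ih =>
      intro hnN
      have h1 := ih (by omega)
      have h2 := hGi n hn (by omega)
      have e : hdD k (fun l => G (n + 1) ((l * t : ℝ) : ℂ)) =
        (hdD k (fun l => G (n + 1) ((l * t : ℝ) : ℂ)) - hdD k (fun l => G n ((l * t : ℝ) : ℂ))) +
        hdD k (fun l => G n ((l * t : ℝ) : ℂ)) := by ring
      rw [e]
      refine (norm_add_le _ _).trans ((add_le_add h2 h1).trans (le_of_eq ?_))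
      obtain ⟨i, rfl⟩ : ∃ i, n = i + 1 := ⟨n - 1, by omega⟩
      simp only [Nat.add_sub_cancel]
      ring
  have hlast : ‖hdD k (fun l => f (l * t)) - hdD k (fun l => G N ((l * t : ℝ) : ℂ))‖ ≤ K * A * Y := by
    rw [← hdD_sub]
    have hLN := hL (N + 1)
    have h1 : ‖hdD k (fun l => f (l * t) - G N ((l * t : ℝ) : ℂ))‖ ≤ 2 ^ k * (K * κ ^ N) := by
      apply hdD_norm
      intro l hl
      have hlk : (l : ℝ) * t ≤ k * t := by gcongr
      have := hle N hN1 le_rfl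
      have h0 : 0 ≤ (k : ℝ) * t := by positivity
      exact (hG N hN1).2.2.2 (l * t) (by positivity) (by linarith) (by linarith)
    refine h1.trans ?_
    have h2 : 1 ≤ (2 * (k * t) / c * Λ (N + 1)) ^ k := by
      apply one_le_pow₀
      rw [div_div, div_lt_iff₀ (by positivity)] at hn0
      rw [div_mul_eq_mul_div, le_div_iff₀ hc]
      linarith
    have h3 : (k : ℝ) ^ k ≤ Real.exp 1 ^ k * k.factorial := by
      have := hd_fact_aux k 0 (by omega)
      simpa using this
    calc 2 ^ k * (K * κ ^ N) ≤ 2 ^ k * (K * κ ^ N) * (2 * (k * t) / c * Λ (N + 1)) ^ k := by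
          have : 0 ≤ 2 ^ k * (K * κ ^ N) := by positivity
          nlinarith
      _ = 2 ^ k * (K * κ ^ N) * ((2 * t / c) ^ k * (k : ℝ) ^ k * Λ (N + 1) ^ k) := by
          rw [← mul_pow, ← mul_pow]; congr 2; ring
      _ ≤ 2 ^ k * (K * κ ^ N) * ((2 * t / c) ^ k * (Real.exp 1 ^ k * k.factorial) *
            (A ^ (N + 1 + k) * m k)) := by
          gcongr
          exact hs.Lpow (N + 1) (by omega) k
      _ = K * A * (κ * A) ^ N * Y := by
          rw [hY, hS, pow_add, pow_add, mul_pow κ A, div_pow, div_pow, mul_pow, mul_pow, mul_pow,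
            show (4 : ℝ) = 2 * 2 by norm_num, mul_pow]
          ring
      _ ≤ K * A * 1 * Y := by
          gcongr
          exact pow_le_one₀ (by positivity) (by rw [hκA]; norm_num)
      _ = _ := by ring
  have e : hdD k (fun l => f (l * t)) =
      (hdD k (fun l => f (l * t)) - hdD k (fun l => G N ((l * t : ℝ) : ℂ))) +
      hdD k (fun l => G N ((l * t : ℝ) : ℂ)) := by ring
  rw [e]
  have h1 := hsumG N hN1 le_rfl
  have h2 : (0 : ℝ) ≤ (1 / 2) ^ (N - 1) := by positivity
  have h3 : 0 ≤ 2 * K * Y * (1 / 2) ^ (N - 1) := by positivity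
  calc _ ≤ _ := norm_add_le _ _
    _ ≤ K * A * Y + (2 * K * A * Y + 2 * K * Y * (1 - (1 / 2) ^ (N - 1))) := add_le_add hlast h1
    _ ≤ K * (2 * A + 2 + A) * Y := by linarith
    _ = _ := by rw [hY]; ring

lemma hd_cauchy_deriv {E F : Type} [NormedAddCommGroup E] [NormedSpace ℝ E] [ProperSpace E]
    [NormedAddCommGroup F] [NormedSpace ℝ F] (U : Set E) (hU : IsOpen U) (f : ℕ → E → F)
    (hf : ∀ n, ContDiff ℝ (⊤ : ℕ∞) (f n)) (B : ℝ) (hB : 0 ≤ B)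
    (hb : ∀ n, ∀ x ∈ U, ‖iteratedFDeriv ℝ 2 (f n) x‖ ≤ B)
    (hC : ∀ K ⊆ U, IsCompact K → UniformCauchySeqOn f atTop K) (K : Set E) (hKU : K ⊆ U)
    (hK : IsCompact K) : UniformCauchySeqOn (fun n => fderiv ℝ (f n)) atTop K := by
  obtain ⟨δ, hδ, hδU⟩ := hK.exists_cthickening_subset_open hU hKU
  have hK' : IsCompact (Metric.cthickening δ K) := hK.cthickening
  rw [Metric.uniformCauchySeqOn_iff]
  intro ε hε
  obtain ⟨s, hs⟩ : ∃ s, s = min δ (ε / (8 * (B + 1))) := ⟨_, rfl⟩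
  have hs0 : 0 < s := by rw [hs]; positivity
  have hsδ : s ≤ δ := by rw [hs]; exact min_le_left _ _
  have hsε : s * (8 * (B + 1)) ≤ ε := by
    have : s ≤ ε / (8 * (B + 1)) := by rw [hs]; exact min_le_right _ _
    rwa [le_div_iff₀ (by positivity)] at this
  obtain ⟨N, hN⟩ := (Metric.uniformCauchySeqOn_iff.mp (hC _ hδU hK')) (s * ε / 8) (by positivity)
  refine ⟨N, fun m hm n hn x hx => ?_⟩
  have hball : Metric.closedBall x δ ⊆ Metric.cthickening δ K :=
    Metric.closedBall_subset_cthickening hx δ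
  have hdf : ∀ n, Differentiable ℝ (f n) := fun n => (hf n).differentiable (by simp)
  have hdf2 : ∀ n, Differentiable ℝ (fderiv ℝ (f n)) := fun n =>
    ((hf n).fderiv_right (m := (⊤ : ℕ∞)) (by
      exact_mod_cast le_top)).differentiable (by simp)
  have hlip : ∀ n, ∀ y ∈ Metric.closedBall x δ, ‖fderiv ℝ (f n) y - fderiv ℝ (f n) x‖ ≤ B * ‖y - x‖ := by
    intro n y hy
    refine (convex_closedBall x δ).norm_image_sub_le_of_norm_fderiv_le (𝕜 := ℝ)
      (fun z _ => (hdf2 n) z) (fun z hz => ?_) (Metric.mem_closedBall_self hδ.le) hy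
    have := hb n z (hδU (hball hz))
    rw [← norm_iteratedFDeriv_fderiv, ← norm_iteratedFDeriv_fderiv, norm_iteratedFDeriv_zero] at this
    exact this
  rw [dist_eq_norm]
  set h : E → F := fun y => f m y - f n y with hh
  have hdh : Differentiable ℝ h := (hdf m).sub (hdf n)
  have hfd : ∀ y, fderiv ℝ h y = fderiv ℝ (f m) y - fderiv ℝ (f n) y := fun y =>
    fderiv_fun_sub (hdf m y) (hdf n y)
  rw [← hfd]
  have hhs : ∀ y ∈ Metric.closedBall x δ, ‖h y‖ ≤ s * ε / 8 := by
    intro y hy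
    have := hN m hm n hn y (hball hy)
    rw [dist_eq_norm] at this
    exact this.le
  have hkey : ∀ v : E, ‖v‖ = s → ‖fderiv ℝ h x v‖ ≤ ε / 2 * ‖v‖ := by
    intro v hv
    have hsub : Metric.closedBall x s ⊆ Metric.closedBall x δ := Metric.closedBall_subset_closedBall hsδ
    have hxv : x + v ∈ Metric.closedBall x s := by simp [hv]
    have h1 := (convex_closedBall x s).norm_image_sub_le_of_norm_fderiv_le' (𝕜 := ℝ) (f := h)
      (φ := fderiv ℝ h x) (C := 2 * B * s)
      (fun z _ => hdh z) (fun z hz => by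
        rw [hfd, hfd]
        have e : fderiv ℝ (f m) z - fderiv ℝ (f n) z - (fderiv ℝ (f m) x - fderiv ℝ (f n) x) =
          (fderiv ℝ (f m) z - fderiv ℝ (f m) x) - (fderiv ℝ (f n) z - fderiv ℝ (f n) x) := by abel
        rw [e]
        refine (norm_sub_le _ _).trans ?_
        have h2 := hlip m z (hsub hz)
        have h3 := hlip n z (hsub hz)
        have h4 : ‖z - x‖ ≤ s := by rwa [Metric.mem_closedBall, dist_eq_norm] at hz
        nlinarith) (Metric.mem_closedBall_self hs0.le) hxv
    rw [add_sub_cancel_left] at h1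
    have h2 := hhs _ (hsub hxv)
    have h3 := hhs x (Metric.mem_closedBall_self hδ.le)
    have e : fderiv ℝ h x v = h (x + v) - h x - (h (x + v) - h x - fderiv ℝ h x v) := by abel
    rw [e]
    refine (norm_sub_le _ _).trans ?_
    have h4 := norm_sub_le (h (x + v)) (h x)
    rw [hv] at h1 ⊢
    have h5 : s * (8 * (B + 1)) * s ≤ ε * s := by gcongr
    nlinarith
  have : ‖fderiv ℝ h x‖ ≤ ε / 2 := by
    apply ContinuousLinearMap.opNorm_le_bound _ (by positivity)
    intro v
    rcases eq_or_ne v 0 with rfl | hv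
    · simp
    · have hv0 : 0 < ‖v‖ := norm_pos_iff.mpr hv
      have h1 := hkey ((s / ‖v‖) • v) (by
        rw [norm_smul, Real.norm_of_nonneg (by positivity)]; field_simp)
      rw [map_smul, norm_smul, norm_smul, Real.norm_of_nonneg (by positivity)] at h1
      have h2 : s / ‖v‖ * ‖fderiv ℝ h x v‖ ≤ s / ‖v‖ * (ε / 2 * ‖v‖) := by linarith
      exact le_of_mul_le_mul_left h2 (by positivity)
  linarith

theorem hd_limit {E : Type} [NormedAddCommGroup E] [NormedSpace ℝ E] [ProperSpace E]
    (U : Set E) (hU : IsOpen U) (N : ℕ) : ∀ {F : Type} [NormedAddCommGroup F] [NormedSpace ℝ F]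
    [CompleteSpace F] (f : ℕ → E → F)
    (hf : ∀ n, ContDiff ℝ (⊤ : ℕ∞) (f n)) (B : ℕ → ℝ)
    (hb : ∀ k n, ∀ x ∈ U, ‖iteratedFDeriv ℝ k (f n) x‖ ≤ B k)
    (hC : ∀ K ⊆ U, IsCompact K → UniformCauchySeqOn f atTop K) (g : E → F)
    (hg : ∀ x ∈ U, Tendsto (fun n => f n x) atTop (nhds (g x))),
    ContDiffOn ℝ N g U ∧ ∀ x ∈ U, ‖iteratedFDeriv ℝ N g x‖ ≤ B N := by
  induction N with
  | zero =>
    intro F _ _ _ f hf B hb hC g hg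
    constructor
    · rw [Nat.cast_zero, contDiffOn_zero]
      have : TendstoLocallyUniformlyOn f g atTop U := by
        rw [tendstoLocallyUniformlyOn_iff_forall_isCompact hU]
        intro K hKU hK
        exact (hC K hKU hK).tendstoUniformlyOn_of_tendsto (fun x hx => hg x (hKU hx))
      exact this.continuousOn (Eventually.of_forall fun n => (hf n).continuous.continuousOn).frequently
    · intro x hx
      rw [norm_iteratedFDeriv_zero]
      refine le_of_tendsto (hg x hx).norm (Eventually.of_forall fun n => ?_)
      have := hb 0 n x hx
      rwa [norm_iteratedFDeriv_zero] at this
  | succ N ih =>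
    intro F _ _ _ f hf B hb hC g hg
    rcases U.eq_empty_or_nonempty with hUe | ⟨u, hu⟩
    · subst hUe; simp
    have hB2 : 0 ≤ B 2 := (norm_nonneg _).trans (hb 2 0 u hu)
    have hCd : ∀ K ⊆ U, IsCompact K → UniformCauchySeqOn (fun n => fderiv ℝ (f n)) atTop K :=
      fun K hKU hK => hd_cauchy_deriv U hU f hf (B 2) hB2 (fun n x hx => hb 2 n x hx) hC K hKU hK
    have hlim : ∀ x, ∃ L, x ∈ U → Tendsto (fun n => fderiv ℝ (f n) x) atTop (nhds L) := by
      intro x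
      by_cases hx : x ∈ U
      · have := (hCd {x} (by simpa using hx) isCompact_singleton).cauchySeq (x := x) (by simp)
        obtain ⟨L, hL⟩ := cauchySeq_tendsto_of_complete this
        exact ⟨L, fun _ => hL⟩
      · exact ⟨0, fun h => absurd h hx⟩
    choose g' hg' using hlim
    have hd' : ∀ x ∈ U, HasFDerivAt g (g' x) x := by
      intro x hx
      refine hasFDerivAt_of_tendstoLocallyUniformlyOn (l := atTop) (f := f)
        (f' := fun n => fderiv ℝ (f n)) hU ?_
        (fun n x _ => ((hf n).differentiable (by simp) x).hasFDerivAt) hg hx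
      rw [tendstoLocallyUniformlyOn_iff_forall_isCompact hU]
      intro K hKU hK
      exact (hCd K hKU hK).tendstoUniformlyOn_of_tendsto (fun x hx => hg' x (hKU hx))
    have hfe : ∀ x ∈ U, fderiv ℝ g x = g' x := fun x hx => (hd' x hx).fderiv
    obtain ⟨i1, i2⟩ := ih (fun n => fderiv ℝ (f n))
      (fun n => (hf n).fderiv_right (by exact_mod_cast le_top)) (fun k => B (k + 1))
      (fun k n x hx => by
        rw [norm_iteratedFDeriv_fderiv]; exact hb (k + 1) n x hx) hCd g' hg'
    constructor
    · push_cast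
      rw [contDiffOn_succ_iff_fderiv_of_isOpen hU]
      refine ⟨fun x hx => (hd' x hx).differentiableAt.differentiableWithinAt, ?_, ?_⟩
      · intro h; exact absurd h (by simp)
      · exact i1.congr hfe
    · intro x hx
      rw [← norm_iteratedFDeriv_fderiv]
      have : fderiv ℝ g =ᶠ[nhds x] g' := by
        filter_upwards [hU.mem_nhds hx] with y hy using hfe y hy
      rw [(this.iteratedFDeriv ℝ N).eq_of_nhds]
      exact i2 x hx

lemma hd_adj {E F : Type} [NormedAddCommGroup E] [NormedSpace ℝ E]
    [NormedAddCommGroup F] [NormedSpace ℝ F] (f : E → F) (hf : ContDiff ℝ (⊤ : ℕ∞) f) (n : ℕ) :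
    ∀ (i : Fin n) (x : E) (v : Fin (n + 1) → E),
      iteratedFDeriv ℝ (n + 1) f x (v ∘ Equiv.swap i.castSucc i.succ) =
        iteratedFDeriv ℝ (n + 1) f x v := by
  have hsm : ∀ n : ℕ, ContDiff ℝ (⊤ : ℕ∞) (iteratedFDeriv ℝ n f) := fun n =>
    hf.iteratedFDeriv_right (by exact_mod_cast le_top)
  have hdf : ∀ n : ℕ, Differentiable ℝ (iteratedFDeriv ℝ n f) := fun n =>
    (hsm n).differentiable (by simp)
  have hap : ∀ (n : ℕ) (x a : E) (w : Fin n → E),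
      fderiv ℝ (iteratedFDeriv ℝ n f) x a w = fderiv ℝ (fun y => iteratedFDeriv ℝ n f y w) x a := by
    intro n x a w
    rw [fderiv_continuousMultilinear_apply_const_apply (hdf n x)]
  induction n with
  | zero => intro i; exact i.elim0
  | succ n ih =>
    intro i x v
    refine Fin.cases ?_ (fun i => ?_) i
    · have key : ∀ v : Fin (n + 1 + 1) → E, iteratedFDeriv ℝ (n + 1 + 1) f x v =
          fderiv ℝ (fderiv ℝ (iteratedFDeriv ℝ n f)) x (v 0) (v 1) (Fin.tail (Fin.tail v)) := by
        intro v
        rw [iteratedFDeriv_succ_apply_left, hap]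
        have e : (fun y => iteratedFDeriv ℝ (n + 1) f y (Fin.tail v)) =
            fun y => (fderiv ℝ (iteratedFDeriv ℝ n f) y (v 1)) (Fin.tail (Fin.tail v)) := by
          funext y
          rw [iteratedFDeriv_succ_apply_left]; rfl
        rw [e]
        have hd2 : DifferentiableAt ℝ (fderiv ℝ (iteratedFDeriv ℝ n f)) x :=
          (((hsm n).fderiv_right (m := (⊤ : ℕ∞)) (by exact_mod_cast le_top)).differentiable
            (by simp)) x
        have h2 : DifferentiableAt ℝ (fun y => fderiv ℝ (iteratedFDeriv ℝ n f) y (v 1)) x :=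
          hd2.clm_apply (differentiableAt_const _)
        rw [fderiv_continuousMultilinear_apply_const_apply h2]
        congr 1
        rw [fderiv_clm_apply hd2 (differentiableAt_const _)]
        simp
      rw [key, key]
      have hs : IsSymmSndFDerivAt ℝ (iteratedFDeriv ℝ n f) x :=
        (hsm n).contDiffAt.isSymmSndFDerivAt (by
          rw [minSmoothness_of_isRCLikeNormedField]
          exact WithTop.coe_le_coe.mpr (le_top : (2 : ℕ∞) ≤ ⊤))
      have t : Fin.tail (Fin.tail (v ∘ (Equiv.swap (0 : Fin (n + 1)).castSucc (0 : Fin (n + 1)).succ))) =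
          Fin.tail (Fin.tail v) := by
        funext l
        simp only [Fin.tail, Function.comp]
        rw [Equiv.swap_apply_of_ne_of_ne]
        · simp [Fin.ext_iff]
        · simp [Fin.ext_iff]
      rw [t]
      have := hs (v 1) (v 0)
      simpa using congrArg (fun z => z (Fin.tail (Fin.tail v))) this
    · rw [iteratedFDeriv_succ_apply_left, iteratedFDeriv_succ_apply_left, hap, hap]
      have e0 : (v ∘ Equiv.swap i.succ.castSucc i.succ.succ) 0 = v 0 := by
        simp only [Function.comp]
        rw [Equiv.swap_apply_of_ne_of_ne]
        · simp [Fin.ext_iff]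
        · simp [Fin.ext_iff]
      have et : Fin.tail (v ∘ Equiv.swap i.succ.castSucc i.succ.succ) =
          Fin.tail v ∘ Equiv.swap i.castSucc i.succ := by
        funext l
        simp only [Fin.tail, Function.comp]
        congr 1
        rw [← Fin.succ_castSucc]
        exact ((Fin.succ_injective _).swap_apply _ _ _)
      rw [e0, et]
      congr 2
      funext y
      exact ih i y _

lemma hd_symm {E F : Type} [NormedAddCommGroup E] [NormedSpace ℝ E]
    [NormedAddCommGroup F] [NormedSpace ℝ F] (f : E → F) (hf : ContDiff ℝ (⊤ : ℕ∞) f) (n : ℕ)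
    (s : Equiv.Perm (Fin n)) : ∀ (x : E) (v : Fin n → E),
      iteratedFDeriv ℝ n f x (v ∘ s) = iteratedFDeriv ℝ n f x v := by
  cases n with
  | zero => intro x v; congr 1; funext i; exact i.elim0
  | succ n =>
    have hs : s ∈ Submonoid.closure
        (Set.range fun i : Fin n => Equiv.swap i.castSucc i.succ) := by
      rw [Equiv.Perm.mclosure_swap_castSucc_succ]; trivial
    refine Submonoid.closure_induction (motive := fun (s : Equiv.Perm (Fin (n + 1))) _ => ∀ (x : E) (v : Fin (n + 1) → E),
      iteratedFDeriv ℝ (n + 1) f x (v ∘ s) = iteratedFDeriv ℝ (n + 1) f x v) ?_ ?_ ?_ hs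
    · rintro _ ⟨i, rfl⟩ x v
      exact hd_adj f hf n i x v
    · intro x v; rfl
    · intro a b _ _ ha hb x v
      have : v ∘ ⇑(a * b) = (v ∘ a) ∘ b := rfl
      rw [this, hb, ha]

/-- Glynn polarization. -/
lemma hd_glynn {E : Type} [NormedAddCommGroup E] [NormedSpace ℝ E] {k : ℕ}
    (A : E [×k]→L[ℝ] ℂ) (hA : ∀ (s : Equiv.Perm (Fin k)) v, A (v ∘ s) = A v) (v : Fin k → E) :
    ∑ ε : Fin k → ℤˣ, ((∏ i, ((ε i : ℤ) : ℝ)) • A (fun _ => ∑ i, ((ε i : ℤ) : ℝ) • v i)) =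
      ((2 : ℝ) ^ k * k.factorial) • A v := by
  have h1 : ∀ ε : Fin k → ℤˣ, A (fun _ => ∑ i, ((ε i : ℤ) : ℝ) • v i) =
      ∑ φ : Fin k → Fin k, (∏ i, ((ε (φ i) : ℤ) : ℝ)) • A (fun i => v (φ i)) := by
    intro ε
    rw [A.map_sum (fun _ i => ((ε i : ℤ) : ℝ) • v i)]
    refine Finset.sum_congr rfl fun φ _ => ?_
    rw [A.map_smul_univ]
  simp_rw [h1, Finset.smul_sum]
  rw [Finset.sum_comm]
  simp_rw [smul_smul, ← Finset.sum_smul]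
  have hsq : ∀ u : ℤˣ, ((u : ℤ) : ℝ) * ((u : ℤ) : ℝ) = 1 := by
    intro u
    rcases Int.units_eq_one_or u with h | h <;> simp [h]
  have h2 : ∀ φ : Fin k → Fin k, ¬ Function.Bijective φ →
      ∑ ε : Fin k → ℤˣ, (∏ i, ((ε i : ℤ) : ℝ)) * ∏ i, ((ε (φ i) : ℤ) : ℝ) = 0 := by
    intro φ hφ
    have : ¬ Function.Surjective φ := fun h => hφ ⟨Finite.injective_iff_surjective.mpr h, h⟩
    unfold Function.Surjective at this
    push Not at this
    obtain ⟨i0, hi0⟩ := this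
    have h3 := Fintype.sum_equiv (Equiv.mulRight (Function.update (1 : Fin k → ℤˣ) i0 (-1)))
      (fun ε : Fin k → ℤˣ => -((∏ i, ((ε i : ℤ) : ℝ)) * ∏ i, ((ε (φ i) : ℤ) : ℝ)))
      (fun ε : Fin k → ℤˣ => (∏ i, ((ε i : ℤ) : ℝ)) * ∏ i, ((ε (φ i) : ℤ) : ℝ)) (by
        intro ε
        simp only [Equiv.coe_mulRight, Pi.mul_apply, Units.val_mul, Int.cast_mul,
          Finset.prod_mul_distrib]
        have e1 : ∏ i, (((Function.update (1 : Fin k → ℤˣ) i0 (-1) i : ℤˣ) : ℤ) : ℝ) = -1 := by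
          rw [Finset.prod_eq_single i0]
          · simp
          · intro b _ hb; simp [hb]
          · simp
        have e2 : ∏ i, (((Function.update (1 : Fin k → ℤˣ) i0 (-1) (φ i) : ℤˣ) : ℤ) : ℝ) = 1 := by
          apply Finset.prod_eq_one
          intro i _
          simp [hi0 i]
        rw [e1, e2]; ring)
    rw [Finset.sum_neg_distrib] at h3
    linarith
  have h4 : ∀ s : Equiv.Perm (Fin k),
      ∑ ε : Fin k → ℤˣ, (∏ i, ((ε i : ℤ) : ℝ)) * ∏ i, ((ε (s i) : ℤ) : ℝ) = 2 ^ k := by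
    intro s
    have : ∀ ε : Fin k → ℤˣ, (∏ i, ((ε i : ℤ) : ℝ)) * ∏ i, ((ε (s i) : ℤ) : ℝ) = 1 := by
      intro ε
      rw [Equiv.prod_comp s (fun i => ((ε i : ℤ) : ℝ)), ← Finset.prod_mul_distrib]
      simp [hsq]
    simp [this]
  have h5 : ∑ φ : Fin k → Fin k, (∑ ε : Fin k → ℤˣ,
        (∏ i, ((ε i : ℤ) : ℝ)) * ∏ i, ((ε (φ i) : ℤ) : ℝ)) • A (fun i => v (φ i)) =
      ∑ s : Equiv.Perm (Fin k), ((2 : ℝ) ^ k) • A v := by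
    symm
    refine Finset.sum_of_injOn (fun s : Equiv.Perm (Fin k) => (s : Fin k → Fin k)) ?_ ?_ ?_ ?_
    · intro a _ b _ h; exact Equiv.coe_fn_injective h
    · intro a _; simp
    · intro φ _ hφ
      rw [h2 φ, zero_smul]
      intro hb
      exact hφ ⟨Equiv.ofBijective φ hb, by simp, rfl⟩
    · intro s _
      rw [h4 s]
      congr 1
      exact (hA s v).symm
  rw [h5]
  simp [Fintype.card_perm]
  ring

lemma hd_polar {E : Type} [NormedAddCommGroup E] [NormedSpace ℝ E] {k : ℕ}
    (A : E [×k]→L[ℝ] ℂ) (hA : ∀ (s : Equiv.Perm (Fin k)) v, A (v ∘ s) = A v) (B : ℝ)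
    (hB : ∀ v : E, ‖v‖ ≤ 1 → ‖A (fun _ => v)‖ ≤ B) : ‖A‖ ≤ Real.exp 1 ^ k * B := by
  have hB0 : 0 ≤ B := (norm_nonneg _).trans (hB 0 (by simp))
  have hfa : (k : ℝ) ^ k ≤ Real.exp 1 ^ k * k.factorial := by
    have := hd_fact_aux k 0 (Nat.zero_le _)
    simpa using this
  have hB' : ∀ w : E, ‖A (fun _ => w)‖ ≤ B * ‖w‖ ^ k := by
    intro w
    by_cases hw : w = 0
    · cases k with
      | zero => simpa using hB w (by simp [hw])
      | succ k =>
        have : A (fun _ => w) = 0 := A.map_coord_zero 0 hw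
        rw [this, norm_zero]; positivity
    · have hw' : 0 < ‖w‖ := norm_pos_iff.mpr hw
      have h1 := hB (‖w‖⁻¹ • w) (by rw [norm_smul, norm_inv, norm_norm, inv_mul_cancel₀ hw'.ne'])
      have h2 := A.map_smul_univ (fun _ => ‖w‖⁻¹) (fun _ => w)
      simp only [Finset.prod_const, Finset.card_univ, Fintype.card_fin] at h2
      rw [h2, norm_smul, norm_pow, norm_inv, norm_norm, inv_pow, inv_mul_le_iff₀ (by positivity)] at h1
      linarith
  have hunit : ∀ v : Fin k → E, (∀ i, ‖v i‖ ≤ 1) → ‖A v‖ ≤ Real.exp 1 ^ k * B := by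
    intro v hv
    have hg := congrArg norm (hd_glynn A hA v)
    rw [norm_smul, Real.norm_of_nonneg (by positivity)] at hg
    have hu : ∀ u : ℤˣ, ‖((u : ℤ) : ℝ)‖ = 1 := by
      intro u
      rcases Int.units_eq_one_or u with h | h <;> simp [h]
    have hle : ‖∑ ε : Fin k → ℤˣ,
        ((∏ i, ((ε i : ℤ) : ℝ)) • A (fun _ => ∑ i, ((ε i : ℤ) : ℝ) • v i))‖ ≤
        2 ^ k * (B * (k : ℝ) ^ k) := by
      refine (norm_sum_le _ _).trans ?_
      have : ∀ ε : Fin k → ℤˣ, ‖(∏ i, ((ε i : ℤ) : ℝ)) • A (fun _ => ∑ i, ((ε i : ℤ) : ℝ) • v i)‖ ≤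
          B * (k : ℝ) ^ k := by
        intro ε
        rw [norm_smul, norm_prod]
        simp only [hu, Finset.prod_const_one, one_mul]
        refine (hB' _).trans ?_
        have : ‖∑ i, ((ε i : ℤ) : ℝ) • v i‖ ≤ k := by
          refine (norm_sum_le _ _).trans ?_
          refine (Finset.sum_le_sum (g := fun _ => (1 : ℝ)) fun i _ => ?_).trans ?_
          · rw [norm_smul, hu, one_mul]; exact hv i
          · simp
        gcongr
      refine (Finset.sum_le_sum fun ε _ => this ε).trans ?_
      simp
    rw [hg] at hle
    have h2 : (0 : ℝ) < 2 ^ k := by positivity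
    have h3 : (0 : ℝ) < k.factorial := by positivity
    have h4 : (k.factorial : ℝ) * ‖A v‖ ≤ B * (k : ℝ) ^ k := by
      have : 2 ^ k * ((k.factorial : ℝ) * ‖A v‖) ≤ 2 ^ k * (B * (k : ℝ) ^ k) := by linarith
      exact le_of_mul_le_mul_left this h2
    have h5 : (k.factorial : ℝ) * ‖A v‖ ≤ k.factorial * (Real.exp 1 ^ k * B) := by
      nlinarith
    exact le_of_mul_le_mul_left h5 h3
  refine ContinuousMultilinearMap.opNorm_le_bound (by positivity) fun v => ?_
  by_cases h0 : ∃ i, v i = 0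
  · obtain ⟨i, hi⟩ := h0
    rw [A.map_coord_zero i hi, norm_zero]; positivity
  · push Not at h0
    have hp : ∀ i, 0 < ‖v i‖ := fun i => norm_pos_iff.mpr (h0 i)
    have h1 := hunit (fun i => ‖v i‖⁻¹ • v i) (fun i => by
      rw [norm_smul, norm_inv, norm_norm, inv_mul_cancel₀ (hp i).ne'])
    rw [A.map_smul_univ, norm_smul, norm_prod] at h1
    simp only [norm_inv, norm_norm, Finset.prod_inv_distrib] at h1
    have hpp : 0 < ∏ i, ‖v i‖ := Finset.prod_pos fun i _ => hp i
    rw [inv_mul_le_iff₀ hpp] at h1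
    linarith

lemma hdD_pow (k i : ℕ) (hi : i ≤ k) :
    hdD k (fun l => (l : ℂ) ^ i) = if i = k then (k.factorial : ℂ) else 0 := by
  have h1 : hdD k (fun l => (l : ℂ) ^ i) = (fwdDiff (1 : ℂ))^[k] (fun r : ℂ => r ^ i) 0 := by
    rw [fwdDiff_iter_eq_sum_shift]
    unfold hdD
    apply Finset.sum_congr rfl
    intro l _
    simp
  rw [h1]
  split_ifs with h
  · rw [h, fwdDiff_iter_eq_factorial]; simp
  · rw [fwdDiff_iter_pow_eq_zero_of_lt (by omega)]; rfl

lemma hdD_sum {ι : Type} (s : Finset ι) (k : ℕ) (c : ι → ℂ) (g : ι → ℕ → ℂ) :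
    hdD k (fun l => ∑ i ∈ s, c i * g i l) = ∑ i ∈ s, c i * hdD k (g i) := by
  unfold hdD
  simp_rw [Finset.mul_sum]
  rw [Finset.sum_comm]
  refine Finset.sum_congr rfl fun i _ => Finset.sum_congr rfl fun l _ => by ring

lemma hd_deriv_line {E : Type} [NormedAddCommGroup E] [NormedSpace ℝ E] (g : E → ℂ)
    (hg : ContDiff ℝ (⊤ : ℕ∞) g) (x v : E) (k : ℕ) (s : ℝ) :
    iteratedDeriv k (fun t : ℝ => g (x + t • v)) s =
      iteratedFDeriv ℝ k g (x + s • v) (fun _ => v) := by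
  rw [iteratedDeriv_eq_iteratedFDeriv]
  have h1 : (fun t : ℝ => g (x + t • v)) =
      (fun z => g (x + z)) ∘ (ContinuousLinearMap.toSpanSingleton ℝ v) := by
    funext t; simp
  have h2 : ContDiff ℝ (⊤ : ℕ∞) (fun z => g (x + z)) := hg.comp (by fun_prop)
  rw [h1, ContinuousLinearMap.iteratedFDeriv_comp_right _ h2 _ (by exact_mod_cast le_top)]
  rw [iteratedFDeriv_comp_add_left]
  simp

lemma hd_deriv_of_diff {E : Type} [NormedAddCommGroup E] [NormedSpace ℝ E] (g : E → ℂ)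
    (hg : ContDiff ℝ (⊤ : ℕ∞) g) (x v : E) (k : ℕ) (B T : ℝ) (hT : 0 < T)
    (h : ∀ t : ℝ, 0 < t → t < T → ‖hdD k (fun l => g (x + ((l : ℝ) * t) • v))‖ ≤ B * t ^ k) :
    ‖iteratedFDeriv ℝ k g x (fun _ => v)‖ ≤ B := by
  have hline := hd_deriv_line g hg x v k 0
  rw [zero_smul, add_zero] at hline
  rw [← hline]
  obtain ⟨φ, hφ⟩ : ∃ φ : ℝ → ℂ, φ = fun t : ℝ => g (x + t • v) := ⟨_, rfl⟩
  rw [← hφ]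
  have hφs : ContDiff ℝ (⊤ : ℕ∞) φ := by rw [hφ]; exact hg.comp (by fun_prop)
  have h' : ∀ t : ℝ, 0 < t → t < T → ‖hdD k (fun l => φ ((l : ℝ) * t))‖ ≤ B * t ^ k := by
    rw [hφ]; exact h
  have htay := taylor_isLittleO_univ (x₀ := 0) (n := k) (hφs.of_le (by exact_mod_cast le_top))
  obtain ⟨R, hR⟩ : ∃ R : ℝ → ℂ, R = fun t => φ t - taylorWithinEval φ k univ 0 t := ⟨_, rfl⟩
  rw [← hR] at htay
  have hkey : ∀ t : ℝ, hdD k (fun l => R (l * t)) =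
      hdD k (fun l => φ (l * t)) - (t : ℂ) ^ k * iteratedDeriv k φ 0 := by
    intro t
    rw [hR]
    beta_reduce
    rw [hdD_sub]
    congr 1
    have e : (fun l : ℕ => taylorWithinEval φ k univ 0 ((l : ℝ) * t)) = fun l : ℕ =>
        ∑ i ∈ Finset.range (k + 1), (((i.factorial : ℂ))⁻¹ * (t : ℂ) ^ i * iteratedDeriv i φ 0) *
          (l : ℂ) ^ i := by
      funext l
      rw [taylor_within_apply]
      refine Finset.sum_congr rfl fun i _ => ?_
      rw [iteratedDerivWithin_univ, Complex.real_smul]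
      push_cast
      rw [sub_zero, mul_pow]
      ring
    rw [e, hdD_sum, Finset.sum_range_succ, Finset.sum_eq_zero, hdD_pow k k le_rfl, if_pos rfl]
    · have : (k.factorial : ℂ) ≠ 0 := by exact_mod_cast k.factorial_ne_zero
      field_simp
      ring
    · intro i hi
      rw [Finset.mem_range] at hi
      rw [hdD_pow k i hi.le, if_neg hi.ne, mul_zero]
  refine le_of_forall_pos_le_add fun ε hε => ?_
  have hq : (0 : ℝ) < 2 ^ k * (k + 1 : ℝ) ^ k := by positivity
  have hb := htay.def (c := ε / (2 ^ k * (k + 1 : ℝ) ^ k)) (by positivity)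
  rw [Metric.eventually_nhds_iff] at hb
  obtain ⟨δ, hδ, hb⟩ := hb
  obtain ⟨t, ht0, ht1⟩ : ∃ t : ℝ, 0 < t ∧ t < min T (δ / (k + 1)) :=
    exists_between (by positivity)
  have htT : t < T := ht1.trans_le (min_le_left _ _)
  have htδ : (k + 1 : ℝ) * t < δ := by
    have := ht1.trans_le (min_le_right _ _)
    rw [lt_div_iff₀ (by positivity)] at this
    linarith
  have hRb : ∀ l ≤ k, ‖R ((l : ℝ) * t)‖ ≤ ε / 2 ^ k * t ^ k := by
    intro l hl
    have hl' : (l : ℝ) ≤ k := by exact_mod_cast hl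
    have hlt : (l : ℝ) * t ≤ (k + 1 : ℝ) * t := by
      apply mul_le_mul_of_nonneg_right _ ht0.le; linarith
    have hlt0 : 0 ≤ (l : ℝ) * t := by positivity
    have := hb (y := (l : ℝ) * t) (by
      rw [Real.dist_eq, sub_zero, abs_of_nonneg hlt0]; linarith)
    refine this.trans ?_
    rw [sub_zero, Real.norm_of_nonneg (by positivity)]
    have h2 : ((l : ℝ) * t) ^ k ≤ ((k + 1 : ℝ) * t) ^ k := pow_le_pow_left₀ hlt0 hlt k
    refine (mul_le_mul_of_nonneg_left h2 (by positivity)).trans (le_of_eq ?_)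
    rw [mul_pow]
    field_simp
  have h1 := hdD_norm k _ _ hRb
  rw [hkey t] at h1
  have h2 := h' t ht0 htT
  have h3 : ‖(t : ℂ) ^ k * iteratedDeriv k φ 0‖ ≤ B * t ^ k + 2 ^ k * (ε / 2 ^ k * t ^ k) := by
    have : (t : ℂ) ^ k * iteratedDeriv k φ 0 = hdD k (fun l => φ (l * t)) -
      (hdD k (fun l => φ (l * t)) - (t : ℂ) ^ k * iteratedDeriv k φ 0) := by ring
    rw [this]
    exact (norm_sub_le _ _).trans (add_le_add h2 h1)
  rw [norm_mul, norm_pow, Complex.norm_real, Real.norm_of_nonneg ht0.le] at h3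
  have h4 : t ^ k * ‖iteratedDeriv k φ 0‖ ≤ t ^ k * (B + ε) := by
    refine h3.trans (le_of_eq ?_)
    field_simp
  exact le_of_mul_le_mul_left h4 (by positivity)

lemma hd_norm_of_diff {E : Type} [NormedAddCommGroup E] [NormedSpace ℝ E] (g : E → ℂ)
    (hg : ContDiff ℝ (⊤ : ℕ∞) g) (x : E) (k : ℕ) (B T : ℝ) (hT : 0 < T)
    (h : ∀ v : E, ‖v‖ ≤ 1 → ∀ t : ℝ, 0 < t → t < T →
      ‖hdD k (fun l => g (x + ((l : ℝ) * t) • v))‖ ≤ B * t ^ k) :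
    ‖iteratedFDeriv ℝ k g x‖ ≤ Real.exp 1 ^ k * B :=
  hd_polar _ (fun s v => hd_symm g hg k s x v) B
    (fun v hv => hd_deriv_of_diff g hg x v k B T hT (h v hv))

set_option maxHeartbeats 1000000 in
theorem hd_smooth {E : Type} [NormedAddCommGroup E] [NormedSpace ℝ E] [FiniteDimensional ℝ E]
    [MeasurableSpace E] [BorelSpace E] (f : E → ℂ) (R : ℝ) (hR : 0 < R)
    (hf : ContinuousOn f (Metric.closedBall 0 (2 * R))) (B : ℕ → ℝ)
    (h : ∀ k : ℕ, ∃ T : ℝ, 0 < T ∧ ∀ x ∈ Metric.ball (0 : E) (2 * R), ∀ v : E, ‖v‖ ≤ 1 →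
      ∀ t : ℝ, 0 < t → t < T → ‖hdD k (fun l => f (x + ((l : ℝ) * t) • v))‖ ≤ B k * t ^ k) :
    ContDiffOn ℝ (⊤ : ℕ∞) f (Metric.ball 0 R) ∧
      ∀ k : ℕ, ∀ x ∈ Metric.ball (0 : E) R,
        ‖iteratedFDeriv ℝ k f x‖ ≤ Real.exp 1 ^ k * B k := by
  have : ProperSpace E := FiniteDimensional.proper ℝ E
  obtain ⟨μ, hμ⟩ : ∃ μ : Measure E, μ = Measure.addHaar := ⟨_, rfl⟩
  have : μ.IsAddHaarMeasure := by rw [hμ]; infer_instance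
  obtain ⟨F, hF⟩ : ∃ F : E → ℂ, F = (Metric.closedBall 0 (2 * R)).indicator f := ⟨_, rfl⟩
  have hFf : ∀ x, ‖x‖ ≤ 2 * R → F x = f x := by
    intro x hx
    rw [hF, indicator_of_mem (by simpa using hx)]
  have hcp : IsCompact (Metric.closedBall (0 : E) (2 * R)) := isCompact_closedBall _ _
  have hFm : Measurable F := by
    classical
    rw [hF, ← piecewise_eq_indicator]
    exact hf.measurable_piecewise continuousOn_const measurableSet_closedBall
  have hFi : Integrable F μ := by
    rw [hF, integrable_indicator_iff measurableSet_closedBall]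
    exact hf.integrableOn_compact hcp
  have hFl : LocallyIntegrable F μ := hFi.locallyIntegrable
  obtain ⟨ρ, hρ⟩ : ∃ ρ : ℕ → ℝ, ρ = fun n : ℕ => R / 2 / ((n : ℝ) + 1) := ⟨_, rfl⟩
  have hρ0 : ∀ n, 0 < ρ n := fun n => by rw [hρ]; positivity
  have hρ1 : ∀ n, ρ n ≤ R / 2 := fun n => by
    rw [hρ]
    exact div_le_self (by positivity) (by linarith [(Nat.cast_nonneg n : (0 : ℝ) ≤ n)])
  have hρt : Tendsto ρ atTop (nhds 0) := by
    rw [hρ]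
    exact tendsto_const_nhds.div_atTop
      (tendsto_atTop_add_const_right _ _ tendsto_natCast_atTop_atTop)
  obtain ⟨φ, hφ⟩ : ∃ φ : ℕ → ContDiffBump (0 : E), ∀ n, (φ n).rOut = ρ n :=
    ⟨fun n => ⟨ρ n / 2, ρ n, by have := hρ0 n; positivity, by have := hρ0 n; linarith⟩, fun n => rfl⟩
  obtain ⟨g, hg⟩ : ∃ g : ℕ → E → ℂ, g = fun n =>
    convolution ((φ n).normed μ) F (ContinuousLinearMap.lsmul ℝ ℝ) μ := ⟨_, rfl⟩
  have hgs : ∀ n, ContDiff ℝ (⊤ : ℕ∞) (g n) := by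
    intro n
    rw [hg]
    exact HasCompactSupport.contDiff_convolution_left _ (φ n).hasCompactSupport_normed
      (φ n).contDiff_normed hFl
  have hex : ∀ n, ConvolutionExists ((φ n).normed μ) F (ContinuousLinearMap.lsmul ℝ ℝ) μ :=
    fun n => HasCompactSupport.convolutionExists_left _ (φ n).hasCompactSupport_normed
      (φ n).continuous_normed hFl
  have hdiff : ∀ (k n : ℕ) (x v : E) (t : ℝ),
      hdD k (fun l => g n (x + ((l : ℝ) * t) • v)) =
        convolution ((φ n).normed μ) (fun z => hdD k (fun l => F (z + ((l : ℝ) * t) • v)))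
          (ContinuousLinearMap.lsmul ℝ ℝ) μ x := by
    intro k n x v t
    rw [hg]
    simp only [convolution_def, hdD, ContinuousLinearMap.lsmul_apply]
    simp_rw [Finset.smul_sum]
    rw [integral_finsetSum]
    · refine Finset.sum_congr rfl fun l _ => ?_
      rw [← integral_const_mul]
      congr 1
      funext y
      rw [mul_smul_comm]
      congr 4
      abel
    · intro l _
      have := (hex n (x + ((l : ℝ) * t) • v)).integrable.const_mul
        ((-1 : ℂ) ^ (k - l) * (k.choose l : ℂ))
      refine this.congr (Filter.Eventually.of_forall fun y => ?_)
      simp only [ContinuousLinearMap.lsmul_apply]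
      rw [mul_smul_comm]
      congr 4
      abel
  have hbound : ∀ k n, ∀ x ∈ Metric.ball (0 : E) R,
      ‖iteratedFDeriv ℝ k (g n) x‖ ≤ Real.exp 1 ^ k * B k := by
    intro k n x hx
    obtain ⟨T, hT, hTb⟩ := h k
    refine hd_norm_of_diff (g n) (hgs n) x k (B k) (min T (R / 2 / (k + 1))) (by positivity) ?_
    intro v hv t ht0 ht
    have htT : t < T := ht.trans_le (min_le_left _ _)
    have htR : t * (k + 1) < R / 2 := by
      have := ht.trans_le (min_le_right _ _)
      rwa [lt_div_iff₀ (by positivity)] at this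
    have hx' : ‖x‖ < R := by simpa using hx
    have hB0 : 0 ≤ B k * t ^ k :=
      (norm_nonneg _).trans (hTb 0 (by simp [hR]) v hv t ht0 htT)
    rw [hdiff, ← dist_zero_right]
    refine dist_convolution_le (R := ρ n) hB0 ?_ (φ n).nonneg_normed (φ n).integral_normed ?_ ?_
    · rw [(φ n).support_normed_eq, hφ]
    · apply Measurable.aestronglyMeasurable
      unfold hdD
      refine Finset.measurable_fun_sum _ fun l _ => ?_
      exact (hFm.comp (measurable_id.add_const _)).const_mul _
    · intro z hz
      rw [dist_zero_right]
      have hz' : ‖z‖ < 3 / 2 * R := by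
        have h1 : ‖z - x‖ < ρ n := by rwa [Metric.mem_ball, dist_eq_norm] at hz
        have h2 := norm_add_le (z - x) x
        rw [sub_add_cancel] at h2
        linarith [hρ1 n]
      have e : hdD k (fun l => F (z + ((l : ℝ) * t) • v)) =
          hdD k (fun l => f (z + ((l : ℝ) * t) • v)) := by
        unfold hdD
        refine Finset.sum_congr rfl fun l hl => ?_
        beta_reduce
        rw [hFf]
        refine (norm_add_le _ _).trans ?_
        rw [Finset.mem_range] at hl
        have hl' : (l : ℝ) ≤ k := by exact_mod_cast Nat.lt_succ_iff.mp hl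
        rw [norm_smul, Real.norm_of_nonneg (by positivity)]
        have : (l : ℝ) * t * ‖v‖ ≤ k * t * 1 := by gcongr
        nlinarith
      rw [e]
      exact hTb z (by simp; linarith) v hv t ht0 htT
  have hunif : TendstoUniformlyOn g f atTop (Metric.ball 0 R) := by
    rw [Metric.tendstoUniformlyOn_iff]
    intro ε hε
    have huc := hcp.uniformContinuousOn_of_continuous hf
    rw [Metric.uniformContinuousOn_iff] at huc
    obtain ⟨δ, hδ, huc⟩ := huc (ε / 2) (by positivity)
    filter_upwards [hρt.eventually (gt_mem_nhds hδ)] with n hn x hx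
    have hx' : ‖x‖ < R := by simpa using hx
    have h1 : dist (g n x) (F x) ≤ ε / 2 := by
      rw [hg]
      refine ContDiffBump.dist_normed_convolution_le hFm.aestronglyMeasurable ?_
      intro y hy
      rw [hφ] at hy
      have hy1 : ‖y - x‖ < ρ n := by rwa [Metric.mem_ball, dist_eq_norm] at hy
      have hy' : ‖y‖ ≤ 2 * R := by
        have h2 := norm_add_le (y - x) x
        rw [sub_add_cancel] at h2
        linarith [hρ1 n]
      rw [hFf y hy', hFf x (by linarith)]
      refine (huc y (by simpa using hy') x (by simp; linarith) ?_).le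
      exact (Metric.mem_ball.mp hy).trans hn
    rw [hFf x (by linarith)] at h1
    rw [dist_comm]
    linarith
  have hlim := fun N => hd_limit (Metric.ball (0 : E) R) Metric.isOpen_ball N g hgs
    (fun k => Real.exp 1 ^ k * B k) hbound
    (fun K hK _ => (hunif.mono hK).uniformCauchySeqOn) f (fun x hx => hunif.tendsto_at hx)
  exact ⟨contDiffOn_infty.mpr fun N => (hlim N).1, fun k => (hlim k).2⟩

lemma hd_globalize {E : Type} [NormedAddCommGroup E] [NormedSpace ℝ E] [FiniteDimensional ℝ E]
    (g : E → ℂ) (ρ r : ℝ) (hr : 0 < r) (hrρ : r < ρ)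
    (hg : ContDiffOn ℝ (⊤ : ℕ∞) g (Metric.ball 0 ρ)) :
    ∃ G : E → ℂ, ContDiff ℝ (⊤ : ℕ∞) G ∧ ∀ x ∈ Metric.ball (0 : E) r, G x = g x := by
  obtain ⟨s, hs1, hs2⟩ := exists_between hrρ
  let χ : ContDiffBump (0 : E) := ⟨r, s, hr, hs1⟩
  refine ⟨fun y => χ y • g y, ?_, fun x hx => ?_⟩
  · rw [contDiff_iff_contDiffAt]
    intro y
    by_cases hy : y ∈ Metric.ball (0 : E) ρ
    · exact (χ.contDiff.contDiffAt).smul (hg.contDiffAt (Metric.isOpen_ball.mem_nhds hy))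
    · have hy2 : y ∈ (Metric.closedBall (0 : E) s)ᶜ := by
        simp only [mem_compl_iff, Metric.mem_closedBall, Metric.mem_ball] at hy ⊢
        linarith
      have hev : (fun y => χ y • g y) =ᶠ[nhds y] fun _ => (0 : ℂ) := by
        filter_upwards [Metric.isClosed_closedBall.isOpen_compl.mem_nhds hy2] with z hz
        have hz' : χ z = 0 := χ.zero_of_le_dist (by
          simp only [mem_compl_iff, Metric.mem_closedBall] at hz
          exact (not_le.mp hz).le)
        rw [hz', zero_smul]
      exact contDiffAt_const.congr_of_eventuallyEq hev
  · have : χ x = 1 := χ.one_of_mem_closedBall (Metric.ball_subset_closedBall hx)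
    beta_reduce
    rw [this, one_smul]

lemma hd_tay_line {E : Type} [NormedAddCommGroup E] [NormedSpace ℝ E] (M : ℕ → ℝ)
    (hMp : ∀ k, 0 < M k) (G : E → ℂ) (hG : ContDiff ℝ (⊤ : ℕ∞) G) (C σ ρ r : ℝ) (hC : 0 < C)
    (hσ : 0 < σ) (hr : 0 < r)
    (hb : ∀ x ∈ Metric.ball (0 : E) ρ, ∀ k : ℕ, ‖iteratedFDeriv ℝ k G x‖ ≤ C * σ ^ k * M k)
    (x v : E) (hx : ‖x‖ + r < ρ) (hv : ‖v‖ ≤ 1) :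
    ∃ a : ℕ → ℂ, ∀ φ : ℝ → ℂ, (∀ t, 0 ≤ t → t ≤ r → φ t = G (x + t • v)) →
      HdTay (mseq M) C (2 * σ) φ a r := by
  obtain ⟨ψ, hψ⟩ : ∃ ψ : ℝ → ℂ, ψ = fun t : ℝ => G (x + t • v) := ⟨_, rfl⟩
  have hψs : ContDiff ℝ (⊤ : ℕ∞) ψ := by rw [hψ]; exact hG.comp (by fun_prop)
  have hM' : ∀ k, M k = k.factorial * mseq M k := by
    intro k
    unfold mseq
    have : (k.factorial : ℝ) ≠ 0 := by exact_mod_cast k.factorial_ne_zero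
    field_simp
  have hmp : ∀ k, 0 < mseq M k := by
    intro k
    have := hMp k
    unfold mseq
    positivity
  have hd : ∀ k : ℕ, ∀ t, 0 ≤ t → t ≤ r → ‖iteratedDeriv k ψ t‖ ≤ C * σ ^ k * M k := by
    intro k t h0 h1
    rw [hψ, hd_deriv_line G hG]
    refine (ContinuousMultilinearMap.le_opNorm _ _).trans ?_
    have hin : x + t • v ∈ Metric.ball (0 : E) ρ := by
      rw [mem_ball_zero_iff]
      refine (norm_add_le _ _).trans_lt ?_
      rw [norm_smul, Real.norm_of_nonneg h0]
      have : t * ‖v‖ ≤ r * 1 := by gcongr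
      linarith
    have h2 : ∏ _i : Fin k, ‖v‖ ≤ 1 := by
      rw [Finset.prod_const]; exact pow_le_one₀ (norm_nonneg _) hv
    calc _ ≤ ‖iteratedFDeriv ℝ k G (x + t • v)‖ * 1 :=
          mul_le_mul_of_nonneg_left h2 (norm_nonneg _)
      _ ≤ _ := by rw [mul_one]; exact hb _ hin k
  refine ⟨fun k => ((k.factorial : ℂ))⁻¹ * iteratedDeriv k ψ 0, fun φ hφ => ⟨fun k => ?_, ?_⟩⟩
  · have h1 := hd k 0 le_rfl hr.le
    rw [hM'] at h1
    have hf : (0 : ℝ) < k.factorial := by positivity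
    rw [norm_mul, norm_inv, Complex.norm_natCast, inv_mul_le_iff₀ hf]
    refine h1.trans ?_
    have h2 : σ ^ k ≤ (2 * σ) ^ k := pow_le_pow_left₀ hσ.le (by linarith) k
    have h3 := hmp k
    calc C * σ ^ k * (k.factorial * mseq M k) ≤ C * (2 * σ) ^ k * (k.factorial * mseq M k) := by
          gcongr
      _ = _ := by ring
  · intro n t h0 h1
    have h2 := taylor_mean_remainder_bound (f := ψ) (a := 0) (b := r) (n := n) (x := t)
      (C := C * σ ^ (n + 1) * M (n + 1)) hr.le (hψs.contDiffOn.of_le (by exact_mod_cast le_top))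
      ⟨h0, h1⟩ (fun y hy => by
        rw [iteratedDerivWithin_eq_iteratedDeriv (uniqueDiffOn_Icc hr)
          (hψs.contDiffAt.of_le (by exact_mod_cast le_top)) hy]
        exact hd (n + 1) y hy.1 hy.2)
    rw [taylor_within_apply] at h2
    have e : ∑ k ∈ Finset.range (n + 1), ((k.factorial : ℂ))⁻¹ * iteratedDeriv k ψ 0 * (t : ℂ) ^ k =
        ∑ k ∈ Finset.range (n + 1), ((k.factorial : ℝ)⁻¹ * (t - 0) ^ k) •
          iteratedDerivWithin k ψ (Icc 0 r) 0 := by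
      refine Finset.sum_congr rfl fun k _ => ?_
      rw [iteratedDerivWithin_eq_iteratedDeriv (uniqueDiffOn_Icc hr)
          (hψs.contDiffAt.of_le (by exact_mod_cast le_top)) ⟨le_rfl, hr.le⟩, Complex.real_smul]
      push_cast
      rw [sub_zero]; ring
    have e2 : φ t = ψ t := by rw [hψ, hφ t h0 h1]
    beta_reduce
    rw [e, e2]
    refine h2.trans ?_
    rw [hM', sub_zero, Nat.factorial_succ]
    have hf : (0 : ℝ) < n.factorial := by positivity
    have h3 := hmp (n + 1)
    have h4 : ((n + 1 : ℕ) : ℝ) ≤ 2 ^ (n + 1) := by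
      exact_mod_cast (Nat.lt_two_pow_self).le
    have e3 : C * σ ^ (n + 1) * (((n + 1) * n.factorial : ℕ) * mseq M (n + 1)) * t ^ (n + 1) /
        n.factorial = ((n + 1 : ℕ) : ℝ) * (C * σ ^ (n + 1) * mseq M (n + 1) * t ^ (n + 1)) := by
      push_cast
      field_simp
    rw [e3, mul_pow]
    calc _ ≤ (2 : ℝ) ^ (n + 1) * (C * σ ^ (n + 1) * mseq M (n + 1) * t ^ (n + 1)) := by
          gcongr
      _ = _ := by ring

lemma hd_cont {E : Type} [NormedAddCommGroup E] (f : E → ℂ) (j : ℕ) (hj : 1 ≤ j) (W : Set E)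
    (hW : IsOpen W) (h1 : ContinuousOn (f ^ j) W) (h2 : ContinuousOn (f ^ (j + 1)) W) :
    ContinuousOn f W := by
  intro y hy
  apply ContinuousAt.continuousWithinAt
  have c1 : ContinuousAt (f ^ j) y := h1.continuousAt (hW.mem_nhds hy)
  have c2 : ContinuousAt (f ^ (j + 1)) y := h2.continuousAt (hW.mem_nhds hy)
  by_cases h0 : f y = 0
  · rw [Metric.continuousAt_iff'] at c1 ⊢
    intro ε hε
    filter_upwards [c1 (ε ^ j) (by positivity)] with z hz
    rw [h0, dist_zero_right]
    simp only [Pi.pow_apply, h0, zero_pow (by omega : j ≠ 0), dist_zero_right, norm_pow] at hz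
    exact lt_of_pow_lt_pow_left₀ j hε.le hz
  · have hne : (f ^ j) y ≠ 0 := by simpa using fun h => absurd h h0
    have hev : f =ᶠ[nhds y] fun z => (f ^ (j + 1)) z / (f ^ j) z := by
      filter_upwards [c1.eventually_ne hne] with z hz
      rw [eq_div_iff hz]
      simp only [Pi.pow_apply]
      ring
    exact (c2.div c1 hne).congr hev.symm


/-- the ring of germs at `0 ∈ ℝ^d` of `E^{M}`-functions has property (D)
for a non-quasianalytic regular weight sequence `M` of moderate growth. -/
theorem statement1 (d : ℕ) (hd : 1 ≤ d) (M : ℕ → ℝ)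
    (hM : IsWeightSeq M) (hreg : RegularWS M) (hnq : NonQuasianalytic M)
    (hmg : ModerateGrowth M)
    (f : EuclideanSpace ℝ (Fin d) → ℂ) (j : ℕ) (hj : 1 ≤ j)
    (h1 : ∃ U : Set (EuclideanSpace ℝ (Fin d)), IsOpen U ∧ 0 ∈ U ∧ RoumieuOn M (f ^ j) U)
    (h2 : ∃ U : Set (EuclideanSpace ℝ (Fin d)), IsOpen U ∧ 0 ∈ U ∧
      RoumieuOn M (f ^ (j + 1)) U) :
    ∃ U : Set (EuclideanSpace ℝ (Fin d)), IsOpen U ∧ 0 ∈ U ∧ RoumieuOn M f U := by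
  obtain ⟨U1, hU1, h01, hs1, hb1⟩ := h1
  obtain ⟨U2, hU2, h02, hs2, hb2⟩ := h2
  obtain ⟨ρ, hρ, hρU⟩ := Metric.nhds_basis_closedBall.mem_iff.mp
    ((hU1.inter hU2).mem_nhds ⟨h01, h02⟩)
  have hbU1 : Metric.closedBall (0 : EuclideanSpace ℝ (Fin d)) ρ ⊆ U1 := fun x hx => (hρU hx).1
  have hbU2 : Metric.closedBall (0 : EuclideanSpace ℝ (Fin d)) ρ ⊆ U2 := fun x hx => (hρU hx).2
  have hsub : Metric.ball (0 : EuclideanSpace ℝ (Fin d)) ρ ⊆ Metric.closedBall 0 ρ :=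
    Metric.ball_subset_closedBall
  have hcl : closure (Metric.ball (0 : EuclideanSpace ℝ (Fin d)) ρ) ⊆ Metric.closedBall 0 ρ :=
    Metric.closure_ball_subset_closedBall
  have hcc : IsCompact (closure (Metric.ball (0 : EuclideanSpace ℝ (Fin d)) ρ)) :=
    (isCompact_closedBall _ _).of_isClosed_subset isClosed_closure hcl
  obtain ⟨C1, σ1, hC1, hσ1, hb1⟩ := hb1 _ Metric.isOpen_ball hcc (hcl.trans hbU1)
  obtain ⟨C2, σ2, hC2, hσ2, hb2⟩ := hb2 _ Metric.isOpen_ball hcc (hcl.trans hbU2)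
  have hMp : ∀ k, 0 < M k := hM.2.1
  obtain ⟨C0, hC0d⟩ : ∃ C0, C0 = max 1 (max C1 C2) := ⟨_, rfl⟩
  obtain ⟨σ0, hsgd⟩ : ∃ σ0, σ0 = max σ1 σ2 := ⟨_, rfl⟩
  have hC01 : 1 ≤ C0 := by rw [hC0d]; exact le_max_left _ _
  have hC0a : C1 ≤ C0 := by rw [hC0d]; exact (le_max_left _ _).trans (le_max_right _ _)
  have hC0b : C2 ≤ C0 := by rw [hC0d]; exact (le_max_right _ _).trans (le_max_right _ _)
  have hsga : σ1 ≤ σ0 := by rw [hsgd]; exact le_max_left _ _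
  have hsgb : σ2 ≤ σ0 := by rw [hsgd]; exact le_max_right _ _
  have hσ0 : 0 < σ0 := by linarith
  have hC0 : 0 < C0 := by linarith
  have key : ∀ (g : EuclideanSpace ℝ (Fin d) → ℂ) (U : Set (EuclideanSpace ℝ (Fin d)))
      (C σ : ℝ), IsOpen U → Metric.closedBall 0 ρ ⊆ U → ContDiffOn ℝ (⊤ : ℕ∞) g U →
      0 < C → 0 < σ → C ≤ C0 → σ ≤ σ0 →
      (∀ x ∈ Metric.ball (0 : EuclideanSpace ℝ (Fin d)) ρ, ∀ k : ℕ,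
        ‖iteratedFDerivWithin ℝ k g U x‖ ≤ C * σ ^ k * M k) →
      ∀ x v : EuclideanSpace ℝ (Fin d), ‖x‖ < ρ / 4 → ‖v‖ ≤ 1 →
        ∃ a : ℕ → ℂ, HdTay (mseq M) C0 (2 * σ0) (fun t => g (x + t • v)) a (ρ / 4) := by
    intro g U C σ hU hUs hg hC hσ hCC hσσ hb x v hx hv
    obtain ⟨G, hG, hGg⟩ := hd_globalize g ρ (ρ / 2) (by linarith) (by linarith)
      (hg.mono (hsub.trans hUs))
    have hGb : ∀ x ∈ Metric.ball (0 : EuclideanSpace ℝ (Fin d)) (ρ / 2), ∀ k : ℕ,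
        ‖iteratedFDeriv ℝ k G x‖ ≤ C0 * σ0 ^ k * M k := by
      intro x hx k
      have hxρ : x ∈ Metric.ball (0 : EuclideanSpace ℝ (Fin d)) ρ :=
        Metric.ball_subset_ball (by linarith) hx
      have hev : G =ᶠ[nhds x] g := by
        filter_upwards [Metric.isOpen_ball.mem_nhds hx] with y hy using hGg y hy
      have h3 := (hev.iteratedFDeriv ℝ k).eq_of_nhds
      rw [h3, ← iteratedFDerivWithin_of_isOpen k hU (hUs (hsub hxρ))]
      refine (hb x hxρ k).trans ?_
      have := hMp k
      gcongr
    obtain ⟨a, ha⟩ := hd_tay_line M hMp G hG C0 σ0 (ρ / 2) (ρ / 4) hC0 hσ0 (by linarith) hGb x v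
      (by linarith) hv
    refine ⟨a, ha _ fun t ht0 ht1 => ?_⟩
    refine (hGg _ ?_).symm
    rw [mem_ball_zero_iff]
    refine (norm_add_le _ _).trans_lt ?_
    rw [norm_smul, Real.norm_of_nonneg ht0]
    have : t * ‖v‖ ≤ ρ / 4 * 1 := by gcongr
    linarith
  obtain ⟨Λ, Cs, A, hs⟩ := hd_seq_facts M hM hreg hmg
  obtain ⟨D, S, hD, hS, hfd⟩ := hd_fd hs j hj C0 (2 * σ0) hC01 (by linarith)
  have hcont : ContinuousOn f (Metric.ball 0 ρ) :=
    hd_cont f j hj _ Metric.isOpen_ball ((hs1.continuousOn).mono (hsub.trans hbU1))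
      ((hs2.continuousOn).mono (hsub.trans hbU2))
  have hfin := hd_smooth f (ρ / 8) (by linarith)
    (hcont.mono (Metric.closedBall_subset_ball (by linarith)))
    (fun k => D * S ^ k * (k.factorial * mseq M k)) (by
      intro k
      obtain ⟨T, hT, hTb⟩ := hfd (ρ / 4) (by linarith) k
      refine ⟨T, hT, fun x hx v hv t ht0 htT => ?_⟩
      have hx' : ‖x‖ < ρ / 4 := by
        rw [mem_ball_zero_iff] at hx; linarith
      obtain ⟨a, ha⟩ := key (f ^ j) U1 C1 σ1 hU1 hbU1 hs1 hC1 hσ1 hC0a hsga hb1 x v hx' hv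
      obtain ⟨b, hb⟩ := key (f ^ (j + 1)) U2 C2 σ2 hU2 hbU2 hs2 hC2 hσ2 hC0b hsgb hb2 x v hx' hv
      exact hTb (fun t => f (x + t • v)) a b ha hb t ht0 htT)
  refine ⟨Metric.ball 0 (ρ / 8), Metric.isOpen_ball, by simp [hρ], hfin.1, ?_⟩
  intro V _ _ hVU
  refine ⟨D, Real.exp 1 * S, hD, by positivity, fun x hx k => ?_⟩
  have hxU := hVU (subset_closure hx)
  rw [iteratedFDerivWithin_of_isOpen k Metric.isOpen_ball hxU]
  refine (hfin.2 k x hxU).trans (le_of_eq ?_)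
  have hk : (k.factorial : ℝ) * mseq M k = M k := by
    unfold mseq
    have : (k.factorial : ℝ) ≠ 0 := by exact_mod_cast k.factorial_ne_zero
    field_simp
  rw [hk, mul_pow]
  ring
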